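/- If a web Γ = (D, A, B) is not linkable, then there exists an A–B-separating set S of vertices such that: (i) there is a family of pairwise vertex-disjoint finite paths in D, each starting in A, ending in S, and meeting A ∪ S only at its two endpoints, in which every vertex of S is the terminal vertex of exactly one path (i.e., S is linkable into A in the reversed web); and (ii) there is no family of pairwise vertex-disjoint finite paths in D, each starting in A, ending in S, and meeting A ∪ S only at its two endpoints, in which every vertex of A is the initial vertex of some path (i.e., A is not linkable into S in Γ). -/

import Mathlib

/-!
The proof works with systems `Sys`, i.e. webs without the conditions on the edges at `A`
and `B` and with a variable ground set `U`. A wave is encoded by a *waveform* `Wf X f`: an injective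
map `f` from the non-source vertices in or next to `X` into `X`, sending each vertex to itself or to
a predecessor, no orbit of which is infinite outside `A`. A system is *hindered* (`Hind`) if some
waveform misses a vertex of its set `X`. Waveforms can be united with priorities (`Wf.prio`), so
there is a largest set `maxX` carrying one.

For a web take `S` to consist of the vertices of `A` and of the outer boundary of `maxX` which are
not in `maxX` (`Web.sep`). The set `S` separates, and following the waveform back to `A` links `S`
into `A` (`Web.sep_linked`). The quotient by `maxX`, in which `S` is the set of sources, is
unhindered (`quo_unh`). So if every unhindered system is linked, a linkage of `A` into `S` could be
prolonged to a linkage of the web (`Web.linkable_of_sep`), which is excluded.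

The main part is therefore `Sys.linked`: every unhindered system is linked. This goes by induction
on the cardinality of the ground set.

* *Countable systems.* By `safe_path`, every source of an unhindered system starts a path to `B`
  whose removal leaves the system unhindered. If there were none, a maximal set of additional
  sources which can be reached from the given one would give rise to a hindrance. Safe paths are
  chosen one after the other.
* *Regular uncountable cardinals.* A ladder exhausts the ground set by a continuous increasing
  chain of smaller sets closed under the relevant waveforms (`exists_ladder`). If the indices with
  hindered complement were stationary, suitable hindrances at these indices, switched along
  alternating walks, could be put together to a hindrance of the whole system (`exists_unh`). The
  remaining indices form a `Tower`. Each of its layers is enriched by virtual edges, standing for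
  alternating walks outside, and by targets at the vertices that have an escape to a later layer;
  the enriched layer is unhindered (`lay_unh`), hence linked by induction. Every virtual edge and
  every escape in use is allotted a later layer of its own (`Alloc`), where the former is realised
  by switching the waveform and the latter is continued by a safe path (`exists_layer`). Every
  resulting path reaches `B` (`assemble`).
* *Singular cardinals.* Initial segments of a tower for the successor of `μ` show that every set of
  `μ` vertices lies in a set of `μ` vertices that is linked and has unhindered complement
  (`exists_linked_part`). The ground set is covered by few such pieces; closing the pieces off under
  the linkings of one another in `ω` rounds makes them compatible, and every vertex then follows
  the first piece containing it (`linked_pieces`).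
-/

namespace ErdosMenger

variable {V : Type*}

/-- A finite path in a digraph with edge relation `E`: a nonempty list of
distinct vertices, each consecutive pair of which is a directed edge. -/
def IsFinPath (E : V → V → Prop) (p : List V) : Prop :=
  p ≠ [] ∧ p.Nodup ∧ p.Chain' E

/-- An `X`–`Y` path: a finite path starting in `X` and ending in `Y`. -/
def IsXYPath (E : V → V → Prop) (X Y : Set V) (p : List V) : Prop :=
  IsFinPath E p ∧ (∃ x ∈ X, p.head? = some x) ∧ (∃ y ∈ Y, p.getLast? = some y)

/-- `S` is `X`–`Y`-separating: every `X`–`Y` path contains a vertex of `S`. -/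
def Separates (E : V → V → Prop) (X Y S : Set V) : Prop :=
  ∀ p : List V, IsXYPath E X Y p → ∃ s ∈ S, s ∈ p


/-- A path in a digraph: either finite (a list of vertices) or infinite
(a sequence of vertices). -/
inductive GPath (V : Type*) where
  | fin : List V → GPath V
  | inf : (ℕ → V) → GPath V

namespace GPath

variable {V : Type*}

/-- The predicate that a `GPath` really is a path of the digraph with edge
relation `E`: finite paths are nonempty lists of distinct vertices whose
consecutive pairs are edges; infinite paths are injective sequences whose
consecutive pairs are edges. -/
def IsPath (E : V → V → Prop) : GPath V → Prop
  | .fin l => l ≠ [] ∧ l.Nodup ∧ l.Chain' E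
  | .inf f => Function.Injective f ∧ ∀ n, E (f n) (f (n + 1))

/-- The vertex set of a path. -/
def verts : GPath V → Set V
  | .fin l => {v | v ∈ l}
  | .inf f => Set.range f

/-- The initial vertex of a path. -/
def initv : GPath V → Option V
  | .fin l => l.head?
  | .inf f => some (f 0)

/-- The terminal vertex of a (finite) path. -/
def terv : GPath V → Option V
  | .fin l => l.getLast?
  | .inf _ => none

/-- The edge set of a path. -/
def edges : GPath V → Set (V × V)
  | .fin l => {e | e ∈ l.zip l.tail}
  | .inf f => {e | ∃ n, e = (f n, f (n + 1))}

end GPath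

variable {V : Type*}

/-- `in[W]`: the set of initial vertices of the paths of `W`. -/
def warpIn (W : Set (GPath V)) : Set V := {v | ∃ P ∈ W, P.initv = some v}

/-- `ter[W]`: the set of terminal vertices of the finite paths of `W`. -/
def warpTer (W : Set (GPath V)) : Set V := {v | ∃ P ∈ W, P.terv = some v}

/-- `V[W]`: the set of vertices appearing on paths of `W`. -/
def warpVerts (W : Set (GPath V)) : Set V := {v | ∃ P ∈ W, v ∈ P.verts}

/-- `E[W]`: the set of edges appearing on paths of `W`. -/
def warpEdges (W : Set (GPath V)) : Set (V × V) := {e | ∃ P ∈ W, e ∈ P.edges}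

/-- A web `Γ = (D, A, B)`: a digraph together with vertex sets `A` and `B`,
such that no edge enters `A` and no edge leaves `B`. -/
structure Web (V : Type*) where
  Adj : V → V → Prop
  A : Set V
  B : Set V
  not_into_A : ∀ u v, Adj u v → v ∉ A
  not_from_B : ∀ u v, Adj u v → u ∉ B

namespace Web

variable (Γ : Web V)

/-- A warp: a set of pairwise vertex-disjoint paths of the web. -/
def IsWarp (W : Set (GPath V)) : Prop :=
  (∀ P ∈ W, P.IsPath Γ.Adj) ∧
    ∀ P ∈ W, ∀ Q ∈ W, P ≠ Q → ∀ v, v ∈ P.verts → v ∉ Q.verts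

/-- A wave: an `A`-starting warp `W` such that `ter[W]` is `A`–`B`-separating. -/
def IsWave (W : Set (GPath V)) : Prop :=
  Γ.IsWarp W ∧ warpIn W ⊆ Γ.A ∧ Separates Γ.Adj Γ.A Γ.B (warpTer W)

/-- A hindrance: a wave with `in[W] ≠ A`. -/
def IsHindrance (W : Set (GPath V)) : Prop :=
  Γ.IsWave W ∧ warpIn W ≠ Γ.A

/-- A web is hindered if it contains a hindrance. -/
def Hindered : Prop := ∃ W, Γ.IsHindrance W

/-- An `A`–`B`-warp: a set of pairwise disjoint finite `A`–`B` paths, each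
meeting `A ∪ B` only at its endpoints. -/
def IsABWarp (𝒲 : Set (List V)) : Prop :=
  (∀ p ∈ 𝒲, IsXYPath Γ.Adj Γ.A Γ.B p) ∧
    (∀ p ∈ 𝒲, ∀ v ∈ p, v ∈ Γ.A ∪ Γ.B → p.head? = some v ∨ p.getLast? = some v) ∧
    ∀ p ∈ 𝒲, ∀ q ∈ 𝒲, p ≠ q → ∀ v, v ∈ p → v ∉ q

/-- A linkage of `Γ`: an `A`–`B`-warp whose set of initial vertices is all of `A`. -/
def IsLinkage (𝒲 : Set (List V)) : Prop :=
  Γ.IsABWarp 𝒲 ∧ {v | ∃ p ∈ 𝒲, p.head? = some v} = Γ.A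

/-- A web is linkable if it has a linkage. -/
def Linkable : Prop := ∃ 𝒲, Γ.IsLinkage 𝒲

/-- The web `Γ − X` obtained by deleting the vertices of `X`. -/
def delete (X : Set V) : Web V where
  Adj u v := Γ.Adj u v ∧ u ∉ X ∧ v ∉ X
  A := Γ.A \ X
  B := Γ.B \ X
  not_into_A := fun u v h hv => Γ.not_into_A u v h.1 hv.1
  not_from_B := fun u v h hu => Γ.not_from_B u v h.1 hu.1

end Web


/-- An `A`–`S`-warp in `Γ`: a set of pairwise vertex-disjoint finite paths,
each starting in `A`, ending in `S`, and meeting `A ∪ S` only at its two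
endpoints. -/
def IsASWarp (Γ : Web V) (S : Set V) (𝒲 : Set (List V)) : Prop :=
  (∀ p ∈ 𝒲, IsXYPath Γ.Adj Γ.A S p) ∧
    (∀ p ∈ 𝒲, ∀ v ∈ p, v ∈ Γ.A ∪ S → p.head? = some v ∨ p.getLast? = some v) ∧
    ∀ p ∈ 𝒲, ∀ q ∈ 𝒲, p ≠ q → ∀ v, v ∈ p → v ∉ q

universe u

open Cardinal

/-! ### Systems, waveforms and hindrances -/

/-- An unconstrained version of a web: edges `E`, ground set `U`, sources `A`, targets `B`.
Edges into `A`, edges out of `B` and edges leaving `U` may be present; they are ignored by all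
the notions below. -/
structure Sys (V : Type u) where
  E : V → V → Prop
  U : Set V
  A : Set V
  B : Set V

/-- The orbit of `u` under `f` is infinite and avoids `A`. -/
def Bad {V : Type u} (f : V → V) (A : Set V) (u : V) : Prop :=
  (∀ n, f^[n] u ∉ A) ∧ Function.Injective (fun n => f^[n] u)

theorem exists_least {ι : Type*} [LinearOrder ι] [WellFoundedLT ι] {P : ι → Prop} (h : ∃ i, P i) :
    ∃ i, P i ∧ ∀ j < i, ¬ P j := by
  obtain ⟨i, hi⟩ := h
  induction i using WellFoundedLT.induction with
  | ind i ih =>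
    by_cases hc : ∃ j < i, P j
    · obtain ⟨j, hj, hP⟩ := hc
      exact ih j hj hP
    · exact ⟨i, hi, fun j hj hP => hc ⟨j, hj, hP⟩⟩

section BadLemmas
variable {V : Type u} {f g : V → V} {A A' : Set V} {u : V}

theorem Bad.tail (h : Bad f A u) (k : ℕ) : Bad f A (f^[k] u) := by
  refine ⟨fun n => ?_, fun m n hmn => ?_⟩
  · rw [← Function.iterate_add_apply]; exact h.1 _
  · simp only [← Function.iterate_add_apply] at hmn
    have := h.2 hmn
    omega

theorem iterate_congr_along (hfg : ∀ n, g (f^[n] u) = f (f^[n] u)) (n : ℕ) :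
    g^[n] u = f^[n] u := by
  induction n with
  | zero => rfl
  | succ n ih => rw [Function.iterate_succ_apply', Function.iterate_succ_apply', ih, hfg]

theorem Bad.congr_along (h : Bad f A u) (hfg : ∀ n, g (f^[n] u) = f (f^[n] u)) : Bad g A u := by
  refine ⟨fun n => ?_, fun m n hmn => ?_⟩
  · rw [iterate_congr_along hfg]; exact h.1 n
  · simp only [iterate_congr_along hfg] at hmn
    exact h.2 hmn

theorem Bad.congr_tail (h : Bad f A u) (k : ℕ) (hfg : ∀ n, k ≤ n → g (f^[n] u) = f (f^[n] u)) :
    Bad g A (f^[k] u) := by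
  refine (h.tail k).congr_along fun n => ?_
  rw [← Function.iterate_add_apply]
  exact hfg _ (by omega)

theorem Bad.sets (h : Bad f A u) (hA : ∀ n, f^[n] u ∉ A') : Bad f A' u := ⟨hA, h.2⟩

theorem Bad.eq_of_iterate_eq (h : Bad f A u) {m n : ℕ} (e : f^[m] u = f^[n] u) : m = n := h.2 e

theorem Bad.step (h : Bad f A u) : Bad f A (f u) := h.tail 1

theorem Bad.notMem (h : Bad f A u) : u ∉ A := h.1 0

theorem Bad.ne_self (h : Bad f A u) : f u ≠ u := fun e => by
  have := h.2 (a₁ := 1) (a₂ := 0) e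
  omega

/-- The orbit of a bad vertex visits each given vertex at most once, so a change of the function at
one vertex only affects a finite initial part. -/
theorem Bad.of_update (c x : V) [DecidableEq V] (h : Bad (Function.update f c x) A u) :
    ∃ k, Bad f A ((Function.update f c x)^[k] u) := by
  by_cases hc : ∃ k, (Function.update f c x)^[k] u = c
  · obtain ⟨k, hk⟩ := hc
    refine ⟨k + 1, h.congr_tail (k + 1) fun n hn => ?_⟩
    rw [Function.update_of_ne]
    intro e
    have := h.2 (e.trans hk.symm)
    omega
  · push Not at hc
    refine ⟨0, h.congr_tail 0 fun n hn => ?_⟩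
    rw [Function.update_of_ne (hc n)]

end BadLemmas

namespace Sys
variable {V : Type u}

/-- Non-source vertices of `U` which lie in `X` or have an in-neighbour in `X`. -/
def nb (S : Sys V) (X : Set V) : Set V :=
  {w | w ∈ S.U ∧ w ∉ S.A ∧ (w ∈ X ∨ ∃ x ∈ X, S.E x w)}

/-- A waveform on `X`: an injective map `f` from the non-source vertices in and next to `X` into
`X`, each vertex being sent to itself or to an in-neighbour, such that no backward orbit is
infinite without meeting `A`. Following `f` backwards from `nb X \ X` yields disjoint paths
from `A`, i.e. a wave; cycles of `f` inside `X` are harmless. -/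
structure Wf (S : Sys V) (X : Set V) (f : V → V) : Prop where
  subU : X ⊆ S.U
  notB : ∀ x ∈ X, x ∉ S.B
  maps : ∀ w ∈ S.nb X, f w ∈ X
  edge : ∀ w ∈ S.nb X, f w = w ∨ S.E (f w) w
  inj : Set.InjOn f (S.nb X)
  fin : ∀ w ∈ S.nb X, ¬ Bad f S.A w

/-- `S` is hindered: some waveform misses a vertex `l` of its set. -/
def Hind (S : Sys V) : Prop := ∃ X f l, S.Wf X f ∧ l ∈ X ∧ ∀ w ∈ S.nb X, f w ≠ l

/-- Deletion of the vertices of `D`. -/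
def del (S : Sys V) (D : Set V) : Sys V := { S with U := S.U \ D }

/-- The vertices of `F` become additional sources. -/
def src (S : Sys V) (F : Set V) : Sys V := { S with A := S.A ∪ F }

/-- The quotient by a waveform on `X`: the vertices of `X` are deleted and the remaining vertices
of `nb X` become sources. -/
def quo (S : Sys V) (X : Set V) : Sys V := { S with U := S.U \ X, A := S.A ∪ S.nb X }

section nbLemmas
variable {S : Sys V} {X Y : Set V} {w x : V}

theorem mem_nb : w ∈ S.nb X ↔ w ∈ S.U ∧ w ∉ S.A ∧ (w ∈ X ∨ ∃ x ∈ X, S.E x w) := Iff.rfl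

theorem nb_mono (h : X ⊆ Y) : S.nb X ⊆ S.nb Y := by
  rintro w ⟨h1, h2, h3⟩
  exact ⟨h1, h2, h3.imp (fun h' => h h') fun ⟨x, hx, e⟩ => ⟨x, h hx, e⟩⟩

theorem mem_nb_of (hU : w ∈ S.U) (hA : w ∉ S.A) (hx : x ∈ X) (h : x = w ∨ S.E x w) :
    w ∈ S.nb X :=
  ⟨hU, hA, h.imp (fun e : x = w => e ▸ hx) fun e => ⟨x, hx, e⟩⟩

theorem mem_nb_iff_singleton : w ∈ S.nb X ↔ ∃ x ∈ X, w ∈ S.nb {x} := by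
  constructor
  · rintro ⟨h1, h2, h3 | ⟨x, hx, e⟩⟩
    · exact ⟨w, h3, h1, h2, Or.inl rfl⟩
    · exact ⟨x, hx, h1, h2, Or.inr ⟨x, rfl, e⟩⟩
  · rintro ⟨x, hx, h⟩
    exact nb_mono (by simpa using hx) h

theorem mem_nb_singleton : w ∈ S.nb {x} ↔ w ∈ S.U ∧ w ∉ S.A ∧ (x = w ∨ S.E x w) := by
  simp only [nb, Set.mem_ofPred_eq, Set.mem_singleton_iff, exists_eq_left, eq_comm (a := w)]

theorem mem_nb_iUnion {ι : Sort*} {X : ι → Set V} : w ∈ S.nb (⋃ i, X i) ↔ ∃ i, w ∈ S.nb (X i) := by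
  rw [mem_nb_iff_singleton]
  constructor
  · rintro ⟨x, hx, h⟩
    obtain ⟨i, hi⟩ := Set.mem_iUnion.1 hx
    exact ⟨i, mem_nb_iff_singleton.2 ⟨x, hi, h⟩⟩
  · rintro ⟨i, h⟩
    obtain ⟨x, hx, h⟩ := mem_nb_iff_singleton.1 h
    exact ⟨x, Set.mem_iUnion.2 ⟨i, hx⟩, h⟩

theorem mem_nb_union : w ∈ S.nb (X ∪ Y) ↔ w ∈ S.nb X ∨ w ∈ S.nb Y := by
  simp only [mem_nb_iff_singleton (X := X ∪ Y), mem_nb_iff_singleton (X := X),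
    mem_nb_iff_singleton (X := Y), Set.mem_union, or_and_right, exists_or]

theorem nb_empty : S.nb ∅ = ∅ := by ext w; simp [nb]

theorem mem_nb_self (hU : w ∈ S.U) (hA : w ∉ S.A) (hx : w ∈ X) : w ∈ S.nb X := ⟨hU, hA, Or.inl hx⟩

end nbLemmas

section WfLemmas
variable {S : Sys V} {X Y : Set V} {f g : V → V} {w x l m : V}

theorem Wf.mem_nb_of_eq (h : S.Wf X f) (hw : w ∈ S.nb X) (hY : f w ∈ Y) : w ∈ S.nb Y :=
  mem_nb_of hw.1 hw.2.1 hY (h.edge w hw)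

theorem Wf.nb_of_mem (h : S.Wf X f) (hx : x ∈ X) (hA : x ∉ S.A) : x ∈ S.nb X :=
  ⟨h.subU hx, hA, Or.inl hx⟩

theorem Wf.step_nb (h : S.Wf X f) (hw : w ∈ S.nb X) (hA : f w ∉ S.A) : f w ∈ S.nb X :=
  h.nb_of_mem (h.maps w hw) hA

theorem Wf.iterate_nb (h : S.Wf X f) (hw : w ∈ S.nb X) (hA : ∀ n, f^[n] w ∉ S.A) (n : ℕ) :
    f^[n] w ∈ S.nb X := by
  induction n with
  | zero => exact hw
  | succ n ih =>
    have := hA (n + 1)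
    rw [Function.iterate_succ_apply'] at this ⊢
    exact h.step_nb ih this

/-- Only the values of the map on `nb X` matter. -/
theorem Wf.congr (h : S.Wf X f) (hg : ∀ w ∈ S.nb X, g w = f w) : S.Wf X g where
  subU := h.subU
  notB := h.notB
  maps w hw := hg w hw ▸ h.maps w hw
  edge w hw := (hg w hw).symm ▸ h.edge w hw
  inj w hw w' hw' e := h.inj hw hw' (by rw [← hg w hw, ← hg w' hw', e])
  fin w hw hb := by
    have key : ∀ n, g^[n] w ∈ S.nb X := by
      intro n
      induction n with
      | zero => exact hw
      | succ n ih =>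
        have := hb.1 (n + 1)
        rw [Function.iterate_succ_apply'] at this ⊢
        rw [hg _ ih] at this ⊢
        exact h.step_nb ih this
    exact h.fin w hw (hb.congr_along fun n => (hg _ (key n)).symm)

theorem Hind.of (h : S.Wf X f) (hl : l ∈ X) (hm : ∀ w ∈ S.nb X, f w ≠ l) : S.Hind :=
  ⟨X, f, l, h, hl, hm⟩

theorem Wf.onto (h : S.Wf X f) (hS : ¬ S.Hind) (hl : l ∈ X) : ∃ w ∈ S.nb X, f w = l := by
  by_contra hc
  push Not at hc
  exact hS ⟨X, f, l, h, hl, hc⟩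

/-- Union of a well-ordered family of waveforms, where each vertex uses the first waveform
available. The orbit index never increases, hence is eventually constant. -/
theorem Wf.prio {ι : Type*} [LinearOrder ι] [WellFoundedLT ι] {X : ι → Set V} {f : ι → V → V}
    (h : ∀ i, S.Wf (X i) (f i)) {φ : V → V}
    (hφ : ∀ i, ∀ w ∈ S.nb (X i), (∀ j < i, w ∉ S.nb (X j)) → φ w = f i w) :
    S.Wf (⋃ i, X i) φ := by
  have least : ∀ w ∈ S.nb (⋃ i, X i), ∃ i, w ∈ S.nb (X i) ∧ (∀ j < i, w ∉ S.nb (X j)) ∧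
      φ w = f i w := by
    intro w hw
    rw [mem_nb_iUnion] at hw
    obtain ⟨i, hi, hlt⟩ := exists_least hw
    exact ⟨i, hi, hlt, hφ i w hi hlt⟩
  refine ⟨?_, ?_, ?_, ?_, ?_, ?_⟩
  · exact Set.iUnion_subset fun i => (h i).subU
  · intro x hx
    obtain ⟨i, hi⟩ := Set.mem_iUnion.1 hx
    exact (h i).notB x hi
  · intro w hw
    obtain ⟨i, hi, -, e⟩ := least w hw
    exact e ▸ Set.mem_iUnion.2 ⟨i, (h i).maps w hi⟩
  · intro w hw
    obtain ⟨i, hi, -, e⟩ := least w hw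
    exact e ▸ (h i).edge w hi
  · intro w hw w' hw' e
    obtain ⟨i, hi, hil, ei⟩ := least w hw
    obtain ⟨i', hi', hil', ei'⟩ := least w' hw'
    have e' : f i w = f i' w' := by rw [← ei, ← ei', e]
    have h1 : w' ∈ S.nb (X i) := (h i').mem_nb_of_eq hi' (e' ▸ (h i).maps w hi)
    have h2 : w ∈ S.nb (X i') := (h i).mem_nb_of_eq hi (e'.symm ▸ (h i').maps w' hi')
    have : i = i' := le_antisymm (not_lt.1 fun hlt => hil _ hlt h2) (not_lt.1 fun hlt => hil' _ hlt h1)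
    subst this
    exact (h i).inj hi hi' e'
  · intro w hw hb
    have mem : ∀ n, φ^[n] w ∈ S.nb (⋃ i, X i) := by
      intro n
      induction n with
      | zero => exact hw
      | succ n ih =>
        have hA := hb.1 (n + 1)
        rw [Function.iterate_succ_apply'] at hA ⊢
        obtain ⟨i, hi, -, e⟩ := least _ ih
        rw [e] at hA ⊢
        exact mem_nb_iUnion.2 ⟨i, (h i).step_nb hi hA⟩
    choose I hI1 hI2 hI3 using fun n => least _ (mem n)
    obtain ⟨_, ⟨k, rfl⟩, hk⟩ := exists_least (P := fun i => ∃ k, I k = i) ⟨_, 0, rfl⟩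
    have hmin : ∀ n, I k ≤ I n := fun n => not_lt.1 fun hlt => hk _ hlt ⟨n, rfl⟩
    have hle : ∀ n, I (n + 1) ≤ I n := by
      intro n
      refine not_lt.1 fun hlt => hI2 (n + 1) _ hlt ?_
      have hA := hb.1 (n + 1)
      rw [Function.iterate_succ_apply'] at hA ⊢
      rw [hI3] at hA ⊢
      exact (h _).step_nb (hI1 n) hA
    have hconst : ∀ n, k ≤ n → I n = I k := by
      intro n hn
      refine le_antisymm ?_ (hmin n)
      exact antitone_nat_of_succ_le hle hn
    refine (h (I k)).fin _ (hI1 k) (hb.congr_tail k fun n hn => ?_)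
    rw [hI3 n, hconst n hn]

open Classical in
theorem Wf.prio2 (hf : S.Wf X f) (hg : S.Wf Y g) :
    S.Wf (X ∪ Y) (fun w => if w ∈ S.nb X then f w else g w) := by
  have := Wf.prio (S := S) (X := fun b : Bool => if b then Y else X)
    (f := fun b => if b then g else f) (by rintro (_ | _) <;> simpa)
    (φ := fun w => if w ∈ S.nb X then f w else g w) (by
      rintro (_ | _) w hw hj
      · simp at hw ⊢; simp [hw]
      · have := hj false (by decide)
        simp at this
        simp [this])
  convert this using 1
  ext v
  simp

theorem Wf.empty (S : Sys V) : S.Wf ∅ id := by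
  refine ⟨by simp, by simp, ?_, ?_, ?_, ?_⟩ <;> simp [nb_empty]

/-- Restriction of a waveform to a smaller set closed under the map. -/
theorem Wf.restrict (h : S.Wf X f) (hY : Y ⊆ X) (hm : ∀ w ∈ S.nb Y, f w ∈ Y) : S.Wf Y f where
  subU := hY.trans h.subU
  notB x hx := h.notB x (hY hx)
  maps := hm
  edge w hw := h.edge w (nb_mono hY hw)
  inj := h.inj.mono (nb_mono hY)
  fin w hw := h.fin w (nb_mono hY hw)

end WfLemmas

/-- The largest set carrying a waveform. -/
def maxX (S : Sys V) : Set V := ⋃ p : {p : Set V × (V → V) // S.Wf p.1 p.2}, p.1.1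

theorem Wf.subset_maxX {S : Sys V} {X : Set V} {f : V → V} (h : S.Wf X f) : X ⊆ S.maxX :=
  fun _ hx => Set.mem_iUnion.2 ⟨⟨(X, f), h⟩, hx⟩

/-- Well-order all waveforms and let each vertex use the first one that applies to it. -/
theorem exists_maxF (S : Sys V) : ∃ f, S.Wf S.maxX f := by
  classical
  obtain ⟨lo, wf⟩ := exists_wellFoundedLT {p : Set V × (V → V) // S.Wf p.1 p.2}
  let φ : V → V := fun w =>
    if h : ∃ p : {p : Set V × (V → V) // S.Wf p.1 p.2}, w ∈ S.nb p.1.1 then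
      (exists_least h).choose.1.2 w else w
  refine ⟨φ, Wf.prio (f := fun p => p.1.2) (fun p => p.2) fun i w hw hj => ?_⟩
  have h : ∃ p : {p : Set V × (V → V) // S.Wf p.1 p.2}, w ∈ S.nb p.1.1 := ⟨i, hw⟩
  have h' := (exists_least h).choose_spec
  have : (exists_least h).choose = i :=
    le_antisymm (not_lt.1 fun hlt => h'.2 _ hlt hw) (not_lt.1 fun hlt => hj _ hlt h'.1)
  simp only [φ, dif_pos h, this]

/-- A waveform on `maxX`. -/
noncomputable def maxF (S : Sys V) : V → V := (exists_maxF S).choose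

theorem maxF_wf (S : Sys V) : S.Wf S.maxX S.maxF := (exists_maxF S).choose_spec

/-! ### Alternating walks and augmentation -/

/-- Vertices reachable from `l` by alternating walks: from `x` step to a vertex `w ∈ K` in or next
to `{x}` and then back to `f w`. -/
inductive Rch (S : Sys V) (f : V → V) (K : Set V) (l : V) : V → Prop
  | base : Rch S f K l l
  | step {x w : V} : Rch S f K l x → w ∈ S.nb {x} → w ∈ K → Rch S f K l (f w)

/-- The waveforms obtained from `f` by switching along alternating walks; `Alt m f'` says that `f'`
misses `m` in place of `l`. -/
inductive Alt [DecidableEq V] (S : Sys V) (f : V → V) (K : Set V) (l : V) : V → (V → V) → Prop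
  | base : Alt S f K l l f
  | step {x w : V} {f1 : V → V} : Alt S f K l x f1 → w ∈ S.nb {x} → w ∈ K → f1 w = f w →
      Alt S f K l (f w) (Function.update f1 w x)

section Aug
variable {S : Sys V} {X K : Set V} {f g : V → V} {w x l m : V}

theorem Rch.mem (h : S.Wf X f) (hl : l ∈ X) (hm : Rch S f K l m) : m ∈ X := by
  induction hm with
  | base => exact hl
  | step hx hw hK ih => exact h.maps _ (nb_mono (by simpa using ih) hw)

theorem Rch.mono {K' : Set V} (hK : K ⊆ K') (hm : Rch S f K l m) : Rch S f K' l m := by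
  induction hm with
  | base => exact .base
  | step hx hw hK1 ih => exact .step ih hw (hK hK1)

/-- If `x` is missed, redirecting a vertex next to `x` to `x` again gives a waveform. -/
theorem Wf.update [DecidableEq V] (h : S.Wf X f) (hx : x ∈ X) (hmiss : ∀ w ∈ S.nb X, f w ≠ x)
    (hw : w ∈ S.nb {x}) : S.Wf X (Function.update f w x) where
  subU := h.subU
  notB := h.notB
  maps v hv := by
    by_cases e : v = w
    · subst e; simpa using hx
    · rw [Function.update_of_ne e]; exact h.maps v hv
  edge v hv := by
    by_cases e : v = w
    · subst e
      rw [Function.update_self]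
      exact (mem_nb_singleton.1 hw).2.2
    · rw [Function.update_of_ne e]; exact h.edge v hv
  inj v hv v' hv' e := by
    by_cases e1 : v = w <;> by_cases e2 : v' = w
    · rw [e1, e2]
    · subst e1
      rw [Function.update_self, Function.update_of_ne e2] at e
      exact absurd e.symm (hmiss _ hv')
    · subst e2
      rw [Function.update_self, Function.update_of_ne e1] at e
      exact absurd e (hmiss _ hv)
    · rw [Function.update_of_ne e1, Function.update_of_ne e2] at e
      exact h.inj hv hv' e
  fin v hv hb := by
    obtain ⟨k, hk⟩ := hb.of_update
    have key : ∀ n, (Function.update f w x)^[n] v ∈ S.nb X := by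
      intro n
      induction n with
      | zero => exact hv
      | succ n ih =>
        have hA := hb.1 (n + 1)
        rw [Function.iterate_succ_apply'] at hA ⊢
        refine h.nb_of_mem ?_ hA
        by_cases e : (Function.update f w x)^[n] v = w
        · rw [e, Function.update_self]; exact hx
        · rw [Function.update_of_ne e]; exact h.maps _ ih
    exact h.fin _ (key k) hk

/-- The invariants of switching: the switched map is a waveform on the same set, differs from the
original one at finitely many vertices of `K`, and misses the end of the walk instead of `l`. -/
theorem Alt.props [DecidableEq V] (h : S.Wf X f) (hl : l ∈ X) (hmiss : ∀ w ∈ S.nb X, f w ≠ l)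
    (ha : Alt S f K l m g) :
    Rch S f K l m ∧ S.Wf X g ∧ (∀ w ∈ S.nb X, g w ≠ m) ∧ {w | g w ≠ f w}.Finite ∧
    (∀ w, g w ≠ f w → w ∈ K ∧ w ∈ S.nb X ∧ Rch S f K l (f w) ∧ Rch S f K l (g w) ∧
      ∃ g', Alt S f K l (f w) g') ∧
    (∀ y, (y = l ∨ ∃ w ∈ S.nb X, f w = y) → y ≠ m → ∃ w ∈ S.nb X, g w = y) := by
  induction ha with
  | base => exact ⟨.base, h, hmiss, by simp, by simp, fun y hy hne => hy.resolve_left hne⟩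
  | @step x w f1 hx hw hK hfw ih =>
    obtain ⟨ih1, ih2, ih3, ih4, ih5, ih6⟩ := ih
    have hxX : x ∈ X := ih1.mem h hl
    have hwX : w ∈ S.nb X := nb_mono (by simpa using hxX) hw
    refine ⟨.step ih1 hw hK, ih2.update hxX ih3 hw, ?_, ?_, ?_, ?_⟩
    · intro v hv
      by_cases e : v = w
      · subst e; rw [Function.update_self, ← hfw]; exact (ih3 _ hv).symm
      · rw [Function.update_of_ne e, ← hfw]
        exact fun e' => e (ih2.inj hv hwX e')
    · refine (ih4.insert w).subset fun v hv => ?_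
      by_cases e : v = w
      · exact Or.inl e
      · right
        simpa [Function.update_of_ne e] using hv
    · intro v hv
      by_cases e : v = w
      · subst e
        rw [Function.update_self]
        exact ⟨hK, hwX, .step ih1 hw hK, ih1, _, .step hx hw hK hfw⟩
      · rw [Function.update_of_ne e] at hv ⊢
        exact ih5 v hv
    · intro y hy hne
      by_cases e : y = x
      · exact ⟨w, hwX, by rw [e, Function.update_self]⟩
      · obtain ⟨v, hv, hv'⟩ := ih6 y hy e
        refine ⟨v, hv, ?_⟩
        rw [Function.update_of_ne, hv']
        rintro rfl
        exact hne (hv' ▸ hfw)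

/-- Augmentation: a waveform missing `l` can be changed at finitely many vertices of `K` so as to
miss any prescribed vertex reachable from `l` by an alternating walk through `K`. -/
theorem Wf.aug (h : S.Wf X f) (hl : l ∈ X) (hmiss : ∀ w ∈ S.nb X, f w ≠ l) (hm : Rch S f K l m) :
    ∃ g, S.Wf X g ∧ (∀ w ∈ S.nb X, g w ≠ m) ∧ {w | g w ≠ f w}.Finite ∧
    (∀ w, g w ≠ f w → w ∈ K ∧ w ∈ S.nb X ∧ Rch S f K l (f w) ∧ Rch S f K l (g w)) ∧
    (∀ y, (y = l ∨ ∃ w ∈ S.nb X, f w = y) → y ≠ m → ∃ w ∈ S.nb X, g w = y) := by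
  classical
  have : ∃ g, Alt S f K l m g := by
    induction hm with
    | base => exact ⟨f, .base⟩
    | @step x w hx hw hK ih =>
      obtain ⟨f1, hf1⟩ := ih
      by_cases e : f1 w = f w
      · exact ⟨_, .step hf1 hw hK e⟩
      · exact ((hf1.props h hl hmiss).2.2.2.2.1 w e).2.2.2.2
  obtain ⟨g, hg⟩ := this
  obtain ⟨-, h2, h3, h4, h5, h6⟩ := hg.props h hl hmiss
  exact ⟨g, h2, h3, h4, fun w hw => ⟨(h5 w hw).1, (h5 w hw).2.1, (h5 w hw).2.2.1, (h5 w hw).2.2.2.1⟩,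
    h6⟩

/-- The vertices reachable from `l` by alternating walks carry the same waveform. -/
theorem Wf.rch (h : S.Wf X f) (hl : l ∈ X) : S.Wf {m | Rch S f Set.univ l m} f := by
  refine h.restrict (fun m hm => Rch.mem h hl hm) fun w hw => ?_
  obtain ⟨x, hx, hw⟩ := mem_nb_iff_singleton.1 hw
  exact Rch.step hx hw trivial

end Aug

/-! ### Changing the system -/

section Change
variable {S : Sys V} {X : Set V} {f : V → V} {w l : V}

/-- Making a vertex outside `nb maxX` a source does not create a hindrance. -/
theorem unh_src_of_notMem (hS : ¬ S.Hind) {w0 : V}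
    (h0 : w0 ∉ S.nb S.maxX) : ¬ (S.src {w0}).Hind := by
  classical
  rintro ⟨X, f, l, hX, hl, hmiss⟩
  have nbsrc : ∀ {Y : Set V} {w}, w ∈ (S.src {w0}).nb Y ↔ w ∈ S.nb Y ∧ w ≠ w0 := by
    intro Y w
    simp [nb, src]
    tauto
  have stay : ∀ {Y g}, (S.src {w0}).Wf Y g → ∀ w, w ∈ Y → w ∉ S.A → w ∈ S.nb Y :=
    fun h w hw hA => ⟨h.subU hw, hA, Or.inl hw⟩
  by_cases hR : ∃ m, Rch (S.src {w0}) f Set.univ l m ∧ w0 ∈ S.nb {m}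
  · obtain ⟨m, hm, hw0⟩ := hR
    obtain ⟨g, hg, hgm, -, -, -⟩ := hX.aug hl hmiss hm
    have hmX : m ∈ X := hm.mem hX hl
    refine h0 (nb_mono (Wf.subset_maxX (f := Function.update g w0 m) ?_)
      (nb_mono (by simpa using hmX) hw0 : w0 ∈ S.nb X))
    have maps : ∀ w ∈ S.nb X, Function.update g w0 m w ∈ X := fun v hv => by
      by_cases e : v = w0
      · subst e; simpa using hmX
      · rw [Function.update_of_ne e]; exact hg.maps v (nbsrc.2 ⟨hv, e⟩)
    refine ⟨hX.subU, hX.notB, maps, ?_, ?_, ?_⟩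
    · intro v hv
      by_cases e : v = w0
      · subst e; rw [Function.update_self]; exact (mem_nb_singleton.1 hw0).2.2
      · rw [Function.update_of_ne e]; exact hg.edge v (nbsrc.2 ⟨hv, e⟩)
    · intro v hv v' hv' e
      by_cases e1 : v = w0 <;> by_cases e2 : v' = w0
      · rw [e1, e2]
      · rw [e1, Function.update_self, Function.update_of_ne e2] at e
        exact absurd e.symm (hgm _ (nbsrc.2 ⟨hv', e2⟩))
      · rw [e2, Function.update_self, Function.update_of_ne e1] at e
        exact absurd e (hgm _ (nbsrc.2 ⟨hv, e1⟩))
      · rw [Function.update_of_ne e1, Function.update_of_ne e2] at e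
        exact hg.inj (nbsrc.2 ⟨hv, e1⟩) (nbsrc.2 ⟨hv', e2⟩) e
    · intro v hv hb
      have key : ∀ n, (Function.update g w0 m)^[n] v ∈ S.nb X := by
        intro n
        induction n with
        | zero => exact hv
        | succ n ih =>
          have hA := hb.1 (n + 1)
          rw [Function.iterate_succ_apply'] at hA ⊢
          exact stay hX _ (maps _ ih) hA
      -- after its only visit to `w0` the orbit follows `g` and avoids `w0`
      obtain ⟨k, hk⟩ : ∃ k, ∀ n, k ≤ n → (Function.update g w0 m)^[n] v ≠ w0 := by
        by_cases hc : ∃ k, (Function.update g w0 m)^[k] v = w0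
        · obtain ⟨k, hk⟩ := hc
          refine ⟨k + 1, fun n hn e => ?_⟩
          have := hb.2 (e.trans hk.symm)
          omega
        · push Not at hc
          exact ⟨0, fun n _ => hc n⟩
      have hb' : Bad g S.A ((Function.update g w0 m)^[k] v) := hb.congr_tail k fun n hn => by
        rw [Function.update_of_ne (hk n hn)]
      have hit : ∀ n, g^[n] ((Function.update g w0 m)^[k] v) = (Function.update g w0 m)^[n + k] v := by
        intro n
        induction n with
        | zero => simp
        | succ n ih =>
          rw [Function.iterate_succ_apply', ih, Nat.add_right_comm, Function.iterate_succ_apply',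
            Function.update_of_ne (hk _ (by omega))]
      refine hg.fin _ (nbsrc.2 ⟨key k, hk k le_rfl⟩) (hb'.sets fun n => ?_)
      rintro (h | h)
      · exact hb'.1 n h
      · rw [hit] at h
        exact hk _ (by omega) h
  · push Not at hR
    set R := {m | Rch (S.src {w0}) f Set.univ l m}
    have hWR := hX.rch hl
    have hnb : ∀ w, w ∈ S.nb R → w ∈ (S.src {w0}).nb R := by
      intro w hw
      refine nbsrc.2 ⟨hw, ?_⟩
      rintro rfl
      obtain ⟨m, hm, h⟩ := mem_nb_iff_singleton.1 hw
      exact hR m hm h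
    refine hS (Hind.of (X := R) (f := f) (l := l) ⟨hWR.subU, hWR.notB, fun w hw => hWR.maps w (hnb w hw),
      fun w hw => hWR.edge w (hnb w hw), fun w hw w' hw' => hWR.inj (hnb w hw) (hnb w' hw'), ?_⟩ .base
      fun w hw => ?_)
    · intro w hw hb
      have key : ∀ n, f^[n] w ∈ S.nb R := by
        intro n
        induction n with
        | zero => exact hw
        | succ n ih =>
          have hA := hb.1 (n + 1)
          rw [Function.iterate_succ_apply'] at hA ⊢
          exact stay hWR _ (hWR.maps _ (hnb _ ih)) hA
      refine hWR.fin w (hnb w hw) (hb.sets fun n => ?_)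
      exact (hnb _ (key n)).2.1
    · refine hmiss w (nb_mono ?_ (hnb w hw))
      exact fun m hm => Rch.mem hX hl hm

/-- The quotient by the largest waveform carries no nonempty waveform. -/
theorem quo_wf_empty {Y : Set V} {g : V → V} (hY : (S.quo S.maxX).Wf Y g) : Y = ∅ := by
  classical
  set X := S.maxX with hXdef
  have hX := S.maxF_wf
  set f := S.maxF
  have hdisj : ∀ y ∈ Y, y ∉ X := fun y hy => (hY.subU hy).2
  have hsub : Y ⊆ X := by
    refine Set.subset_union_right.trans
      (Wf.subset_maxX (X := X ∪ Y) (f := fun w => if w ∈ S.nb X then f w else g w) ?_)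
    have hnb : ∀ w ∈ S.nb (X ∪ Y), w ∉ S.nb X → w ∈ (S.quo X).nb Y := by
      intro w hw hwX
      have := (mem_nb_union.1 hw).resolve_left hwX
      refine ⟨⟨this.1, fun h => hwX ⟨hw.1, hw.2.1, Or.inl h⟩⟩, ?_, this.2.2⟩
      rintro (h | h)
      · exact hw.2.1 h
      · exact hwX h
    refine ⟨Set.union_subset hX.subU fun y hy => (hY.subU hy).1, ?_, ?_, ?_, ?_, ?_⟩
    · rintro x (hx | hx)
      · exact hX.notB x hx
      · exact hY.notB x hx
    · intro w hw
      split_ifs with h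
      · exact Or.inl (hX.maps w h)
      · exact Or.inr (hY.maps w (hnb w hw h))
    · intro w hw
      split_ifs with h
      · exact hX.edge w h
      · exact hY.edge w (hnb w hw h)
    · intro w hw w' hw' e
      dsimp only at e
      split_ifs at e with h h' h'
      · exact hX.inj h h' e
      · exact absurd (e ▸ hX.maps w h) (hdisj _ (hY.maps w' (hnb w' hw' h')))
      · exact absurd (e ▸ hX.maps w' h') (hdisj _ (hY.maps w (hnb w hw h)))
      · exact hY.inj (hnb w hw h) (hnb w' hw' h') e
    · intro w hw hb
      set φ := fun w => if w ∈ S.nb X then f w else g w with hφ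
      have stay : ∀ n, φ^[n] w ∈ S.nb X → φ^[n+1] w ∈ S.nb X := by
        intro n hn
        have hA := hb.1 (n + 1)
        rw [Function.iterate_succ_apply'] at hA ⊢
        have e : φ (φ^[n] w) = f (φ^[n] w) := if_pos hn
        rw [e] at hA ⊢
        exact hX.step_nb hn hA
      by_cases hc : ∃ k, φ^[k] w ∈ S.nb X
      · obtain ⟨k, hk⟩ := hc
        have hk' : ∀ n, k ≤ n → φ^[n] w ∈ S.nb X := by
          intro n hn
          induction n, hn using Nat.le_induction with
          | base => exact hk
          | succ n hn ih => exact stay n ih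
        exact hX.fin _ hk (hb.congr_tail k fun n hn => (if_pos (hk' n hn)).symm)
      · push Not at hc
        have hb' : Bad g S.A w := hb.congr_along fun n => (if_neg (hc n)).symm
        have hit : ∀ n, g^[n] w = φ^[n] w := iterate_congr_along fun n => (if_neg (hc n)).symm
        refine hY.fin w (hnb w hw (hc 0)) (hb'.sets fun n => ?_)
        rintro (h | h)
        · exact hb'.1 n h
        · rw [hit] at h; exact hc n h
  exact Set.eq_empty_of_forall_notMem fun y hy => hdisj y hy (hsub hy)

theorem quo_unh (S : Sys V) : ¬ (S.quo S.maxX).Hind := by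
  rintro ⟨Y, g, l, hY, hl, -⟩
  rw [quo_wf_empty hY] at hl
  exact hl

theorem quo_maxX (S : Sys V) : (S.quo S.maxX).maxX = ∅ := quo_wf_empty (maxF_wf _)

theorem quo_src_unh (S : Sys V) (s : V) : ¬ ((S.quo S.maxX).src {s}).Hind :=
  unh_src_of_notMem S.quo_unh (by rw [quo_maxX, nb_empty]; exact Set.notMem_empty _)

/-- In an unhindered system a waveform has no infinite forward orbit: replacing the map by the
identity along it would produce a hindrance. -/
theorem Wf.fwd_fin (h : S.Wf X f) (hS : ¬ S.Hind) (v : ℕ → V) (hv : Function.Injective v)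
    (hX : ∀ n, v n ∈ X) (hn : ∀ n, v (n + 1) ∈ S.nb X) (hf : ∀ n, f (v (n + 1)) = v n) : False := by
  classical
  let g : V → V := fun w => if ∃ n, w = v (n + 1) then w else f w
  have hg1 : ∀ n, g (v (n + 1)) = v (n + 1) := fun n => if_pos ⟨n, rfl⟩
  have hg2 : ∀ w, (¬ ∃ n, w = v (n + 1)) → g w = f w := fun w hw => if_neg hw
  have hne : ∀ w ∈ S.nb X, (¬ ∃ n, w = v (n + 1)) → ∀ n, f w ≠ v n := by
    intro w hw hw' n e
    exact hw' ⟨n, h.inj hw (hn n) (e.trans (hf n).symm)⟩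
  refine hS (Hind.of (X := X) (f := g) (l := v 0) ⟨h.subU, h.notB, ?_, ?_, ?_, ?_⟩ (hX 0) ?_)
  · intro w hw
    by_cases hc : ∃ n, w = v (n + 1)
    · obtain ⟨n, rfl⟩ := hc
      rw [hg1]; exact hX _
    · rw [hg2 w hc]; exact h.maps w hw
  · intro w hw
    by_cases hc : ∃ n, w = v (n + 1)
    · obtain ⟨n, rfl⟩ := hc
      exact Or.inl (hg1 _)
    · rw [hg2 w hc]; exact h.edge w hw
  · intro w hw w' hw' e
    by_cases hc : ∃ n, w = v (n + 1) <;> by_cases hc' : ∃ n, w' = v (n + 1)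
    · obtain ⟨n, rfl⟩ := hc
      obtain ⟨n', rfl⟩ := hc'
      rwa [hg1, hg1] at e
    · obtain ⟨n, rfl⟩ := hc
      rw [hg1, hg2 w' hc'] at e
      exact absurd e.symm (hne w' hw' hc' _)
    · obtain ⟨n', rfl⟩ := hc'
      rw [hg1, hg2 w hc] at e
      exact absurd e (hne w hw hc _)
    · rw [hg2 w hc, hg2 w' hc'] at e
      exact h.inj hw hw' e
  · intro w hw hb
    have key : ∀ n, ¬ ∃ k, g^[n] w = v (k + 1) := by
      rintro n ⟨k, hk⟩
      have := (hb.tail n).ne_self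
      rw [hk, hg1] at this
      exact this rfl
    exact h.fin w hw (hb.congr_along fun n => (hg2 _ (key n)).symm)
  · intro w hw
    by_cases hc : ∃ n, w = v (n + 1)
    · obtain ⟨n, rfl⟩ := hc
      rw [hg1]
      intro e
      have := hv e
      omega
    · rw [hg2 w hc]; exact hne w hw hc 0

end Change

end Sys

/-! ### Closures and cardinalities -/

/-- The closure of `C` under the set-valued operation `R`. -/
def Clo {V : Type u} (R : V → Set V) (C : Set V) : Set V :=
  {v | ∃ c ∈ C, Relation.ReflTransGen (fun a b => b ∈ R a) c v}

section CloLemmas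
variable {V : Type u} {R : V → Set V} {C : Set V}

theorem subset_clo : C ⊆ Clo R C := fun c hc => ⟨c, hc, .refl⟩

theorem clo_closed {v w : V} (hv : v ∈ Clo R C) (hw : w ∈ R v) : w ∈ Clo R C := by
  obtain ⟨c, hc, h⟩ := hv
  exact ⟨c, hc, h.tail hw⟩

theorem clo_subset {D : Set V} (hC : C ⊆ D) (hD : ∀ v ∈ D, R v ⊆ D) : Clo R C ⊆ D := by
  rintro v ⟨c, hc, h⟩
  induction h with
  | refl => exact hC hc
  | tail _ h ih => exact hD _ ih h

/-- The `n`-th level of the closure. -/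
def cloLev (R : V → Set V) (C : Set V) : ℕ → Set V
  | 0 => C
  | n + 1 => ⋃ v ∈ cloLev R C n, R v

theorem clo_eq : Clo R C = ⋃ n, cloLev R C n := by
  apply Set.Subset.antisymm
  · apply clo_subset
    · exact fun c hc => Set.mem_iUnion.2 ⟨0, hc⟩
    · intro v hv w hw
      obtain ⟨n, hn⟩ := Set.mem_iUnion.1 hv
      exact Set.mem_iUnion.2 ⟨n + 1, Set.mem_biUnion hn hw⟩
  · refine Set.iUnion_subset fun n => ?_
    induction n with
    | zero => exact subset_clo
    | succ n ih =>
      exact Set.iUnion₂_subset fun v hv w hw => clo_closed (ih hv) hw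

theorem clo_lt {κ : Cardinal.{u}} (hκ : κ.IsRegular) (hκ' : ℵ₀ < κ) (hC : #C < κ)
    (hR : ∀ v, #(R v) < κ) : #(Clo R C) < κ := by
  have hlev : ∀ n, #(cloLev R C n) < κ := by
    intro n
    induction n with
    | zero => exact hC
    | succ n ih => exact (card_biUnion_lt_iff_forall_of_isRegular hκ ih).2 fun a _ => hR a
  rw [clo_eq]
  have : (⋃ n, cloLev R C n) = ⋃ n : ULift.{u} ℕ, cloLev R C n.down := by
    ext v; simp
  rw [this, card_iUnion_lt_iff_forall_of_isRegular hκ (by simpa using hκ')]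
  exact fun n => hlev _

theorem clo_countable (hC : C.Countable) (hR : ∀ v, (R v).Countable) : (Clo R C).Countable := by
  rw [clo_eq]
  refine Set.countable_iUnion fun n => ?_
  induction n with
  | zero => exact hC
  | succ n ih => exact ih.biUnion fun a _ => hR a

end CloLemmas

namespace Sys
variable {V : Type u}

theorem Wf.pre_subsingleton {S : Sys V} {X : Set V} {f : V → V} (h : S.Wf X f) (v : V) :
    {w | w ∈ S.nb X ∧ f w = v}.Subsingleton :=
  fun _ hw _ hw' => h.inj hw.1 hw'.1 (hw.2.trans hw'.2.symm)

/-- If the system is hindered then any waveform `F` on `maxX` can be changed at countably many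
vertices so as to miss some vertex. -/
theorem mix {S : Sys V} (hS : S.Hind) {F : V → V} (hF : S.Wf S.maxX F) :
    ∃ g l, S.Wf S.maxX g ∧ l ∈ S.maxX ∧ (∀ w ∈ S.nb S.maxX, g w ≠ l) ∧
      {w | g w ≠ F w}.Countable := by
  classical
  obtain ⟨X, f, l, hX, hl, hmiss⟩ := hS
  set M := S.maxX with hM
  have hXM : X ⊆ M := hX.subset_maxX
  let R : V → Set V := fun v => {F v, f v} ∪ {w | w ∈ S.nb M ∧ F w = v} ∪ {w | w ∈ S.nb X ∧ f w = v}
  let K := Clo R {l}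
  have hK : K.Countable := clo_countable (Set.countable_singleton l) fun v =>
    (((Set.countable_singleton _).insert _).union (hF.pre_subsingleton v).countable).union
      (hX.pre_subsingleton v).countable
  have KF : ∀ v ∈ K, F v ∈ K := fun v hv => clo_closed hv (Or.inl (Or.inl (Or.inl rfl)))
  have Kf : ∀ v ∈ K, f v ∈ K := fun v hv => clo_closed hv (Or.inl (Or.inl (Or.inr rfl)))
  have KF' : ∀ w ∈ S.nb M, F w ∈ K → w ∈ K := fun w hw h => clo_closed h (Or.inl (Or.inr ⟨hw, rfl⟩))
  have hlK : l ∈ K := subset_clo rfl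
  let g : V → V := fun w => if w ∈ K ∧ w ∈ S.nb X then f w else F w
  have g1 : ∀ w, w ∈ K → w ∈ S.nb X → g w = f w := fun w h1 h2 => if_pos ⟨h1, h2⟩
  have g2 : ∀ w, ¬ (w ∈ K ∧ w ∈ S.nb X) → g w = F w := fun w h => if_neg h
  have cross : ∀ w ∈ S.nb M, ¬ (w ∈ K ∧ w ∈ S.nb X) → ¬ (F w ∈ K ∧ F w ∈ X) := by
    rintro w hw h ⟨h1, h2⟩
    exact h ⟨KF' w hw h1, hF.mem_nb_of_eq hw h2⟩
  have maps : ∀ w ∈ S.nb M, g w ∈ M := by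
    intro w hw
    by_cases hc : w ∈ K ∧ w ∈ S.nb X
    · rw [g1 w hc.1 hc.2]; exact hXM (hX.maps w hc.2)
    · rw [g2 w hc]; exact hF.maps w hw
  refine ⟨g, l, ⟨hF.subU, hF.notB, maps, ?_, ?_, ?_⟩, hXM hl, ?_, ?_⟩
  · intro w hw
    by_cases hc : w ∈ K ∧ w ∈ S.nb X
    · rw [g1 w hc.1 hc.2]; exact hX.edge w hc.2
    · rw [g2 w hc]; exact hF.edge w hw
  · intro w hw w' hw' e
    by_cases hc : w ∈ K ∧ w ∈ S.nb X <;> by_cases hc' : w' ∈ K ∧ w' ∈ S.nb X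
    · rw [g1 w hc.1 hc.2, g1 w' hc'.1 hc'.2] at e
      exact hX.inj hc.2 hc'.2 e
    · rw [g1 w hc.1 hc.2, g2 w' hc'] at e
      exact absurd ⟨e ▸ Kf w hc.1, e ▸ hX.maps w hc.2⟩ (cross w' hw' hc')
    · rw [g2 w hc, g1 w' hc'.1 hc'.2] at e
      exact absurd ⟨e ▸ Kf w' hc'.1, e ▸ hX.maps w' hc'.2⟩ (cross w hw hc)
    · rw [g2 w hc, g2 w' hc'] at e
      exact hF.inj hw hw' e
  · intro w hw hb
    have mem : ∀ n, g^[n] w ∈ S.nb M := by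
      intro n
      induction n with
      | zero => exact hw
      | succ n ih =>
        have hA := hb.1 (n + 1)
        rw [Function.iterate_succ_apply'] at hA ⊢
        exact hF.nb_of_mem (maps _ ih) hA
    by_cases hc : ∃ k, g^[k] w ∈ K ∧ g^[k] w ∈ S.nb X
    · obtain ⟨k, hk⟩ := hc
      have hk' : ∀ n, k ≤ n → g^[n] w ∈ K ∧ g^[n] w ∈ S.nb X := by
        intro n hn
        induction n, hn using Nat.le_induction with
        | base => exact hk
        | succ n hn ih =>
          have hA := hb.1 (n + 1)
          rw [Function.iterate_succ_apply'] at hA ⊢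
          rw [g1 _ ih.1 ih.2] at hA ⊢
          exact ⟨Kf _ ih.1, hX.step_nb ih.2 hA⟩
      exact hX.fin _ hk.2 (hb.congr_tail k fun n hn => (g1 _ (hk' n hn).1 (hk' n hn).2).symm)
    · push Not at hc
      exact hF.fin w hw (hb.congr_along fun n => (g2 _ fun h => hc n h.1 h.2).symm)
  · intro w hw e
    by_cases hc : w ∈ K ∧ w ∈ S.nb X
    · rw [g1 w hc.1 hc.2] at e
      exact hmiss w hc.2 e
    · rw [g2 w hc] at e
      exact cross w hw hc (e ▸ ⟨hlK, hl⟩)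
  · refine hK.mono fun w hw => ?_
    by_contra hwK
    exact hw (g2 w fun h => hwK h.1)

end Sys

section BadMore
variable {V : Type u} {f g : V → V} {A : Set V} {u : V}

theorem Bad.iter_mem (h : Bad f A u) {N : Set V} (hu : u ∈ N) (hN : ∀ v ∈ N, f v ∉ A → f v ∈ N)
    (n : ℕ) : f^[n] u ∈ N := by
  induction n with
  | zero => exact hu
  | succ n ih =>
    have hA := h.1 (n + 1)
    rw [Function.iterate_succ_apply'] at hA ⊢
    exact hN _ ih hA

/-- An orbit that cannot leave `P` is eventually inside `P` or disjoint from it. -/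
theorem orbit_absorb (P : Set V) (hP : ∀ n, f^[n] u ∈ P → f^[n + 1] u ∈ P) :
    (∃ k, ∀ n, k ≤ n → f^[n] u ∈ P) ∨ ∀ n, f^[n] u ∉ P := by
  by_cases hc : ∃ k, f^[k] u ∈ P
  · obtain ⟨k, hk⟩ := hc
    left
    refine ⟨k, fun n hn => ?_⟩
    induction n, hn using Nat.le_induction with
    | base => exact hk
    | succ n hn ih => exact hP n ih
  · push Not at hc
    exact Or.inr hc

end BadMore

/-- A shortest walk from `a` to `B` is a path meeting `B` only at its end. -/
theorem exists_path {V : Type u} {r : V → V → Prop} {a b : V} {B : Set V}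
    (h : Relation.ReflTransGen r a b) (hb : b ∈ B) :
    ∃ (p : ℕ → V) (n : ℕ), p 0 = a ∧ p n ∈ B ∧ (∀ k < n, r (p k) (p (k + 1))) ∧
      (∀ k < n, p k ∉ B) ∧ Set.InjOn p (Set.Iic n) := by
  have ex : ∃ n, ∃ p : ℕ → V, p 0 = a ∧ p n ∈ B ∧ (∀ k < n, r (p k) (p (k + 1))) := by
    have : ∃ n, ∃ p : ℕ → V, p 0 = a ∧ p n = b ∧ (∀ k < n, r (p k) (p (k + 1))) := by
      clear hb
      induction h with
      | refl => exact ⟨0, fun _ => a, rfl, rfl, by simp⟩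
      | @tail c d hc hd ih =>
        obtain ⟨n, p, h0, hn, hr⟩ := ih
        refine ⟨n + 1, fun k => if k ≤ n then p k else d, by simp [h0], by simp, fun k hk => ?_⟩
        rcases Nat.lt_succ_iff_lt_or_eq.1 hk with h | h
        · simp only [h.le, if_true, Nat.succ_le_of_lt h]
          exact hr k h
        · subst h
          simp only [le_refl, if_true, Nat.not_succ_le_self, if_false]
          exact hn ▸ hd
    obtain ⟨n, p, h0, hn, hr⟩ := this
    exact ⟨n, p, h0, hn ▸ hb, hr⟩
  classical
  obtain ⟨p, h0, hn, hr⟩ := Nat.find_spec ex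
  set n := Nat.find ex
  have hmin : ∀ m < n, ¬ ∃ p : ℕ → V, p 0 = a ∧ p m ∈ B ∧ (∀ k < m, r (p k) (p (k + 1))) :=
    fun m hm => Nat.find_min ex hm
  refine ⟨p, n, h0, hn, hr, fun k hk hkB => hmin k hk ⟨p, h0, hkB, fun i hi => hr i (by omega)⟩, ?_⟩
  have key : ∀ i j, i < j → j ≤ n → p i ≠ p j := by
    intro i j hij hj e
    refine hmin (n - (j - i)) (by omega) ⟨fun k => if k ≤ i then p k else p (k + (j - i)), ?_, ?_, ?_⟩
    · simp [h0]
    · by_cases hc : n - (j - i) ≤ i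
      · have : n - (j - i) = i := by omega
        have hjn : j = n := by omega
        simp only [this, le_refl, if_true]
        rw [e, hjn]; exact hn
      · simp only [hc, if_false]
        rwa [show n - (j - i) + (j - i) = n by omega]
    · intro k hk
      by_cases h1 : k + 1 ≤ i
      · simp only [h1, if_true, show k ≤ i by omega]
        exact hr k (by omega)
      · simp only [h1, if_false]
        by_cases h2 : k ≤ i
        · have : k = i := by omega
          subst this
          simp only [le_refl, if_true]
          rw [e, show k + 1 + (j - k) = j + 1 by omega]
          exact hr j (by omega)
        · simp only [h2, if_false]
          rw [show k + 1 + (j - i) = k + (j - i) + 1 by omega]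
          exact hr _ (by omega)
  intro i hi j hj e
  rcases lt_trichotomy i j with h | h | h
  · exact absurd e (key i j h hj)
  · exact h
  · exact absurd e.symm (key j i h hi)

namespace Sys
variable {V : Type u}

/-! ### Removing one source by a safe path -/

section SrcLemmas
variable {S : Sys V} {X F : Set V} {f : V → V} {w : V}

theorem mem_nb_src : w ∈ (S.src F).nb X ↔ w ∈ S.nb X ∧ w ∉ F := by
  simp only [nb, src, Set.mem_ofPred_eq, Set.mem_union, not_or]
  tauto

theorem src_src (S : Sys V) (F F' : Set V) : (S.src F).src F' = S.src (F ∪ F') := by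
  simp [src, Set.union_assoc]

theorem Wf.src (h : S.Wf X f) (F : Set V) : (S.src F).Wf X f where
  subU := h.subU
  notB := h.notB
  maps w hw := h.maps w (mem_nb_src.1 hw).1
  edge w hw := h.edge w (mem_nb_src.1 hw).1
  inj _ hw _ hw' := h.inj (mem_nb_src.1 hw).1 (mem_nb_src.1 hw').1
  fin w hw hb := h.fin w (mem_nb_src.1 hw).1 (hb.sets fun n hA => hb.1 n (Or.inl hA))

theorem src_hind_of_mem (h : S.Wf X f) (hw : w ∈ S.nb X) (hF : w ∈ F) : (S.src F).Hind := by
  refine Hind.of (h.src F) (h.maps w hw) fun v hv e => ?_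
  have hv := mem_nb_src.1 hv
  exact hv.2 (h.inj hv.1 hw e ▸ hF)

theorem src_maxX_mono {F F' : Set V} (h : F ⊆ F') : (S.src F).maxX ⊆ (S.src F').maxX := by
  have := (maxF_wf (S.src F)).src F'
  rw [src_src, Set.union_eq_self_of_subset_left h] at this
  exact this.subset_maxX

end SrcLemmas

/-- Every finite subset of `Z` can be added to the sources without creating a hindrance. -/
def FG (S : Sys V) (Z : Set V) : Prop := ∀ F : Finset V, ↑F ⊆ Z → ¬ (S.src F).Hind

/-- The union of the largest waveform sets over all finite subsets of `Z` added as sources. -/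
def XZ (S : Sys V) (Z : Set V) : Set V := ⋃ F : {F : Finset V // ↑F ⊆ Z}, (S.src F.1).maxX

/-- Steps from `u` to `w`, either along an edge to a vertex `w` of `Z`, or along an edge used (in
the direction opposite to `f`) by the waveform. -/
def qstep (S : Sys V) (Z : Set V) (f : V → V) (u w : V) : Prop :=
  (w ∈ Z ∧ S.E u w) ∨ (w ∈ (S.src Z).nb (S.XZ Z) ∧ f w = u ∧ w ≠ u)

/-- Admissible pairs for the maximality argument behind `safe_path`. Every finite part of the
waveform `f` is required to come from a waveform over a finite subset of `Z`. -/
structure Adm (S : Sys V) (a : V) (Z : Set V) (f : V → V) : Prop where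
  sub : Z ⊆ S.U \ S.A
  fg : S.FG Z
  wf : (S.src Z).Wf (S.XZ Z) f
  lf : ∀ E : Finset V, ↑E ⊆ (S.src Z).nb (S.XZ Z) → ∃ (F : Finset V) (g : V → V), ↑F ⊆ Z ∧
    (S.src F).Wf (S.src F).maxX g ∧ ↑E ⊆ (S.src F).nb (S.src F).maxX ∧ ∀ w ∈ E, g w = f w
  reach : ∀ z ∈ Z, Relation.ReflTransGen (S.qstep Z f) a z

section FGLemmas
variable {S : Sys V} {X Z Z' : Set V} {f : V → V} {w : V} {F : Finset V}

theorem FG.mono (h : S.FG Z) (hZ : Z' ⊆ Z) : S.FG Z' := fun F hF => h F (hF.trans hZ)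

theorem FG.notMem_nb (h : S.FG Z) (hF : ↑F ⊆ Z) (hX : (S.src F).Wf X f) (hw : w ∈ (S.src F).nb X) :
    w ∉ Z := by
  classical
  intro hz
  have := src_hind_of_mem hX hw (Set.mem_singleton w)
  rw [src_src] at this
  refine h (insert w F) ?_ ?_
  · rw [Finset.coe_insert]; exact Set.insert_subset hz hF
  · rwa [Finset.coe_insert, Set.insert_eq, Set.union_comm]

theorem FG.wf_src (hF : ↑F ⊆ Z) (hX : (S.src F).Wf X f) : (S.src Z).Wf X f := by
  have := hX.src Z
  rwa [src_src, Set.union_eq_self_of_subset_left hF] at this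

theorem FG.nb_eq (h : S.FG Z) (hF : ↑F ⊆ Z) (hX : (S.src F).Wf X f) :
    (S.src Z).nb X = (S.src F).nb X := by
  ext w
  constructor
  · intro hw
    have := mem_nb_src.1 hw
    exact mem_nb_src.2 ⟨this.1, fun hwF => this.2 (hF hwF)⟩
  · intro hw
    exact mem_nb_src.2 ⟨(mem_nb_src.1 hw).1, h.notMem_nb hF hX hw⟩

theorem maxX_subset_XZ (hF : ↑F ⊆ Z) : (S.src F).maxX ⊆ S.XZ Z :=
  fun _ hx => Set.mem_iUnion.2 ⟨⟨F, hF⟩, hx⟩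

theorem FG.mem_nb_XZ (h : S.FG Z) :
    w ∈ (S.src Z).nb (S.XZ Z) ↔ ∃ F : Finset V, ↑F ⊆ Z ∧ w ∈ (S.src F).nb (S.src F).maxX := by
  rw [XZ, mem_nb_iUnion]
  constructor
  · rintro ⟨⟨F, hF⟩, hw⟩
    exact ⟨F, hF, h.nb_eq hF (maxF_wf _) ▸ hw⟩
  · rintro ⟨F, hF, hw⟩
    exact ⟨⟨F, hF⟩, (h.nb_eq hF (maxF_wf _)).symm ▸ hw⟩

theorem FG.nb_XZ_mono (h : S.FG Z') (hZ : Z ⊆ Z') :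
    (S.src Z).nb (S.XZ Z) ⊆ (S.src Z').nb (S.XZ Z') := by
  intro w hw
  obtain ⟨F, hF, hw⟩ := ((h.mono hZ).mem_nb_XZ).1 hw
  exact h.mem_nb_XZ.2 ⟨F, hF.trans hZ, hw⟩

theorem XZ_mono (hZ : Z ⊆ Z') : S.XZ Z ⊆ S.XZ Z' :=
  Set.iUnion_subset fun F => maxX_subset_XZ (F.2.trans hZ)

end FGLemmas

/-- The order on admissible pairs. -/
def AdmLE (S : Sys V) (p q : Set V × (V → V)) : Prop :=
  p.1 ⊆ q.1 ∧ ∀ w ∈ (S.src p.1).nb (S.XZ p.1), q.2 w = p.2 w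

section AdmLemmas
variable {S : Sys V} {a : V}

theorem qstep_mono {p q : Set V × (V → V)} (h : AdmLE S p q) (hq : S.FG q.1) {u w : V}
    (hs : S.qstep p.1 p.2 u w) : S.qstep q.1 q.2 u w := by
  rcases hs with ⟨h1, h2⟩ | ⟨h1, h2, h3⟩
  · exact Or.inl ⟨h.1 h1, h2⟩
  · exact Or.inr ⟨hq.nb_XZ_mono h.1 h1, (h.2 w h1).trans h2, h3⟩

theorem Adm.empty (hS : ¬ S.Hind) : ∃ f, Adm S a ∅ f := by
  have h0 : S.src ∅ = S := by simp [src]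
  have hXZ : S.XZ ∅ = S.maxX := by
    apply Set.Subset.antisymm
    · refine Set.iUnion_subset ?_
      rintro ⟨F, hF⟩
      rw [Set.subset_empty_iff.1 hF, h0]
    · have := maxX_subset_XZ (S := S) (F := ∅) (Z := ∅) (by simp)
      simpa [h0] using this
  refine ⟨S.maxF, by simp, ?_, ?_, ?_, by simp⟩
  · intro F hF
    rwa [Set.subset_empty_iff.1 hF, h0]
  · rw [hXZ, h0]; exact S.maxF_wf
  · intro E hE
    refine ⟨∅, S.maxF, by simp, ?_, ?_, fun _ _ => rfl⟩
    · rw [Finset.coe_empty, h0]; exact S.maxF_wf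
    · rw [Finset.coe_empty, h0]; rwa [hXZ, h0] at hE

/-- A finite subset of `Z`, as a type carrying no order, so that it can be well-ordered. -/
structure FinSub (Z : Set V) where
  /-- the finite set -/
  val : Finset V
  property : ↑val ⊆ Z

/-- Extension of an admissible pair by a vertex at which no waveform is available. -/
theorem Adm.extend {Z : Set V} {f : V → V} (h : Adm S a Z f) {p w : V}
    (hp : Relation.ReflTransGen (S.qstep Z f) a p) (hpw : S.E p w) (hwU : w ∈ S.U) (hwA : w ∉ S.A)
    (hwn : w ∉ (S.src Z).nb (S.XZ Z)) :
    ∃ f', Adm S a (insert w Z) f' ∧ AdmLE S (Z, f) (insert w Z, f') := by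
  classical
  have hZ' : Z ⊆ insert w Z := Set.subset_insert w Z
  have srcw : ∀ F : Finset V, (S.src F).src {w} = S.src (insert w F : Finset V) := fun F => by
    rw [src_src, Finset.coe_insert, Set.union_comm, ← Set.insert_eq]
  have fg' : S.FG (insert w Z) := by
    intro F hF
    by_cases hwF : w ∈ F
    · have e : F = insert w (F.erase w) := (Finset.insert_erase hwF).symm
      have hF0 : ↑(F.erase w) ⊆ Z := by
        intro v hv
        have hv := Finset.mem_erase.1 hv
        exact (hF hv.2).resolve_left hv.1
      rw [e, ← srcw]
      refine unh_src_of_notMem (h.fg _ hF0) fun hw => hwn ?_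
      exact h.fg.mem_nb_XZ.2 ⟨_, hF0, hw⟩
    · exact h.fg F fun v hv => (hF hv).resolve_left fun e => hwF (e ▸ hv)
  obtain ⟨lo, wo⟩ := exists_wellFoundedLT (FinSub Z)
  let W : FinSub Z → Sys V := fun F => S.src (insert w F.val : Finset V)
  have hWsub : ∀ F : FinSub Z, ↑(insert w F.val : Finset V) ⊆ insert w Z := fun F => by
    rw [Finset.coe_insert]; exact Set.insert_subset_insert F.property
  let φ : V → V := fun v => if hv : ∃ F, v ∈ (W F).nb (W F).maxX then
      (W (exists_least hv).choose).maxF v else v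
  have hφ : ∀ i, ∀ v ∈ (W i).nb (W i).maxX, (∀ j < i, v ∉ (W j).nb (W j).maxX) →
      φ v = (W i).maxF v := by
    intro i v hv hj
    have hv' : ∃ F, v ∈ (W F).nb (W F).maxX := ⟨i, hv⟩
    have hs := (exists_least hv').choose_spec
    have : (exists_least hv').choose = i :=
      le_antisymm (not_lt.1 fun hlt => hs.2 _ hlt hv) (not_lt.1 fun hlt => hj _ hlt hs.1)
    simp only [φ, dif_pos hv', this]
  let f' : V → V := fun v => if v ∈ (S.src (insert w Z)).nb (S.XZ Z) then f v else φ v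
  have hXZ : S.XZ (insert w Z) = S.XZ Z ∪ ⋃ i, (W i).maxX := by
    apply Set.Subset.antisymm
    · refine Set.iUnion_subset ?_
      rintro ⟨F, hF⟩
      refine Set.subset_union_of_subset_right ?_ _
      have hF0 : ↑(F.erase w) ⊆ Z := by
        intro v hv
        have hv := Finset.mem_erase.1 hv
        exact (hF hv.2).resolve_left hv.1
      refine Set.subset_iUnion_of_subset ⟨F.erase w, hF0⟩ (src_maxX_mono ?_)
      intro v hv
      by_cases e : v = w <;> simp [e]
      exact hv
    · exact Set.union_subset (XZ_mono hZ') (Set.iUnion_subset fun i => maxX_subset_XZ (hWsub i))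
  have nbW : ∀ i, (S.src (insert w Z)).nb (W i).maxX = (W i).nb (W i).maxX := fun i =>
    fg'.nb_eq (hWsub i) (maxF_wf _)
  have nbZ : (S.src (insert w Z)).nb (S.XZ Z) = (S.src Z).nb (S.XZ Z) := by
    ext v
    simp only [mem_nb_src, Set.mem_insert_iff, not_or]
    constructor
    · exact fun h => ⟨h.1, h.2.2⟩
    · refine fun h => ⟨h.1, ?_, h.2⟩
      rintro rfl
      exact hwn (mem_nb_src.2 h)
  have wfZ : (S.src (insert w Z)).Wf (S.XZ Z) f := by
    have := h.wf.src (insert w Z)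
    rwa [src_src, Set.union_eq_self_of_subset_left hZ'] at this
  have hle : AdmLE S (Z, f) (insert w Z, f') := by
    refine ⟨hZ', fun v hv => ?_⟩
    exact if_pos (nbZ.symm ▸ hv)
  refine ⟨f', ⟨?_, fg', ?_, ?_, ?_⟩, hle⟩
  · exact Set.insert_subset ⟨hwU, hwA⟩ h.sub
  · rw [hXZ]
    refine wfZ.prio2 (Wf.prio (f := fun i => (W i).maxF) (fun i => FG.wf_src (hWsub i) (maxF_wf _)) ?_)
    intro i v hv hj
    rw [nbW] at hv
    exact hφ i v hv fun j hj' => nbW j ▸ hj j hj'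
  · intro E hE
    let E1 := E.filter (· ∈ (S.src Z).nb (S.XZ Z))
    let E2 := E.filter (· ∉ (S.src Z).nb (S.XZ Z))
    obtain ⟨F1, g1, hF1, hg1, hE1, he1⟩ := h.lf E1 (fun v hv => (Finset.mem_filter.1 hv).2)
    have hE2 : ∀ v ∈ E2, ∃ i, v ∈ (W i).nb (W i).maxX ∧ ∀ j < i, v ∉ (W j).nb (W j).maxX := by
      intro v hv
      have hv := Finset.mem_filter.1 hv
      apply exists_least
      have := hE hv.1
      rw [hXZ, mem_nb_union, nbZ] at this
      obtain ⟨i, hi⟩ := mem_nb_iUnion.1 (this.resolve_left hv.2)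
      exact ⟨i, nbW i ▸ hi⟩
    have : Nonempty (FinSub Z) := ⟨⟨∅, by simp⟩⟩
    choose! I hI1 hI2 using hE2
    let F2 : Finset V := insert w (F1 ∪ E2.biUnion fun v => (I v).1)
    have hF2 : ↑F2 ⊆ insert w Z := by
      intro v hv
      simp only [F2, Finset.coe_insert, Finset.coe_union, Finset.coe_biUnion, Set.mem_insert_iff,
        Set.mem_union, Set.mem_iUnion] at hv
      rcases hv with hv | hv | ⟨x, hx, hv⟩
      · exact Or.inl hv
      · exact Or.inr (hF1 hv)
      · exact Or.inr ((I x).2 hv)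
    have hF12 : ↑F1 ⊆ (↑F2 : Set V) := by
      intro v hv
      simp only [F2, Finset.coe_insert, Finset.coe_union]
      exact Or.inr (Or.inl hv)
    have hI2F : ∀ x ∈ E2, ↑(insert w (I x).1 : Finset V) ⊆ (↑F2 : Set V) := by
      intro x hx v hv
      simp only [F2, Finset.coe_insert, Finset.coe_union, Finset.coe_biUnion, Set.mem_insert_iff,
        Set.mem_union, Set.mem_iUnion] at hv ⊢
      rcases hv with hv | hv
      · exact Or.inl hv
      · exact Or.inr (Or.inr ⟨x, hx, hv⟩)
    have fg2 : S.FG ↑F2 := fg'.mono hF2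
    -- the sets of the waveforms used by the finitely many vertices of `E2`
    let Y : FinSub Z → Set V := fun i => if ∃ x ∈ E2, I x = i then (W i).maxX else ∅
    have hYw : ∀ i, (S.src F2).Wf (Y i) (if ∃ x ∈ E2, I x = i then (W i).maxF else id) := by
      intro i
      by_cases hi : ∃ x ∈ E2, I x = i
      · simp only [Y, if_pos hi]
        obtain ⟨x, hx, rfl⟩ := hi
        exact FG.wf_src (hI2F x hx) (maxF_wf _)
      · simp only [Y, if_neg hi]
        exact Wf.empty _
    have hYn : ∀ x ∈ E2, (S.src F2).nb (Y (I x)) = (W (I x)).nb (W (I x)).maxX := by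
      intro x hx
      have : Y (I x) = (W (I x)).maxX := if_pos ⟨x, hx, rfl⟩
      rw [this]
      exact fg2.nb_eq (hI2F x hx) (maxF_wf _)
    have hYsub : ∀ i, ∀ v ∈ (S.src F2).nb (Y i), (∃ x ∈ E2, I x = i) ∧ v ∈ (W i).nb (W i).maxX := by
      intro i v hv
      by_cases hi : ∃ x ∈ E2, I x = i
      · refine ⟨hi, ?_⟩
        obtain ⟨x, hx, rfl⟩ := hi
        exact hYn x hx ▸ hv
      · simp only [Y, if_neg hi, nb_empty] at hv
        exact absurd hv (Set.notMem_empty _)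
    let ψ : V → V := fun v => if hv : ∃ i, v ∈ (S.src F2).nb (Y i) then
      (W (exists_least hv).choose).maxF v else v
    have hψ : ∀ i, ∀ v ∈ (S.src F2).nb (Y i), (∀ j < i, v ∉ (S.src F2).nb (Y j)) →
        ψ v = (W i).maxF v := by
      intro i v hv hj
      have hv' : ∃ i, v ∈ (S.src F2).nb (Y i) := ⟨i, hv⟩
      have hs := (exists_least hv').choose_spec
      have : (exists_least hv').choose = i :=
        le_antisymm (not_lt.1 fun hlt => hs.2 _ hlt hv) (not_lt.1 fun hlt => hj _ hlt hs.1)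
      simp only [ψ, dif_pos hv', this]
    have wfY : (S.src F2).Wf (⋃ i, Y i) ψ := by
      refine Wf.prio hYw fun i v hv hj => ?_
      rw [hψ i v hv hj, if_pos (hYsub i v hv).1]
    have wf1 : (S.src F2).Wf (S.src F1).maxX g1 := FG.wf_src hF12 hg1
    have wf2 := wf1.prio2 wfY
    have wf3 := wf2.prio2 (maxF_wf (S.src F2))
    have hmax := Set.union_eq_self_of_subset_left wf2.subset_maxX
    rw [hmax] at wf3
    have nb1 : (S.src F2).nb (S.src F1).maxX = (S.src F1).nb (S.src F1).maxX := fg2.nb_eq hF12 hg1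
    have main : ∀ v ∈ E, (v ∈ (S.src F1).nb (S.src F1).maxX ∧ g1 v = f' v) ∨
        (v ∉ (S.src F1).nb (S.src F1).maxX ∧ v ∈ (S.src F2).nb (⋃ i, Y i) ∧ ψ v = f' v) := by
      intro v hv
      by_cases hc : v ∈ (S.src Z).nb (S.XZ Z)
      · left
        have hv1 : v ∈ E1 := Finset.mem_filter.2 ⟨hv, hc⟩
        refine ⟨hE1 hv1, ?_⟩
        rw [he1 v hv1]
        exact (if_pos (nbZ.symm ▸ hc)).symm
      · right
        have hv2 : v ∈ E2 := Finset.mem_filter.2 ⟨hv, hc⟩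
        have hvY : v ∈ (S.src F2).nb (Y (I v)) := hYn v hv2 ▸ hI1 v hv2
        refine ⟨fun h' => hc (h.fg.mem_nb_XZ.2 ⟨F1, hF1, h'⟩), mem_nb_iUnion.2 ⟨_, hvY⟩, ?_⟩
        rw [hψ (I v) v hvY fun j hj hv' => hI2 v hv2 j hj (hYsub j v hv').2]
        simp only [f']
        rw [nbZ, if_neg hc, hφ _ _ (hI1 v hv2) (hI2 v hv2)]
    have inn : ∀ v ∈ E, v ∈ (S.src F2).nb ((S.src F1).maxX ∪ ⋃ i, Y i) := by
      intro v hv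
      rw [mem_nb_union, nb1]
      exact (main v hv).imp (·.1) (·.2.1)
    refine ⟨F2, _, hF2, wf3, ?_, ?_⟩
    · intro v hv
      exact nb_mono wf2.subset_maxX (inn v hv)
    · intro v hv
      simp only [if_pos (inn v hv), nb1]
      rcases main v hv with ⟨h1, h2⟩ | ⟨h1, -, h2⟩
      · rw [if_pos h1, h2]
      · rw [if_neg h1, h2]
  · have hmono : ∀ {u}, Relation.ReflTransGen (S.qstep Z f) a u →
        Relation.ReflTransGen (S.qstep (insert w Z) f') a u := fun hu =>
      Relation.ReflTransGen.mono (fun _ _ hxy => qstep_mono hle fg' hxy) _ _ hu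
    rintro z (rfl | hz)
    · exact (hmono hp).tail (Or.inl ⟨Set.mem_insert _ _, hpw⟩)
    · exact hmono (h.reach z hz)

/-- There is an admissible pair which cannot be extended. -/
theorem Adm.exists_max (hS : ¬ S.Hind) : ∃ Z f, Adm S a Z f ∧
    ∀ p, Relation.ReflTransGen (S.qstep Z f) a p → ∀ w, S.E p w → w ∈ S.U → w ∉ S.A →
      w ∈ Z ∨ w ∈ (S.src Z).nb (S.XZ Z) := by
  classical
  let T := {p : Set V × (V → V) // Adm S a p.1 p.2}
  let r : T → T → Prop := fun p q => AdmLE S p.1 q.1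
  obtain ⟨f0, hf0⟩ := Adm.empty (a := a) hS
  have trans : ∀ {p q s : T}, r p q → r q s → r p s := by
    intro p q s hpq hqs
    refine ⟨hpq.1.trans hqs.1, fun w hw => ?_⟩
    rw [hqs.2 w (q.2.fg.nb_XZ_mono hpq.1 hw), hpq.2 w hw]
  have bound : ∀ c : Set T, IsChain r c → ∃ ub, ∀ p ∈ c, r p ub := by
    intro c hc
    by_cases hne : c.Nonempty
    swap
    · exact ⟨⟨(∅, f0), hf0⟩, fun p hp => absurd ⟨p, hp⟩ hne⟩
    obtain ⟨p0, hp0⟩ := hne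
    have rrefl : ∀ p : T, r p p := fun p => ⟨subset_rfl, fun _ _ => rfl⟩
    have total : ∀ p ∈ c, ∀ q ∈ c, r p q ∨ r q p := by
      intro p hp q hq
      by_cases e : p = q
      · subst e; exact Or.inl (rrefl p)
      · exact hc hp hq e
    let Z : Set V := ⋃ p ∈ c, p.1.1
    have hsubZ : ∀ p ∈ c, p.1.1 ⊆ Z := fun p hp => Set.subset_biUnion_of_mem (u := fun p : T => p.1.1) hp
    have fincover : ∀ F : Finset V, ↑F ⊆ Z → ∃ p ∈ c, ↑F ⊆ p.1.1 := by
      intro F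
      induction F using Finset.induction_on with
      | empty => exact fun _ => ⟨p0, hp0, by simp⟩
      | insert v F hv ih =>
        intro hF
        rw [Finset.coe_insert, Set.insert_subset_iff] at hF
        obtain ⟨p, hp, hpF⟩ := ih hF.2
        obtain ⟨q, hq, hqv⟩ := Set.mem_iUnion₂.1 hF.1
        rw [Finset.coe_insert]
        rcases total p hp q hq with h | h
        · exact ⟨q, hq, Set.insert_subset hqv (hpF.trans h.1)⟩
        · exact ⟨p, hp, Set.insert_subset (h.1 hqv) hpF⟩
    have fg : S.FG Z := by
      intro F hF
      obtain ⟨p, hp, hpF⟩ := fincover F hF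
      exact p.2.fg F hpF
    have hnb : ∀ w ∈ (S.src Z).nb (S.XZ Z), ∃ p ∈ c, w ∈ (S.src p.1.1).nb (S.XZ p.1.1) := by
      intro w hw
      obtain ⟨F, hF, hw⟩ := fg.mem_nb_XZ.1 hw
      obtain ⟨p, hp, hpF⟩ := fincover F hF
      exact ⟨p, hp, p.2.fg.mem_nb_XZ.2 ⟨F, hpF, hw⟩⟩
    let f : V → V := fun w => if h : ∃ p : T, p ∈ c ∧ w ∈ (S.src p.1.1).nb (S.XZ p.1.1) then
      h.choose.1.2 w else w
    have hf : ∀ p ∈ c, ∀ w ∈ (S.src p.1.1).nb (S.XZ p.1.1), f w = p.1.2 w := by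
      intro p hp w hw
      have h : ∃ p : T, p ∈ c ∧ w ∈ (S.src p.1.1).nb (S.XZ p.1.1) := ⟨p, hp, hw⟩
      have e : f w = h.choose.1.2 w := dif_pos h
      rw [e]
      obtain ⟨h1, h2⟩ := h.choose_spec
      rcases total _ h1 p hp with h' | h'
      · exact (h'.2 w h2).symm
      · exact h'.2 w hw
    have hle : ∀ p ∈ c, AdmLE S p.1 (Z, f) := fun p hp => ⟨hsubZ p hp, hf p hp⟩
    have fincover' : ∀ E : Finset V, ↑E ⊆ (S.src Z).nb (S.XZ Z) →
        ∃ p ∈ c, ↑E ⊆ (S.src p.1.1).nb (S.XZ p.1.1) := by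
      intro F
      induction F using Finset.induction_on with
      | empty => exact fun _ => ⟨p0, hp0, by simp⟩
      | insert v F hv ih =>
        intro hF
        rw [Finset.coe_insert, Set.insert_subset_iff] at hF
        obtain ⟨p, hp, hpF⟩ := ih hF.2
        obtain ⟨q, hq, hqv⟩ := hnb v hF.1
        rw [Finset.coe_insert]
        rcases total p hp q hq with h | h
        · exact ⟨q, hq, Set.insert_subset hqv (hpF.trans (q.2.fg.nb_XZ_mono h.1))⟩
        · exact ⟨p, hp, Set.insert_subset (p.2.fg.nb_XZ_mono h.1 hqv) hpF⟩
    have hadm : Adm S a Z f := by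
      refine ⟨Set.iUnion₂_subset fun p _ => p.2.sub, fg, ?_, ?_, ?_⟩
      · refine ⟨?_, ?_, ?_, ?_, ?_, ?_⟩
        · exact Set.iUnion_subset fun F => (maxF_wf (S.src F.1)).subU
        · intro x hx
          obtain ⟨F, hF⟩ := Set.mem_iUnion.1 hx
          exact (maxF_wf (S.src F.1)).notB x hF
        · intro w hw
          obtain ⟨p, hp, hw⟩ := hnb w hw
          rw [hf p hp w hw]
          exact XZ_mono (hsubZ p hp) (p.2.wf.maps w hw)
        · intro w hw
          obtain ⟨p, hp, hw⟩ := hnb w hw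
          rw [hf p hp w hw]
          exact p.2.wf.edge w hw
        · intro w hw w' hw' e
          obtain ⟨p, hp, hE⟩ := fincover' {w, w'} (by
            intro v hv
            simp only [Finset.coe_insert, Finset.coe_singleton] at hv
            rcases hv with rfl | rfl
            · exact hw
            · exact hw')
          have h1 := hE (by simp : w ∈ _)
          have h2 := hE (by simp : w' ∈ _)
          rw [hf p hp w h1, hf p hp w' h2] at e
          exact p.2.wf.inj h1 h2 e
        · intro w hw hb
          obtain ⟨p, hp, hw⟩ := hnb w hw
          have hb' : Bad f (S.A ∪ p.1.1) w :=
            hb.sets fun n h => hb.1 n (h.imp id fun h => hsubZ p hp h)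
          have mem := hb'.iter_mem hw fun v hv hA => by
            rw [hf p hp v hv] at hA ⊢
            exact p.2.wf.step_nb hv hA
          exact p.2.wf.fin w hw (hb'.congr_along fun n => (hf p hp _ (mem n)).symm)
      · intro E hE
        obtain ⟨p, hp, hE⟩ := fincover' E hE
        obtain ⟨F, g, hF, hg, hE', he⟩ := p.2.lf E hE
        refine ⟨F, g, hF.trans (hsubZ p hp), hg, hE', fun w hw => ?_⟩
        rw [he w hw, hf p hp w (hE hw)]
      · intro z hz
        obtain ⟨p, hp, hz⟩ := Set.mem_iUnion₂.1 hz
        exact Relation.ReflTransGen.mono (fun _ _ hxy => qstep_mono (hle p hp) fg hxy) _ _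
          (p.2.reach z hz)
    exact ⟨⟨(Z, f), hadm⟩, hle⟩
  obtain ⟨⟨⟨Z, f⟩, hm⟩, hmax⟩ := exists_maximal_of_chains_bounded bound trans
  refine ⟨Z, f, hm, fun p hp w hpw hwU hwA => ?_⟩
  by_contra hc
  push Not at hc
  obtain ⟨f', hadm, hle⟩ := hm.extend hp hpw hwU hwA hc.2
  exact hc.1 ((hmax ⟨(insert w Z, f'), hadm⟩ hle).1 (Set.mem_insert _ _))

end AdmLemmas

section SafePath
variable {S : Sys V} {a : V}

theorem del_source_unh (hS : ¬ S.Hind) (ha : a ∈ S.A) : ¬ (S.del {a}).Hind := by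
  rintro ⟨X, f, l, h, hl, hm⟩
  have hnb : ∀ w, w ∈ S.nb X → w ∈ (S.del {a}).nb X := fun w hw =>
    ⟨⟨hw.1, fun e => hw.2.1 (e ▸ ha)⟩, hw.2⟩
  exact hS (Hind.of (X := X) (f := f) ⟨fun x hx => (h.subU hx).1, h.notB,
    fun w hw => h.maps w (hnb w hw), fun w hw => h.edge w (hnb w hw),
    fun w hw w' hw' => h.inj (hnb w hw) (hnb w' hw'), fun w hw => h.fin w (hnb w hw)⟩ hl
    fun w hw => hm w (hnb w hw))

/-- The conclusion of `safe_path`: `p 0, …, p n` is a path of `S` from the source `a` to `B`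
whose removal leaves an unhindered system. -/
structure SafePath (S : Sys V) (a : V) (p : ℕ → V) (n : ℕ) : Prop where
  start : p 0 = a
  last : p n ∈ S.B
  edge : ∀ k < n, S.E (p k) (p (k + 1))
  notB : ∀ k < n, p k ∉ S.B
  memU : ∀ k ≤ n, p k ∈ S.U
  notA : ∀ k < n, p (k + 1) ∉ S.A
  inj : Set.InjOn p (Set.Iic n)
  unh : ¬ (S.del (p '' Set.Iic n)).Hind

/-- In an unhindered system every source can be linked to `B` by a path whose removal leaves an
unhindered system. -/
theorem safe_path (hS : ¬ S.Hind) (ha : a ∈ S.A) (haU : a ∈ S.U) : ∃ p n, SafePath S a p n := by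
  classical
  obtain ⟨Z, f, hadm, hmax⟩ := Adm.exists_max (a := a) (del_source_unh hS ha)
  set S0 := S.del {a} with hS0
  set N := (S0.src Z).nb (S0.XZ Z) with hN
  set Q := {v | Relation.ReflTransGen (S0.qstep Z f) a v} with hQ
  have haQ : a ∈ Q := .refl
  have hZQ : Z ⊆ Q := hadm.reach
  have stepQ : ∀ w ∈ N, f w ∈ Q → w ∈ Q := by
    intro w hw hfw
    by_cases e : w = f w
    · rwa [e]
    · exact Relation.ReflTransGen.tail hfw (Or.inr ⟨hw, rfl, e⟩)
  have tgt : ∀ u w, S0.qstep Z f u w → w ∈ S.U ∧ w ∉ S.A ∧ S.E u w := by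
    rintro u w (⟨h1, h2⟩ | ⟨h1, h2, h3⟩)
    · exact ⟨(hadm.sub h1).1.1, (hadm.sub h1).2, h2⟩
    · refine ⟨h1.1.1, fun h => h1.2.1 (Or.inl h), ?_⟩
      rcases hadm.wf.edge w h1 with h | h
      · exact absurd (h2 ▸ h.symm) h3
      · exact h2 ▸ h
  have hNa : ∀ w ∈ N, f w ≠ a := fun w hw e => (hadm.wf.subU (hadm.wf.maps w hw)).2 e
  have hQB : ∃ b ∈ Q, b ∈ S.B := by
    by_contra hc
    push Not at hc
    let φ : V → V := fun w => if w ∈ Q then w else f w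
    have φ1 : ∀ w ∈ Q, φ w = w := fun w hw => if_pos hw
    have φ2 : ∀ w, w ∉ Q → φ w = f w := fun w hw => if_neg hw
    have hnb : ∀ w ∈ S.nb (S0.XZ Z ∪ Q), w ∉ Q → w ∈ N := by
      intro w hw hwQ
      have hwa : w ≠ a := fun e => hwQ (e ▸ haQ)
      have hwZ : w ∉ Z := fun e => hwQ (hZQ e)
      rcases mem_nb_union.1 hw with h | h
      · exact ⟨⟨h.1, hwa⟩, fun h' => h'.elim h.2.1 hwZ, h.2.2⟩
      · obtain ⟨p, hp, hpw⟩ := mem_nb_iff_singleton.1 h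
        rcases (mem_nb_singleton.1 hpw).2.2 with e | e
        · exact absurd (e ▸ hp) hwQ
        · exact (hmax p hp w e ⟨hw.1, hwa⟩ hw.2.1).resolve_left hwZ
    have QU : Q ⊆ S.U := by
      intro v hv
      rcases Relation.ReflTransGen.cases_tail hv with e | ⟨c, -, hc⟩
      · exact e ▸ haU
      · exact (tgt _ _ hc).1
    refine hS (Hind.of (X := S0.XZ Z ∪ Q) (f := φ) (l := a) ⟨?_, ?_, ?_, ?_, ?_, ?_⟩ (Or.inr haQ) ?_)
    · exact Set.union_subset (fun x hx => (hadm.wf.subU hx).1) QU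
    · rintro x (hx | hx)
      · exact hadm.wf.notB x hx
      · exact hc x hx
    · intro w hw
      by_cases h : w ∈ Q
      · rw [φ1 w h]; exact Or.inr h
      · rw [φ2 w h]; exact Or.inl (hadm.wf.maps w (hnb w hw h))
    · intro w hw
      by_cases h : w ∈ Q
      · exact Or.inl (φ1 w h)
      · rw [φ2 w h]; exact hadm.wf.edge w (hnb w hw h)
    · intro w hw w' hw' e
      by_cases h : w ∈ Q <;> by_cases h' : w' ∈ Q
      · rwa [φ1 w h, φ1 w' h'] at e
      · rw [φ1 w h, φ2 w' h'] at e
        exact absurd (stepQ w' (hnb w' hw' h') (e ▸ h)) h'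
      · rw [φ2 w h, φ1 w' h'] at e
        exact absurd (stepQ w (hnb w hw h) (e ▸ h')) h
      · rw [φ2 w h, φ2 w' h'] at e
        exact hadm.wf.inj (hnb w hw h) (hnb w' hw' h') e
    · intro w hw hb
      have notQ : ∀ n, φ^[n] w ∉ Q := fun n hn => (hb.tail n).ne_self (φ1 _ hn)
      have hit : ∀ n, f^[n] w = φ^[n] w := iterate_congr_along fun n => (φ2 _ (notQ n)).symm
      have hb' : Bad f S.A w := hb.congr_along fun n => (φ2 _ (notQ n)).symm
      refine hadm.wf.fin w (hnb w hw (notQ 0)) (hb'.sets fun n => ?_)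
      rintro (h | h)
      · exact hb'.1 n h
      · rw [hit] at h
        exact notQ n (hZQ h)
    · intro w hw
      by_cases h : w ∈ Q
      · rw [φ1 w h]
        rintro rfl
        exact hw.2.1 ha
      · rw [φ2 w h]; exact hNa w (hnb w hw h)
  obtain ⟨b, hbQ, hbB⟩ := hQB
  obtain ⟨p, n, h0, hn, hr, hnB, hinj⟩ := exists_path hbQ hbB
  refine ⟨p, n, h0, hn, fun k hk => (tgt _ _ (hr k hk)).2.2, hnB, ?_, fun k hk => (tgt _ _ (hr k hk)).2.1,
    hinj, ?_⟩
  · rintro (_ | k) hk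
    · rw [h0]; exact haU
    · exact (tgt _ _ (hr k hk)).1
  rintro ⟨X1, f1, l, h1, hl, hmiss⟩
  set P := p '' Set.Iic n with hP
  have haP : a ∈ P := ⟨0, Nat.zero_le n, h0⟩
  let vs : Finset V := (Finset.range n).image fun k => p (k + 1)
  obtain ⟨F1, g, hF1, hg, hE1, he1⟩ := hadm.lf (vs.filter (· ∈ N)) fun v hv => (Finset.mem_filter.1 hv).2
  let F : Finset V := F1 ∪ vs.filter (· ∈ Z)
  have hF : ↑F ⊆ Z := by
    intro v hv
    rcases Finset.mem_union.1 hv with h | h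
    · exact hF1 h
    · exact (Finset.mem_filter.1 h).2
  have hF1F : (F1 : Set V) ⊆ F := fun v hv => Finset.mem_union_left _ hv
  have hgF : (S0.src F).Wf (S0.src F1).maxX g := FG.wf_src hF1F hg
  set X' := (S0.src F1).maxX with hX'
  have nbF : (S0.src F).nb X' = (S0.src F1).nb X' := (hadm.fg.mono hF).nb_eq hF1F hg
  -- vertices of the path other than the chosen sources are handled by `g` within the path
  have onP : ∀ w ∈ P, w ∈ S0.U → w ∉ F → w ∈ (S0.src F).nb X' ∧ g w ∈ P := by
    rintro w ⟨k, hk, rfl⟩ hwU hwF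
    rcases k with _ | k
    · exact absurd h0 hwU.2
    · have hk : k < n := hk
      have hvs : p (k + 1) ∈ vs := Finset.mem_image.2 ⟨k, Finset.mem_range.2 hk, rfl⟩
      have hZ : p (k + 1) ∉ Z := fun h =>
        hwF (Finset.mem_union_right _ (Finset.mem_filter.2 ⟨hvs, h⟩))
      rcases hr k hk with h | ⟨h, h', -⟩
      · exact absurd h.1 hZ
      · have hE : p (k + 1) ∈ vs.filter (· ∈ N) := Finset.mem_filter.2 ⟨hvs, h⟩
        refine ⟨nbF ▸ hE1 hE, ?_⟩
        rw [he1 _ hE, h']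
        exact ⟨k, hk.le, rfl⟩
  set N1 := (S.del P).nb X1 with hN1
  have hX1P : ∀ x ∈ X1, x ∉ P := fun x hx => (h1.subU hx).2
  have cross : ∀ w ∈ (S0.src F).nb X1, w ∉ N1 → w ∈ (S0.src F).nb X' ∧ g w ∈ P := by
    intro w hw hw1
    refine onP w ?_ hw.1 fun h => hw.2.1 (Or.inr h)
    by_contra hwP
    exact hw1 ⟨⟨hw.1.1, hwP⟩, fun h => hw.2.1 (Or.inl h), hw.2.2⟩
  let φ : V → V := fun w => if w ∈ N1 then f1 w else g w
  have φ1 : ∀ w ∈ N1, φ w = f1 w := fun w hw => if_pos hw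
  have φ2 : ∀ w, w ∉ N1 → φ w = g w := fun w hw => if_neg hw
  have hnb : ∀ w ∈ (S0.src F).nb (X1 ∪ X'), w ∉ N1 → w ∈ (S0.src F).nb X' := by
    intro w hw hw1
    rcases mem_nb_union.1 hw with h | h
    · exact (cross w h hw1).1
    · exact h
  have gX1 : ∀ w ∈ (S0.src F).nb (X1 ∪ X'), w ∉ N1 → g w ∉ X1 := by
    intro w hw hw1 hgw
    exact hX1P _ hgw (cross w (hgF.mem_nb_of_eq (hnb w hw hw1) hgw) hw1).2
  have maps : ∀ w ∈ (S0.src F).nb (X1 ∪ X'), φ w ∈ X1 ∪ X' := by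
    intro w hw
    by_cases h : w ∈ N1
    · rw [φ1 w h]; exact Or.inl (h1.maps w h)
    · rw [φ2 w h]; exact Or.inr (hgF.maps w (hnb w hw h))
  refine hadm.fg F hF (Hind.of (X := X1 ∪ X') (f := φ) (l := l) ⟨?_, ?_, maps, ?_, ?_, ?_⟩ (Or.inl hl) ?_)
  · refine Set.union_subset (fun x hx => ⟨(h1.subU hx).1, fun e => (h1.subU hx).2 (e ▸ haP)⟩) hgF.subU
  · rintro x (hx | hx)
    · exact h1.notB x hx
    · exact hgF.notB x hx
  · intro w hw
    by_cases h : w ∈ N1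
    · rw [φ1 w h]; exact h1.edge w h
    · rw [φ2 w h]; exact hgF.edge w (hnb w hw h)
  · intro w hw w' hw' e
    by_cases h : w ∈ N1 <;> by_cases h' : w' ∈ N1
    · rw [φ1 w h, φ1 w' h'] at e
      exact h1.inj h h' e
    · rw [φ1 w h, φ2 w' h'] at e
      exact absurd (e ▸ h1.maps w h) (gX1 w' hw' h')
    · rw [φ2 w h, φ1 w' h'] at e
      exact absurd (e ▸ h1.maps w' h') (gX1 w hw h)
    · rw [φ2 w h, φ2 w' h'] at e
      exact hgF.inj (hnb w hw h) (hnb w' hw' h') e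
  · intro w hw hb
    have mem := hb.iter_mem hw fun v hv hA =>
      (⟨by
          rcases maps v hv with h | h
          · exact ⟨(h1.subU h).1, fun e => (h1.subU h).2 (e ▸ haP)⟩
          · exact hgF.subU h, hA, Or.inl (maps v hv)⟩ : φ v ∈ (S0.src F).nb (X1 ∪ X'))
    rcases orbit_absorb N1 (fun k hk => by
      have hA := hb.1 (k + 1)
      rw [Function.iterate_succ_apply'] at hA ⊢
      rw [φ1 _ hk] at hA ⊢
      exact h1.step_nb hk fun h => hA (Or.inl h)) with ⟨k, hk⟩ | hk
    · refine h1.fin _ (hk k le_rfl) (Bad.sets (hb.congr_tail k fun m hm => (φ1 _ (hk m hm)).symm) ?_)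
      intro m hm
      have hb2 : Bad f1 (S0.src F).A (φ^[k] w) := hb.congr_tail k fun m hm => (φ1 _ (hk m hm)).symm
      exact hb2.1 m (Or.inl hm)
    · exact hgF.fin w (hnb w hw (hk 0)) (hb.congr_along fun m => (φ2 _ (hk m)).symm)
  · intro w hw e
    by_cases h : w ∈ N1
    · rw [φ1 w h] at e; exact hmiss w h e
    · rw [φ2 w h] at e
      exact gX1 w hw h (e ▸ hl)

end SafePath

end Sys

/-! ### Index types, selections and closed indices -/

/-- `I` is a well-order of regular type `κ`: proper initial segments have fewer than `κ` elements,
and sets with fewer than `κ` elements are strictly bounded. -/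
structure RegIdx (κ : Cardinal.{u}) (I : Type u) [LinearOrder I] : Prop where
  card : #I = κ
  seg : ∀ i : I, #(Set.Iic i) < κ
  bdd : ∀ T : Set I, #T < κ → ∃ i, ∀ t ∈ T, t < i

theorem exists_regIdx (κ : Cardinal.{u}) (hκ : κ.IsRegular) (hκ' : ℵ₀ < κ) :
    ∃ (I : Type u) (_ : LinearOrder I) (_ : WellFoundedLT I), RegIdx κ I := by
  have seg : ∀ i : κ.ord.ToType, #(Set.Iic i) < κ := by
    intro i
    have h1 : #(Set.Iio i) < κ := by
      simpa using Cardinal.mk_Iio_lt i (by simp)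
    have : Set.Iic i = insert i (Set.Iio i) := by
      ext x; simp [le_iff_eq_or_lt]
    rw [this]
    exact (mk_insert_le).trans_lt (add_lt_of_lt hκ'.le h1 (one_lt_aleph0.trans hκ'))
  refine ⟨κ.ord.ToType, inferInstance, inferInstance, ?_, seg, ?_⟩
  · rw [mk_toType, card_ord]
  · intro T hT
    by_contra hc
    push Not at hc
    have hcov : (Set.univ : Set κ.ord.ToType) = ⋃ t ∈ T, Set.Iic t := by
      ext i
      obtain ⟨t, ht, h⟩ := hc i
      simp only [Set.mem_univ, Set.mem_iUnion, true_iff]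
      exact ⟨t, ht, h⟩
    have h2 : #(⋃ t ∈ T, Set.Iic t) < κ :=
      (card_biUnion_lt_iff_forall_of_isRegular hκ hT).2 fun t _ => seg t
    rw [← hcov, mk_univ, mk_toType, card_ord] at h2
    exact lt_irrefl _ h2

/-- At most `ν` sets of size at least `ν` have an injective choice function. -/
theorem exists_selection {T α : Type u} {ν : Cardinal.{u}} (hT : #T ≤ ν) (Q : T → Set α)
    (hQ : ∀ t, ν ≤ #(Q t)) : ∃ e : T → α, Function.Injective e ∧ ∀ t, e t ∈ Q t := by
  classical
  obtain ⟨r, wo, hr⟩ := Cardinal.exists_ord_eq T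
  have key : ∀ t (rec : ∀ s, r s t → α), ∃ a ∈ Q t, ∀ s (h : r s t), rec s h ≠ a := by
    intro t rec
    by_contra hc
    push Not at hc
    have hsub : Q t ⊆ Set.range fun s : {s // r s t} => rec s.1 s.2 := by
      intro a ha
      obtain ⟨s, h, e⟩ := hc a ha
      exact ⟨⟨s, h⟩, e⟩
    have h1 : #(Q t) ≤ #{s // r s t} := (mk_le_mk_of_subset hsub).trans mk_range_le
    have h2 : #{s // r s t} < #T := by
      have := Cardinal.card_typein_lt t hr
      rwa [Ordinal.card_typein] at this
    exact absurd ((hQ t).trans h1) (not_le.2 (h2.trans_le hT))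
  let F : ∀ t, (∀ s, r s t → α) → α := fun t rec => (key t rec).choose
  have hF : ∀ t rec, F t rec ∈ Q t ∧ ∀ s (h : r s t), rec s h ≠ F t rec := fun t rec =>
    (key t rec).choose_spec
  let e : T → α := wo.toIsWellFounded.wf.fix F
  have he : ∀ t, e t = F t fun s _ => e s := fun t => wo.toIsWellFounded.wf.fix_eq F t
  refine ⟨e, fun s t hst => ?_, fun t => he t ▸ (hF t _).1⟩
  rcases trichotomous_of r s t with h | h | h
  · exact absurd (hst.trans (he t)) ((hF t fun s _ => e s).2 s h)
  · exact h
  · exact absurd (hst.symm.trans (he s)) ((hF s fun s _ => e s).2 t h)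

section Stages
variable {V I : Type u} [LinearOrder I]

/-- The union of the stages before `i`. -/
def Mst (St : I → Set V) (i : I) : Set V := ⋃ j, ⋃ (_ : j < i), St j

theorem mem_Mst {St : I → Set V} {i : I} {v : V} : v ∈ Mst St i ↔ ∃ j < i, v ∈ St j := by
  simp [Mst]

theorem Mst_mono {St : I → Set V} {i j : I} (h : i ≤ j) : Mst St i ⊆ Mst St j := fun v hv => by
  obtain ⟨k, hk, hv⟩ := mem_Mst.1 hv
  exact mem_Mst.2 ⟨k, hk.trans_le h, hv⟩

theorem St_subset_Mst {St : I → Set V} {i j : I} (h : i < j) : St i ⊆ Mst St j := fun _ hv =>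
  mem_Mst.2 ⟨i, h, hv⟩

/-- Recursive construction of stages, the stage `j` depending on the unions of stages before the
indices `β ≤ j`. -/
theorem exists_stages [WellFoundedLT I] (Φ : ∀ j : I, (Set.Iic j → Set V) → Set V) :
    ∃ St : I → Set V, ∀ j, St j = Φ j fun β => Mst St β := by
  let F : ∀ j : I, (∀ i, i < j → Set V) → Set V := fun j rec =>
    Φ j fun β => ⋃ i, ⋃ (h : i < β.1), rec i (h.trans_le β.2)
  exact ⟨wellFounded_lt.fix F, fun j => wellFounded_lt.fix_eq F j⟩

/-- The index `i` is closed under the finitary operation `h` on the vertices of earlier stages. -/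
def HC (M : I → Set V) (h : List V → I) (i : I) : Prop := ∀ l : List V, (∀ x ∈ l, x ∈ M i) → h l < i

theorem HC.nil {M : I → Set V} {h : List V → I} {i : I} (hi : HC M h i) : h [] < i :=
  hi [] (by simp)

theorem HC.max {M : I → Set V} {h h' : List V → I} {i : I} :
    HC M (fun l => max (h l) (h' l)) i ↔ HC M h i ∧ HC M h' i := by
  simp only [HC, max_lt_iff]
  exact ⟨fun H => ⟨fun l hl => (H l hl).1, fun l hl => (H l hl).2⟩, fun H l hl =>
    ⟨H.1 l hl, H.2 l hl⟩⟩

theorem list_mem_Mst {St : I → Set V} {i : I} {l : List V} {P : I → Prop}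
    (hi : ∃ k < i, P k) (hP : ∀ j < i, ∃ k, j < k ∧ k < i ∧ P k)
    (hl : ∀ x ∈ l, x ∈ Mst St i) : ∃ k < i, P k ∧ ∀ x ∈ l, x ∈ Mst St k := by
  induction l with
  | nil => obtain ⟨k, hk, h⟩ := hi; exact ⟨k, hk, h, by simp⟩
  | cons a l ih =>
    obtain ⟨k, hk, hPk, h⟩ := ih fun x hx => hl x (List.mem_cons_of_mem _ hx)
    obtain ⟨j, hj, ha⟩ := mem_Mst.1 (hl a List.mem_cons_self)
    obtain ⟨k', h1, h2, h3⟩ := hP (Max.max j k) (max_lt hj hk)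
    refine ⟨k', h2, h3, fun x hx => ?_⟩
    rcases List.mem_cons.1 hx with rfl | hx
    · exact mem_Mst.2 ⟨j, (le_max_left _ _).trans_lt h1, ha⟩
    · exact Mst_mono ((le_max_right _ _).trans h1.le) (h x hx)

/-- A limit of closed indices is closed, since a list has finitely many entries. -/
theorem HC.sup {St : I → Set V} {h : List V → I} {i : I} (hi : ∃ k < i, HC (Mst St) h k)
    (hP : ∀ j < i, ∃ k, j < k ∧ k < i ∧ HC (Mst St) h k) : HC (Mst St) h i := by
  intro l hl
  obtain ⟨k, hk, hk', hl⟩ := list_mem_Mst hi hP hl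
  exact (hk' l hl).trans hk

variable {κ : Cardinal.{u}}

theorem Mst_card (hκ : κ.IsRegular) (hI : RegIdx κ I) {St : I → Set V} (hSt : ∀ i, #(St i) < κ)
    (i : I) : #(Mst St i) < κ := by
  have : Mst St i = ⋃ j ∈ Set.Iio i, St j := rfl
  rw [this, card_biUnion_lt_iff_forall_of_isRegular hκ]
  · exact fun j _ => hSt j
  · exact (mk_le_mk_of_subset Set.Iio_subset_Iic_self).trans_lt (hI.seg i)

/-- Closed indices are unbounded: close under the operation `ω` times. -/
theorem HC.unbounded [WellFoundedLT I] (hκ : κ.IsRegular) (hκ' : ℵ₀ < κ) (hI : RegIdx κ I) {St : I → Set V}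
    (hSt : ∀ i, #(St i) < κ) (h : List V → I) (i0 : I) : ∃ i, i0 < i ∧ HC (Mst St) h i := by
  have step : ∀ i, ∃ i', i < i' ∧ ∀ l : List V, (∀ x ∈ l, x ∈ Mst St i) → h l < i' := by
    intro i
    let L : Set (List V) := {l | ∀ x ∈ l, x ∈ Mst St i}
    have hL : #L < κ := by
      have h1 : #L ≤ #(List (Mst St i)) := by
        refine mk_le_of_surjective (f := fun l : List (Mst St i) =>
          (⟨l.map Subtype.val, by
            intro x hx
            obtain ⟨y, -, rfl⟩ := List.mem_map.1 hx
            exact y.2⟩ : L)) ?_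
        rintro ⟨l, hl⟩
        exact ⟨l.attach.map fun x => ⟨x.1, hl x.1 x.2⟩, by simp⟩
      exact (h1.trans (mk_list_le_max _)).trans_lt (max_lt hκ' (Mst_card hκ hI hSt i))
    obtain ⟨i', hi'⟩ := hI.bdd (insert i (h '' L))
      ((mk_insert_le).trans_lt (add_lt_of_lt hκ'.le (mk_image_le.trans_lt hL)
        (one_lt_aleph0.trans hκ')))
    exact ⟨i', hi' _ (Set.mem_insert _ _), fun l hl =>
      hi' _ (Set.mem_insert_of_mem _ (Set.mem_image_of_mem h hl))⟩
  choose nx hnx1 hnx2 using step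
  let s : ℕ → I := fun n => nx^[n] i0
  have hs : ∀ n, s (n + 1) = nx (s n) := fun n => Function.iterate_succ_apply' _ _ _
  have hs1 : ∀ n, s n < s (n + 1) := fun n => hs n ▸ hnx1 _
  have : ∃ i, ∀ n, s n < i := by
    obtain ⟨i, hi⟩ := hI.bdd (Set.range s) ((Set.countable_range s).le_aleph0.trans_lt hκ')
    exact ⟨i, fun n => hi _ ⟨n, rfl⟩⟩
  obtain ⟨i, hi, hmin⟩ := exists_least this
  refine ⟨i, hi 0, fun l hl => ?_⟩
  obtain ⟨k, -, ⟨n, rfl⟩, hl⟩ := list_mem_Mst (P := fun k => ∃ n, s n = k) ⟨_, hi 0, 0, rfl⟩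
    (fun j hj => by
      have := hmin j hj
      push Not at this
      obtain ⟨n, hn⟩ := this
      exact ⟨_, hn.trans_lt (hs1 n), hi _, n + 1, rfl⟩) hl
  exact (hnx2 _ l hl).trans (hs n ▸ hi (n + 1))

theorem card_of_unbounded (hI : RegIdx κ I) {Q : Set I} (hQ : ∀ i, ∃ q ∈ Q, i < q) : κ ≤ #Q := by
  by_contra hc
  obtain ⟨i, hi⟩ := hI.bdd Q (not_le.1 hc)
  obtain ⟨q, hq, h⟩ := hQ i
  exact lt_asymm h (hi q hq)

end Stages

/-! ### Ladders -/

namespace Sys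
variable {V : Type u}

/-- The set of the maximal waveform after deletion of `D`. -/
def LX (S : Sys V) (D : Set V) : Set V := (S.del D).maxX

/-- The domain of the maximal waveform after deletion of `D`. -/
def LN (S : Sys V) (D : Set V) : Set V := (S.del D).nb (S.LX D)

/-- A maximal waveform after deletion of `D`. -/
noncomputable def Lf (S : Sys V) (D : Set V) : V → V := (S.del D).maxF

open Classical in
/-- Combination of the maximal waveforms after deletion of the sets `M β`: each vertex uses the
first one that applies to it. -/
noncomputable def lad (S : Sys V) {ι : Type u} [LinearOrder ι] [WellFoundedLT ι] (M : ι → Set V)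
    (w : V) : V :=
  if h : ∃ β, w ∈ S.LN (M β) then S.Lf (M (exists_least h).choose) w else w

/-- The system in which the safe path from `s` is taken, at the stage with deleted set `D`. -/
def osys (S : Sys V) (D : Set V) (s : V) : Sys V := ((S.del D).quo (S.LX D)).src {s}

/-- A safe path from `s`, at the stage with deleted set `D`, and the index of its last vertex. -/
noncomputable def opath (S : Sys V) (D : Set V) (s : V) : (ℕ → V) × ℕ :=
  open Classical in
  if h : ∃ q : (ℕ → V) × ℕ, SafePath (S.osys D s) s q.1 q.2 then h.choose else (fun _ => s, 0)

/-- The vertices of the chosen safe path. -/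
noncomputable def oset (S : Sys V) (D : Set V) (s : V) : Set V :=
  (S.opath D s).1 '' Set.Iic (S.opath D s).2

/-- `w` is an out-neighbour of `z` which is neither deleted nor covered by the maximal
waveform. -/
def Esc (S : Sys V) (D : Set V) (z w : V) : Prop := w ∈ S.nb {z} ∧ w ∉ D ∧ w ∉ S.LN D

/-- There is an alternating walk with respect to `f` which starts at `z`, uses vertices of `K`
only and ends outside `D` at an in-neighbour of `y` or at `y` itself. For `z ∈ D` such a walk is
nontrivial. -/
def Virt (S : Sys V) (f : V → V) (D K : Set V) (z y : V) : Prop :=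
  ∃ m, Rch S f K z m ∧ m ∉ D ∧ y ∈ S.nb {m}

/-- Waveform data witnessing that the system is hindered after deletion of `D`, most of which is
inside `T`. -/
structure HData (S : Sys V) (f : V → V) (D T : Set V) (g : V → V) (l : V) : Prop where
  wf : (S.del D).Wf (S.LX D) g
  memX : l ∈ S.LX D
  memT : l ∈ T
  miss : ∀ w ∈ S.LN D, g w ≠ l
  diff : ∀ w ∈ S.LN D, g w ≠ f w → w ∈ T
  closed : ∀ w ∈ S.LN D, w ∈ T → g w ∈ T
  near : ∀ c ∈ D, c ∈ S.nb {m | Rch (S.del D) g Set.univ l m} →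
    ∃ m, Rch (S.del D) g T l m ∧ c ∈ S.nb {m}

/-- The requirements on the stage `T` of a ladder at a place where the previously deleted sets
are the `M β`, the last one being `M t`. -/
structure Rung (S : Sys V) (κ : Cardinal.{u}) {ι : Type u} [LinearOrder ι] [WellFoundedLT ι]
    (M : ι → Set V) (t : ι) (C T : Set V) : Prop where
  subU : T ⊆ S.U
  card : #T < κ
  ext : M t ⊆ T
  seed : C ⊆ T
  closed : ∀ β, ∀ w ∈ S.LN (M β), (w ∈ T ↔ S.Lf (M β) w ∈ T)
  path : ∀ β, ∀ s ∈ T, s ∉ M β → s ∉ S.LX (M β) → S.oset (M β) s ⊆ T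
  hind : (S.del (M t)).Hind → (S.del (M t)).Wf (S.LX (M t)) (S.lad M) →
    ∃ g l, HData S (S.lad M) (M t) T g l
  virt : ∀ z ∈ M t, ∀ y ∈ M t, Virt S (S.lad M) (M t) (S.LN (M t)) z y →
    Virt S (S.lad M) (M t) (S.LN (M t) ∩ T) z y
  esc : ∀ z ∈ M t, (∃ w, S.Esc (M t) z w) → ∃ w ∈ T, S.Esc (M t) z w

section Basic
variable {S : Sys V} {D : Set V} {s w : V}

theorem Lf_wf (S : Sys V) (D : Set V) : (S.del D).Wf (S.LX D) (S.Lf D) := maxF_wf _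

theorem mem_nb_del {X : Set V} : w ∈ (S.del D).nb X ↔ w ∈ S.nb X ∧ w ∉ D := by
  simp only [mem_nb, del, Set.mem_sdiff]; tauto

theorem LN_sub (h : w ∈ S.LN D) : w ∈ S.U ∧ w ∉ D ∧ w ∉ S.A := ⟨h.1.1, h.1.2, h.2.1⟩

theorem LX_sub (h : w ∈ S.LX D) : w ∈ S.U ∧ w ∉ D ∧ w ∉ S.B :=
  ⟨((Lf_wf S D).subU h).1, ((Lf_wf S D).subU h).2, (Lf_wf S D).notB w h⟩

theorem lad_eq {ι : Type u} [LinearOrder ι] [WellFoundedLT ι] {M : ι → Set V} {β : ι}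
    (h : w ∈ S.LN (M β)) (hm : ∀ β' < β, w ∉ S.LN (M β')) : S.lad M w = S.Lf (M β) w := by
  have hv' : ∃ β, w ∈ S.LN (M β) := ⟨β, h⟩
  have hs := (exists_least hv').choose_spec
  have : (exists_least hv').choose = β :=
    le_antisymm (not_lt.1 fun hlt => hs.2 _ hlt h) (not_lt.1 fun hlt => hm _ hlt hs.1)
  simp only [lad, dif_pos hv', this]

theorem opath_spec (hs : s ∈ S.U) (hD : s ∉ D) (hX : s ∉ S.LX D) :
    SafePath (S.osys D s) s (S.opath D s).1 (S.opath D s).2 := by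
  have hS : ¬ (S.osys D s).Hind := quo_src_unh _ s
  obtain ⟨p, n, h⟩ := safe_path (a := s) hS (Or.inr rfl) ⟨⟨hs, hD⟩, hX⟩
  have h' : ∃ q : (ℕ → V) × ℕ, SafePath (S.osys D s) s q.1 q.2 := ⟨(p, n), h⟩
  have := h'.choose_spec
  simpa only [opath, dif_pos h'] using this

theorem oset_finite (S : Sys V) (D : Set V) (s : V) : (S.oset D s).Finite :=
  (Set.finite_Iic _).image _

theorem oset_sub (hs : s ∈ S.U) (hD : s ∉ D) (hX : s ∉ S.LX D) : S.oset D s ⊆ S.U := by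
  rintro _ ⟨k, hk, rfl⟩
  exact ((opath_spec hs hD hX).memU k hk).1.1

theorem Rch.finite {f : V → V} {K : Set V} {l m : V} (h : Rch S f K l m) :
    ∃ W ⊆ K, W.Finite ∧ Rch S f W l m := by
  induction h with
  | base => exact ⟨∅, Set.empty_subset _, Set.finite_empty, .base⟩
  | @step x w _ h1 h2 ih =>
    obtain ⟨W, h3, h4, h5⟩ := ih
    exact ⟨insert w W, Set.insert_subset h2 h3, h4.insert _,
      (h5.mono (Set.subset_insert _ _)).step h1 (Set.mem_insert _ _)⟩

end Basic

theorem Rch.inU {S : Sys V} {f : V → V} {K : Set V} {l m : V} (h : Rch S f K l m) :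
    Rch S f (K ∩ S.U) l m := by
  induction h with
  | base => exact .base
  | step _ h1 h2 ih => exact ih.step h1 ⟨h2, h1.1⟩

/-- There is a small set `C` and a map `g` such that every set containing `C` and closed under `g`
contains the data of a hindrance. By `mix`, a hindrance may be taken to agree with `f` outside a
countable set. -/
theorem exists_hdata (S : Sys V) {κ : Cardinal.{u}} (hκ : κ.IsRegular) (hκ' : ℵ₀ < κ)
    {D : Set V} (hDc : #D < κ) (f : V → V) :
    ∃ (C : Set V) (g : V → V), C ⊆ S.U ∧ #C < κ ∧ (∀ w ∈ S.LN D, g w ∈ S.U) ∧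
    ∀ T, C ⊆ T → (∀ w ∈ S.LN D, w ∈ T → g w ∈ T) → (S.del D).Hind →
      (S.del D).Wf (S.LX D) f → ∃ g l, HData S f D T g l := by
  classical
  by_cases hc : (S.del D).Hind ∧ (S.del D).Wf (S.LX D) f
  swap
  · exact ⟨∅, id, Set.empty_subset _, by simpa using hκ.pos, fun w hw => hw.1.1,
      fun T _ _ h1 h2 => absurd ⟨h1, h2⟩ hc⟩
  obtain ⟨g, l, hg, hl, hmiss, hcount⟩ := mix hc.1 hc.2
  let R := {m | Rch (S.del D) g Set.univ l m}
  have hW : ∀ c : D, ∃ W ⊆ S.U, W.Finite ∧ (c.1 ∈ S.nb R →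
      ∃ m, Rch (S.del D) g W l m ∧ c.1 ∈ S.nb {m}) := by
    intro c
    by_cases h : c.1 ∈ S.nb R
    · obtain ⟨m, hm, hcm⟩ := mem_nb_iff_singleton.1 h
      obtain ⟨W, h1, h2, h3⟩ := (Rch.inU hm).finite
      exact ⟨W, fun w hw => (h1 hw).2.1, h2, fun _ => ⟨m, h3, hcm⟩⟩
    · exact ⟨∅, Set.empty_subset _, Set.finite_empty, fun h' => absurd h' h⟩
  choose W hWU hWfin hW using hW
  let C : Set V := ({l} ∪ {w | g w ≠ f w} ∩ S.U) ∪ ⋃ c, W c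
  refine ⟨C, g, ?_, ?_, fun w hw => (LX_sub (hg.maps w hw)).1, ?_⟩
  · refine Set.union_subset (Set.union_subset ?_ Set.inter_subset_right) (Set.iUnion_subset hWU)
    rintro _ rfl
    exact (LX_sub hl).1
  · have h1 : #(({l} ∪ {w | g w ≠ f w} ∩ S.U : Set V)) < κ :=
      ((Set.countable_singleton l).union (hcount.mono Set.inter_subset_left)).le_aleph0.trans_lt hκ'
    have h2 : #(⋃ c, W c) < κ := (card_iUnion_lt_iff_forall_of_isRegular hκ hDc).2 fun c =>
      (hWfin c).lt_aleph0.trans hκ'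
    exact (mk_union_le _ _).trans_lt (add_lt_of_lt hκ'.le h1 h2)
  · intro T hT hcl _ _
    refine ⟨g, l, hg, hl, hT (Or.inl (Or.inl rfl)), hmiss,
      fun w hw h => hT (Or.inl (Or.inr ⟨h, hw.1.1⟩)), hcl, fun c hc' hcn => ?_⟩
    obtain ⟨m, h1, h2⟩ := hW ⟨c, hc'⟩ hcn
    exact ⟨m, h1.mono ((Set.subset_iUnion W _).trans (Set.subset_union_right.trans hT)), h2⟩

/-- A small set suffices to realize the alternating walks between vertices of `D` and the escapes
from them. -/
theorem exists_virt_seed (S : Sys V) {κ : Cardinal.{u}} (hκ : κ.IsRegular) (hκ' : ℵ₀ < κ)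
    {D : Set V} (hDc : #D < κ) (f : V → V) :
    ∃ C : Set V, C ⊆ S.U ∧ #C < κ ∧ ∀ T, C ⊆ T →
    (∀ z ∈ D, ∀ y ∈ D, Virt S f D (S.LN D) z y → Virt S f D (S.LN D ∩ T) z y) ∧
    (∀ z ∈ D, (∃ w, S.Esc D z w) → ∃ w ∈ T, S.Esc D z w) := by
  have hW : ∀ c : D × D, ∃ W ⊆ S.U, W.Finite ∧ (Virt S f D (S.LN D) c.1 c.2 →
      Virt S f D (S.LN D ∩ W) c.1 c.2) := by
    intro c
    by_cases h : Virt S f D (S.LN D) c.1 c.2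
    · obtain ⟨m, hm, h'⟩ := h
      obtain ⟨W, h1, h2, h3⟩ := hm.finite
      exact ⟨W, fun w hw => (h1 hw).1.1, h2, fun _ => ⟨m, h3.mono fun w hw => ⟨h1 hw, hw⟩, h'⟩⟩
    · exact ⟨∅, Set.empty_subset _, Set.finite_empty, fun h' => absurd h' h⟩
  choose W hWU hWfin hW using hW
  have hY : ∀ z : D, ∃ Y ⊆ S.U, Y.Finite ∧ ((∃ w, S.Esc D z w) → ∃ w ∈ Y, S.Esc D z w) := by
    intro z
    by_cases h : ∃ w, S.Esc D z w
    · obtain ⟨w, hw⟩ := h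
      exact ⟨{w}, by rintro _ rfl; exact hw.1.1, Set.finite_singleton w, fun _ => ⟨w, rfl, hw⟩⟩
    · exact ⟨∅, Set.empty_subset _, Set.finite_empty, fun h' => absurd h' h⟩
  choose Y hYU hYfin hY using hY
  refine ⟨(⋃ c, W c) ∪ ⋃ z, Y z, Set.union_subset (Set.iUnion_subset hWU) (Set.iUnion_subset hYU),
    ?_, fun T hT => ⟨fun z hz y hy h => ?_, fun z hz h => ?_⟩⟩
  · have h0 : #(D × D) < κ := by rw [mk_prod, lift_id]; exact mul_lt_of_lt hκ'.le hDc hDc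
    have h1 : #(⋃ c, W c) < κ := (card_iUnion_lt_iff_forall_of_isRegular hκ h0).2 fun c =>
      (hWfin c).lt_aleph0.trans hκ'
    have h2 : #(⋃ c, Y c) < κ := (card_iUnion_lt_iff_forall_of_isRegular hκ hDc).2 fun c =>
      (hYfin c).lt_aleph0.trans hκ'
    exact (mk_union_le _ _).trans_lt (add_lt_of_lt hκ'.le h1 h2)
  · obtain ⟨m, h1, h2⟩ := hW (⟨z, hz⟩, ⟨y, hy⟩) h
    exact ⟨m, h1.mono (Set.inter_subset_inter_right _
      ((Set.subset_iUnion W _).trans (Set.subset_union_left.trans hT))), h2⟩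
  · obtain ⟨w, h1, h2⟩ := hY ⟨z, hz⟩ h
    exact ⟨w, hT (Or.inr (Set.mem_iUnion.2 ⟨_, h1⟩)), h2⟩

/-- A rung is obtained by closing off a seed of size less than `κ` under operations which add fewer
than `κ` vertices for each vertex. -/
theorem exists_rung (S : Sys V) {κ : Cardinal.{u}} (hκ : κ.IsRegular) (hκ' : ℵ₀ < κ)
    {ι : Type u} [LinearOrder ι] [WellFoundedLT ι] (hι : #ι < κ) (M : ι → Set V) (t : ι)
    (hM : M t ⊆ S.U) (hMc : #(M t) < κ) (C : Set V) (hC : C ⊆ S.U) (hCc : #C < κ) :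
    ∃ T, Rung S κ M t C T := by
  obtain ⟨C1, g, hC1U, hC1c, hgU, hC1⟩ := exists_hdata S hκ hκ' hMc (S.lad M)
  obtain ⟨C2, hC2U, hC2c, hC2⟩ := exists_virt_seed S hκ hκ' hMc (S.lad M)
  let R : V → Set V := fun v => (⋃ β : ι, (({x | v ∈ S.LN (M β) ∧ x = S.Lf (M β) v} ∪
    {w | w ∈ S.LN (M β) ∧ S.Lf (M β) w = v}) ∪
    {x | v ∈ S.U ∧ v ∉ M β ∧ v ∉ S.LX (M β) ∧ x ∈ S.oset (M β) v})) ∪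
    {x | v ∈ S.LN (M t) ∧ x = g v}
  have hRc : ∀ v, #(R v) < κ := by
    intro v
    have h1 : #{x | v ∈ S.LN (M t) ∧ x = g v} < κ :=
      ((Set.countable_singleton (g v)).mono fun x hx => hx.2).le_aleph0.trans_lt hκ'
    refine (mk_union_le _ _).trans_lt (add_lt_of_lt hκ'.le ?_ h1)
    refine (card_iUnion_lt_iff_forall_of_isRegular hκ hι).2 fun β => ?_
    refine (Set.Countable.le_aleph0 ?_).trans_lt hκ'
    exact (((Set.countable_singleton (S.Lf (M β) v)).mono fun x hx => hx.2).union
      ((Lf_wf S (M β)).pre_subsingleton v).countable).union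
      ((oset_finite S (M β) v).countable.mono fun x hx => hx.2.2.2)
  have hRU : ∀ v ∈ S.U, R v ⊆ S.U := by
    rintro v hv x (hx | ⟨hx, rfl⟩)
    · obtain ⟨β, (⟨hx', rfl⟩ | hx) | hx⟩ := Set.mem_iUnion.1 hx
      · exact (LX_sub ((Lf_wf S (M β)).maps v hx')).1
      · exact hx.1.1.1
      · exact oset_sub hx.1 hx.2.1 hx.2.2.1 hx.2.2.2
    · exact hgU v hx
  set T := Clo R (M t ∪ C ∪ (C1 ∪ C2)) with hT
  have hTU : T ⊆ S.U := clo_subset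
    (Set.union_subset (Set.union_subset hM hC) (Set.union_subset hC1U hC2U)) hRU
  have hsub : M t ∪ C ∪ (C1 ∪ C2) ⊆ T := subset_clo
  have hR1 : ∀ v ∈ T, ∀ β x, ((v ∈ S.LN (M β) ∧ x = S.Lf (M β) v) ∨
      (x ∈ S.LN (M β) ∧ S.Lf (M β) x = v)) ∨
      (v ∈ S.U ∧ v ∉ M β ∧ v ∉ S.LX (M β) ∧ x ∈ S.oset (M β) v) → x ∈ T := fun v hv β x h =>
    clo_closed hv (Or.inl (Set.mem_iUnion.2 ⟨β, h⟩))
  obtain ⟨hv, he⟩ := hC2 T (Set.subset_union_right.trans (Set.subset_union_right.trans hsub))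
  refine ⟨T, hTU, ?_, ?_, ?_, ?_, ?_, ?_, hv, he⟩
  · refine clo_lt hκ hκ' ?_ hRc
    exact (mk_union_le _ _).trans_lt (add_lt_of_lt hκ'.le
      ((mk_union_le _ _).trans_lt (add_lt_of_lt hκ'.le hMc hCc))
      ((mk_union_le _ _).trans_lt (add_lt_of_lt hκ'.le hC1c hC2c)))
  · exact Set.subset_union_left.trans (Set.subset_union_left.trans hsub)
  · exact Set.subset_union_right.trans (Set.subset_union_left.trans hsub)
  · intro β w hw
    exact ⟨fun h => hR1 w h β _ (Or.inl (Or.inl ⟨hw, rfl⟩)),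
      fun h => hR1 _ h β w (Or.inl (Or.inr ⟨hw, rfl⟩))⟩
  · intro β s hs h1 h2 x hx
    exact hR1 s hs β x (Or.inr ⟨hTU hs, h1, h2, hx⟩)
  · refine hC1 T (Set.subset_union_left.trans (Set.subset_union_right.trans hsub)) ?_
    intro w hw hwT
    exact clo_closed hwT (Or.inr ⟨hw, rfl⟩)

/-- The stages `St` form a ladder: every stage is a rung over the previous ones. -/
def Ladder (S : Sys V) (κ : Cardinal.{u}) {I : Type u} [LinearOrder I] [WellFoundedLT I]
    (C St : I → Set V) : Prop :=
  ∀ j : I, Rung S κ (fun β : Set.Iic j => Mst St β) ⟨j, le_rfl⟩ (C j) (St j)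

theorem exists_ladder (S : Sys V) {κ : Cardinal.{u}} (hκ : κ.IsRegular) (hκ' : ℵ₀ < κ)
    {I : Type u} [LinearOrder I] [WellFoundedLT I] (hI : RegIdx κ I) (C : I → Set V)
    (hC : ∀ j, C j ⊆ S.U ∧ #(C j) < κ) : ∃ St, Ladder S κ C St := by
  classical
  let Φ : ∀ j : I, (Set.Iic j → Set V) → Set V := fun j M =>
    if h : ∃ T, Rung S κ M ⟨j, le_rfl⟩ (C j) T then h.choose else ∅
  obtain ⟨St, hSt⟩ := exists_stages Φ
  refine ⟨St, fun j => ?_⟩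
  induction j using WellFoundedLT.induction with
  | ind j ih =>
    have hM : Mst St j ⊆ S.U := fun v hv => by
      obtain ⟨k, hk, hv⟩ := mem_Mst.1 hv
      exact (ih k hk).subU hv
    have hMc : #(Mst St j) < κ := by
      have : Mst St j = ⋃ k ∈ Set.Iio j, St k := rfl
      rw [this, card_biUnion_lt_iff_forall_of_isRegular hκ]
      · exact fun k hk => (ih k hk).card
      · exact (mk_le_mk_of_subset Set.Iio_subset_Iic_self).trans_lt (hI.seg j)
    have h := exists_rung S hκ hκ' (hI.seg j) (fun β : Set.Iic j => Mst St β) ⟨j, le_rfl⟩ hM hMc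
      (C j) (hC j).1 (hC j).2
    have e := hSt j
    simp only [Φ, dif_pos h] at e
    rw [e]
    exact h.choose_spec

end Sys

namespace Sys
variable {V : Type u}

theorem Rch.congr {S : Sys V} {f g : V → V} {K : Set V} {l m : V} (h : Rch S f K l m)
    (hfg : ∀ w ∈ K, f w = g w) : Rch S g K l m := by
  induction h with
  | base => exact .base
  | step _ h1 h2 ih => rw [hfg _ h2]; exact ih.step h1 h2

namespace Ladder
variable {S : Sys V} {κ : Cardinal.{u}} {I : Type u} [LinearOrder I] [WellFoundedLT I]
  {C St : I → Set V} {i j β γ : I} {v w z y : V}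

theorem M_sub_St (h : Ladder S κ C St) (j : I) : Mst St j ⊆ St j := (h j).ext

theorem St_mono (h : Ladder S κ C St) (hij : i ≤ j) : St i ⊆ St j := by
  rcases hij.eq_or_lt with rfl | hlt
  · exact subset_rfl
  · exact (St_subset_Mst hlt).trans (h.M_sub_St j)

theorem St_subU (h : Ladder S κ C St) (j : I) : St j ⊆ S.U := (h j).subU

theorem M_subU (h : Ladder S κ C St) (j : I) : Mst St j ⊆ S.U := (h.M_sub_St j).trans (h.St_subU j)

theorem closed_St (h : Ladder S κ C St) (hβ : β ≤ j) (hw : w ∈ S.LN (Mst St β)) :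
    w ∈ St j ↔ S.Lf (Mst St β) w ∈ St j := (h j).closed ⟨β, hβ⟩ w hw

theorem closed_M (h : Ladder S κ C St) (hβ : β < γ) (hw : w ∈ S.LN (Mst St β)) :
    w ∈ Mst St γ ↔ S.Lf (Mst St β) w ∈ Mst St γ := by
  constructor
  · intro hm
    obtain ⟨j, hj, hm⟩ := mem_Mst.1 hm
    exact mem_Mst.2 ⟨max j β, max_lt hj hβ,
      (h.closed_St (le_max_right _ _) hw).1 (h.St_mono (le_max_left _ _) hm)⟩
  · intro hm
    obtain ⟨j, hj, hm⟩ := mem_Mst.1 hm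
    exact mem_Mst.2 ⟨max j β, max_lt hj hβ,
      (h.closed_St (le_max_right _ _) hw).2 (h.St_mono (le_max_left _ _) hm)⟩

/-- What remains of an earlier maximal waveform is a waveform later. -/
theorem wf_later (h : Ladder S κ C St) (hβ : β ≤ γ) :
    (S.del (Mst St γ)).Wf (S.LX (Mst St β) \ Mst St γ) (S.Lf (Mst St β)) := by
  have hw := Lf_wf S (Mst St β)
  have key : ∀ w ∈ (S.del (Mst St γ)).nb (S.LX (Mst St β) \ Mst St γ), w ∈ S.LN (Mst St β) := by
    intro w hw
    obtain ⟨h1, h2⟩ := mem_nb_del.1 hw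
    exact mem_nb_del.2 ⟨nb_mono Set.sdiff_subset h1, fun h => h2 (Mst_mono hβ h)⟩
  refine ⟨fun x hx => ⟨(LX_sub hx.1).1, hx.2⟩, fun x hx => (LX_sub hx.1).2.2, fun w h' => ?_,
    fun w h' => hw.edge w (key w h'), fun w h' w' h'' => hw.inj (key w h') (key w' h''),
    fun w h' hb => hw.fin w (key w h') hb⟩
  have hX := hw.maps w (key w h')
  refine ⟨hX, ?_⟩
  rcases hβ.eq_or_lt with rfl | hlt
  · exact (LX_sub hX).2.1
  · exact fun hm => (mem_nb_del.1 h').2 ((h.closed_M hlt (key w h')).2 hm)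

theorem LX_later (h : Ladder S κ C St) (hβ : β ≤ γ) (hv : v ∈ S.LX (Mst St β))
    (hγ : v ∉ Mst St γ) : v ∈ S.LX (Mst St γ) := (h.wf_later hβ).subset_maxX ⟨hv, hγ⟩

theorem nb_later (h : Ladder S κ C St) (hβ : β ≤ γ) (hv : v ∈ S.LN (Mst St β))
    (hγ : v ∉ Mst St γ) : v ∈ (S.del (Mst St γ)).nb (S.LX (Mst St β) \ Mst St γ) := by
  have hw := Lf_wf S (Mst St β)
  have hX := hw.maps v hv
  refine mem_nb_of ⟨(LN_sub hv).1, hγ⟩ (LN_sub hv).2.2 (x := S.Lf (Mst St β) v) ⟨hX, ?_⟩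
    (hw.edge v hv)
  rcases hβ.eq_or_lt with rfl | hlt
  · exact (LX_sub hX).2.1
  · exact fun hm => hγ ((h.closed_M hlt hv).2 hm)

theorem LN_later (h : Ladder S κ C St) (hβ : β ≤ γ) (hv : v ∈ S.LN (Mst St β))
    (hγ : v ∉ Mst St γ) : v ∈ S.LN (Mst St γ) :=
  nb_mono (h.wf_later hβ).subset_maxX (h.nb_later hβ hv hγ)

/-- The combination of all waveforms of the ladder. -/
noncomputable abbrev F (_ : Ladder S κ C St) : V → V := S.lad (Mst St)

theorem F_eq (h : Ladder S κ C St) (hw : w ∈ S.LN (Mst St γ)) :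
    ∃ β ≤ γ, w ∈ S.LN (Mst St β) ∧ h.F w = S.Lf (Mst St β) w := by
  obtain ⟨β, hβ, hm⟩ := exists_least (P := fun β => w ∈ S.LN (Mst St β)) ⟨γ, hw⟩
  exact ⟨β, not_lt.1 fun hlt => hm γ hlt hw, hβ, lad_eq hβ hm⟩

theorem lad_Iic (h : Ladder S κ C St) (hw : w ∈ S.LN (Mst St γ)) :
    S.lad (fun β : Set.Iic γ => Mst St β) w = h.F w := by
  obtain ⟨β, hβ, hm⟩ := exists_least (P := fun β => w ∈ S.LN (Mst St β)) ⟨γ, hw⟩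
  have hβγ : β ≤ γ := not_lt.1 fun hlt => hm γ hlt hw
  rw [F, lad_eq hβ hm]
  exact lad_eq (M := fun β : Set.Iic γ => Mst St β) (β := ⟨β, hβγ⟩) hβ fun δ hδ => hm δ hδ

/-- The combined map is a waveform on the largest waveform set of every stage. -/
theorem F_wf (h : Ladder S κ C St) (γ : I) : (S.del (Mst St γ)).Wf (S.LX (Mst St γ)) h.F := by
  have e : (⋃ β : Set.Iic γ, S.LX (Mst St β) \ Mst St γ) = S.LX (Mst St γ) := by
    apply Set.Subset.antisymm
    · exact Set.iUnion_subset fun β v hv => h.LX_later β.2 hv.1 hv.2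
    · exact fun v hv => Set.mem_iUnion.2 ⟨⟨γ, le_rfl⟩, hv, (LX_sub hv).2.1⟩
  rw [← e]
  refine Wf.prio (f := fun β : Set.Iic γ => S.Lf (Mst St β)) (fun β => h.wf_later β.2) ?_
  intro β w hw hm
  have hw' := mem_nb_del.1 hw
  refine lad_eq (mem_nb_del.2 ⟨nb_mono Set.sdiff_subset hw'.1, fun h' => hw'.2 (Mst_mono β.2 h')⟩) ?_
  intro β' hβ' hw''
  exact hm ⟨β', hβ'.le.trans β.2⟩ hβ' (h.nb_later (hβ'.le.trans β.2) hw'' hw'.2)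

theorem F_St (h : Ladder S κ C St) (hw : w ∈ S.LN (Mst St γ)) (j : I) :
    w ∈ St j ↔ h.F w ∈ St j := by
  obtain ⟨β, hβ, hwβ, e⟩ := h.F_eq hw
  rw [e]
  have hx := (Lf_wf S (Mst St β)).maps w hwβ
  rcases le_or_gt β j with hj | hj
  · exact h.closed_St hj hwβ
  · exact ⟨fun h' => absurd (St_subset_Mst hj h') (LN_sub hwβ).2.1,
      fun h' => absurd (St_subset_Mst hj h') (LX_sub hx).2.1⟩

theorem F_M (h : Ladder S κ C St) (hw : w ∈ S.LN (Mst St γ)) (j : I) :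
    w ∈ Mst St j ↔ h.F w ∈ Mst St j := by
  simp only [mem_Mst, h.F_St hw]

theorem F_X (h : Ladder S κ C St) (hw : w ∈ S.LN (Mst St γ)) : h.F w ∈ S.LX (Mst St γ) :=
  (h.F_wf γ).maps w hw

theorem hdata (h : Ladder S κ C St) (i : I) (hi : (S.del (Mst St i)).Hind) :
    ∃ g l, HData S h.F (Mst St i) (St i) g l := by
  obtain ⟨g, l, hg⟩ := (h i).hind hi ((h.F_wf i).congr fun w hw => h.lad_Iic hw)
  exact ⟨g, l, hg.wf, hg.memX, hg.memT, hg.miss, fun w hw hne => hg.diff w hw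
    (by rwa [h.lad_Iic hw]), hg.closed, hg.near⟩

end Ladder
end Sys

namespace Sys
variable {V : Type u}

theorem layer_unique {I : Type u} [LinearOrder I] {St : I → Set V} {i j : I} {v : V}
    (h1 : v ∈ St i) (h1' : v ∉ Mst St i) (h2 : v ∈ St j) (h2' : v ∉ Mst St j) : i = j := by
  rcases lt_trichotomy i j with h | h | h
  · exact absurd (St_subset_Mst h h1) h2'
  · exact h
  · exact absurd (St_subset_Mst h h2) h1'

namespace Ladder
variable {S : Sys V} {κ : Cardinal.{u}} {I : Type u} [LinearOrder I] [WellFoundedLT I]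
  {C St : I → Set V}

theorem card_iUnion_M (h : Ladder S κ C St) (hκ : κ.IsRegular) (hI : RegIdx κ I) :
    #(⋃ i, Mst St i) ≤ κ := by
  refine (mk_iUnion_le _).trans ?_
  rw [hI.card]
  calc κ * ⨆ i, #(Mst St i) ≤ κ * κ := by
        gcongr
        exact ciSup_le' fun i => (Mst_card hκ hI (fun i => (h i).card) i).le
    _ = κ := mul_eq_self hκ.aleph0_le

/-- In an unhindered system, almost all stages of a ladder leave an unhindered system. -/
theorem exists_unh (h : Ladder S κ C St) (hS : ¬ S.Hind) (hκ : κ.IsRegular) (hI : RegIdx κ I) :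
    ∃ hf : List V → I, ∀ i, HC (Mst St) hf i → ¬ (S.del (Mst St i)).Hind := by
  classical
  by_contra hno
  push Not at hno
  have hI0 : Nonempty I := by
    rw [← mk_ne_zero_iff, hI.card]
    exact hκ.pos.ne'
  obtain ⟨i0⟩ := hI0
  set M := Mst St with hM
  set F := h.F with hF
  have hV : Nonempty V := by
    obtain ⟨i, -, X, f, l, -⟩ := hno fun _ => i0
    exact ⟨l⟩
  have hdat : ∀ i, ∃ g l, (S.del (M i)).Hind → HData S F (M i) (St i) g l := by
    intro i
    by_cases hi : (S.del (M i)).Hind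
    · obtain ⟨g, l, hg⟩ := h.hdata i hi
      exact ⟨g, l, fun _ => hg⟩
    · exact ⟨id, hV.some, fun h' => absurd h' hi⟩
  choose g l hgl using hdat
  let Q : I → Set V := fun i => {m | Rch (S.del (M i)) (g i) Set.univ (l i) m}
  let Dn : I → Set V := fun i => {c | c ∈ M i ∧ c ∈ S.nb (Q i)}
  let H : I → Prop := fun i => (S.del (M i)).Hind
  let stat : V → Prop := fun c => ∀ hf, ∃ i, HC M hf i ∧ H i ∧ c ∈ Dn i
  let S2 : I → Prop := fun i => H i ∧ ∀ c ∈ Dn i, stat c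
  have s2 : ∀ P : I → Prop, (∀ hf, ∃ i, HC M hf i ∧ H i ∧ P i) →
      ∀ hf, ∃ i, HC M hf i ∧ S2 i ∧ P i := by
    intro P hP hf
    have hc : ∀ c, ∃ hc : List V → I, ¬ stat c → ∀ i, HC M hc i → H i → c ∉ Dn i := by
      intro c
      by_cases hs : stat c
      · exact ⟨hf, fun h' => absurd hs h'⟩
      · have hs' := hs
        simp only [stat] at hs'
        push Not at hs'
        obtain ⟨hc, h'⟩ := hs'
        exact ⟨hc, fun _ => h'⟩
    choose hc hc' using hc
    obtain ⟨i, hi1, hi2, hi3⟩ := hP fun l => max (hf l) (match l with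
      | [] => i0
      | c :: l' => hc c l')
    obtain ⟨ha, hb⟩ := HC.max.1 hi1
    refine ⟨i, ha, ⟨hi2, fun c hcD => ?_⟩, hi3⟩
    by_contra hs
    refine hc' c hs i (fun l hl => hb (c :: l) fun x hx => ?_) hi2 hcD
    rcases List.mem_cons.1 hx with rfl | hx
    · exact hcD.1
    · exact hl x hx
  obtain ⟨is, -, his, -⟩ := s2 (fun _ => True) (fun hf => by
    obtain ⟨i, h1, h2⟩ := hno hf
    exact ⟨i, h1, h2, trivial⟩) fun _ => i0
  -- basic facts on the reachable sets
  have QX : ∀ i, H i → Q i ⊆ S.LX (M i) := fun i hi m hm => Rch.mem (hgl i hi).wf (hgl i hi).memX hm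
  have QN : ∀ i, H i → (S.del (M i)).nb (Q i) ⊆ S.LN (M i) := fun i hi => nb_mono (QX i hi)
  have Qg : ∀ i, ∀ w ∈ (S.del (M i)).nb (Q i), g i w ∈ Q i := by
    intro i w hw
    obtain ⟨x, hx, hw⟩ := mem_nb_iff_singleton.1 hw
    exact Rch.step hx hw trivial
  have rT : ∀ i, H i → ∀ m, Rch (S.del (M i)) (g i) (St i) (l i) m → m ∈ St i := by
    intro i hi m hm
    induction hm with
    | base => exact (hgl i hi).memT
    | @step x w hx h1 h2 ih =>
      refine (hgl i hi).closed w ?_ h2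
      exact nb_mono (Set.singleton_subset_iff.2 (Rch.mem (hgl i hi).wf (hgl i hi).memX hx)) h1
  let Pe : Set V := {c | (∃ i, S2 i ∧ c ∈ Dn i) ∧
    ¬ ∃ i, S2 i ∧ c ∈ St i ∧ c ∈ (S.del (M i)).nb (Q i)}
  have hPe : #Pe ≤ κ := by
    refine (mk_le_mk_of_subset ?_).trans (h.card_iUnion_M hκ hI)
    rintro c ⟨⟨i, -, hc⟩, -⟩
    exact Set.mem_iUnion.2 ⟨i, hc.1⟩
  obtain ⟨α, hα1, hα2⟩ := exists_selection hPe
    (fun c => {i | S2 i ∧ c.1 ∈ Dn i ∧ i ≠ is}) (by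
      rintro ⟨c, ⟨i, hi, hc⟩, -⟩
      refine card_of_unbounded hI fun i1 => ?_
      obtain ⟨k, hk1, hk2, hk3⟩ := s2 (fun i => c ∈ Dn i) (hi.2 c hc) fun _ => max i1 is
      have := hk1.nil
      exact ⟨k, ⟨hk2, hk3, ((le_max_right _ _).trans_lt this).ne'⟩,
        (le_max_left _ _).trans_lt this⟩)
  -- the switched waveforms
  have hGm : ∀ i, ∃ (G : V → V) (m : V), S2 i → (S.del (M i)).Wf (S.LX (M i)) G ∧
      (∀ w ∈ S.LN (M i), G w ≠ m) ∧ m ∈ Q i ∧ m ∈ St i ∧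
      (∀ w ∈ (S.del (M i)).nb (Q i), G w ∈ Q i) ∧ (∀ w ∈ S.LN (M i), w ∈ St i → G w ∈ St i) ∧
      ∀ c, α c = i → c.1 ∈ S.nb {m} := by
    intro i
    by_cases hi : S2 i
    swap
    · exact ⟨g i, l i, fun h' => absurd h' hi⟩
    have hd := hgl i hi.1
    by_cases hc : ∃ c, α c = i
    · obtain ⟨c, hc⟩ := hc
      have hcD : c.1 ∈ Dn i := hc ▸ (hα2 c).2.1
      obtain ⟨m, hm, hcm⟩ := hd.near c.1 hcD.1 hcD.2
      obtain ⟨G, hG1, hG2, -, hG3, -⟩ := hd.wf.aug hd.memX hd.miss hm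
      refine ⟨G, m, fun _ => ⟨hG1, hG2, hm.mono (Set.subset_univ _), rT i hi.1 m hm, ?_, ?_, ?_⟩⟩
      · intro w hw
        by_cases e : G w = g i w
        · rw [e]; exact Qg i w hw
        · exact (hG3 w e).2.2.2.mono (Set.subset_univ _)
      · intro w hw hwS
        by_cases e : G w = g i w
        · rw [e]; exact hd.closed w hw hwS
        · exact rT i hi.1 _ (hG3 w e).2.2.2
      · intro c' hc'
        rwa [hα1 (hc'.trans hc.symm)]
    · push Not at hc
      exact ⟨g i, l i, fun _ => ⟨hd.wf, hd.miss, .base, hd.memT, Qg i, hd.closed,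
        fun c hc' => absurd hc' (hc c)⟩⟩
  choose G m hGm using hGm
  have hα : ∀ c, S2 (α c) := fun c => (hα2 c).1
  let c2 : V → I → Prop := fun w i => S2 i ∧ w ∈ St i ∧ w ∈ (S.del (M i)).nb (Q i)
  have c2u : ∀ w i j, c2 w i → c2 w j → i = j := fun w i j hi hj =>
    layer_unique hi.2.1 hi.2.2.1.2 hj.2.1 hj.2.2.1.2
  let F' : V → V := fun w => if hw : w ∈ Pe then m (α ⟨w, hw⟩) else
    if h2 : ∃ i, c2 w i then G h2.choose w else F w
  have F1 : ∀ c : Pe, F' c = m (α c) := fun c => dif_pos c.2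
  have F2 : ∀ w i, c2 w i → F' w = G i w := by
    intro w i hi
    have h2 : ∃ i, c2 w i := ⟨i, hi⟩
    have : w ∉ Pe := fun h' => h'.2 h2
    simp only [F', dif_neg this, dif_pos h2]
    rw [c2u w _ i h2.choose_spec hi]
  have F3 : ∀ w, w ∉ Pe → (¬ ∃ i, c2 w i) → F' w = F w := by
    intro w h1 h2
    simp only [F', dif_neg h1, dif_neg h2]
  let X' : Set V := ⋃ i, ⋃ (_ : S2 i), Q i
  -- the three kinds of vertices
  have cases : ∀ w ∈ S.nb X', (∃ hw : w ∈ Pe, F' w = m (α ⟨w, hw⟩)) ∨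
      (∃ i, c2 w i ∧ F' w = G i w) ∨
      ((¬ ∃ i, c2 w i) ∧ F' w = F w ∧ ∃ i, S2 i ∧ w ∈ S.LN (M i) ∧ F w ∈ Q i) := by
    intro w hw
    by_cases h1 : w ∈ Pe
    · exact Or.inl ⟨h1, F1 ⟨w, h1⟩⟩
    by_cases h2 : ∃ i, c2 w i
    · obtain ⟨i, hi⟩ := h2
      exact Or.inr (Or.inl ⟨i, hi, F2 w i hi⟩)
    refine Or.inr (Or.inr ⟨h2, F3 w h1 h2, ?_⟩)
    obtain ⟨i, hw⟩ := mem_nb_iUnion.1 hw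
    obtain ⟨hi, hw⟩ := mem_nb_iUnion.1 hw
    have hwM : w ∉ M i := fun hm => h1 ⟨⟨i, hi, hm, hw⟩, h2⟩
    have hwn : w ∈ (S.del (M i)).nb (Q i) := mem_nb_del.2 ⟨hw, hwM⟩
    have hwN := QN i hi.1 hwn
    refine ⟨i, hi, hwN, ?_⟩
    have : g i w = F w := by
      by_contra hne
      exact h2 ⟨i, hi, (hgl i hi.1).diff w hwN hne, hwn⟩
    rw [← this]
    exact Qg i w hwn
  have mΛ : ∀ i, S2 i → m i ∈ St i ∧ m i ∈ Q i ∧ m i ∉ M i := fun i hi =>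
    ⟨(hGm i hi).2.2.2.1, (hGm i hi).2.2.1, (LX_sub (QX i hi.1 (hGm i hi).2.2.1)).2.1⟩
  have GΛ : ∀ w i, c2 w i → G i w ∈ St i ∧ G i w ∈ Q i ∧ G i w ∉ M i := fun w i hi =>
    ⟨(hGm i hi.1).2.2.2.2.2.1 w (QN i hi.1.1 hi.2.2) hi.2.1, (hGm i hi.1).2.2.2.2.1 w hi.2.2,
      (LX_sub (QX i hi.1.1 ((hGm i hi.1).2.2.2.2.1 w hi.2.2))).2.1⟩
  -- a value of `F` in a switched part comes from that part
  have cross : ∀ w k j, S2 j → w ∈ S.LN (M k) → (¬ ∃ i, c2 w i) → F w ∈ St j → F w ∈ Q j →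
      False := by
    intro w k j hj hw h2 hs hq
    have hm : F w ∉ M j := (LX_sub (QX j hj.1 hq)).2.1
    refine h2 ⟨j, hj, (h.F_St hw j).2 hs, ?_⟩
    refine mem_nb_of ⟨(LN_sub hw).1, fun h' => hm ((h.F_M hw j).1 h')⟩ (LN_sub hw).2.2 hq ?_
    exact (h.F_wf k).edge w hw
  have late : ∀ w w' i i', i ≤ i' → S2 i' → w ∈ S.LN (M i) → w' ∈ S.LN (M i') → F w' ∈ Q i' →
      F w = F w' → w = w' := by
    intro w w' i i' hle hi' hN hN' hq' e
    by_cases hm : w ∈ M i'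
    · exact absurd (e ▸ (h.F_M hN i').1 hm) (LX_sub (QX i' hi'.1 hq')).2.1
    · exact (h.F_wf i').inj (h.LN_later hle hN hm) hN' e
  have maps : ∀ w ∈ S.nb X', F' w ∈ X' := by
    intro w hw
    rcases cases w hw with ⟨h1, e⟩ | ⟨i, hi, e⟩ | ⟨-, e, i, hi, -, hq⟩
    · rw [e]; exact Set.mem_iUnion₂.2 ⟨_, hα _, (mΛ _ (hα _)).2.1⟩
    · rw [e]; exact Set.mem_iUnion₂.2 ⟨i, hi.1, (GΛ w i hi).2.1⟩
    · rw [e]; exact Set.mem_iUnion₂.2 ⟨i, hi, hq⟩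
  have wf : S.Wf X' F' := by
    refine ⟨?_, ?_, ?_, ?_, ?_, ?_⟩
    · exact Set.iUnion₂_subset fun i hi x hx => (LX_sub (QX i hi.1 hx)).1
    · intro x hx
      obtain ⟨i, hi, hx⟩ := Set.mem_iUnion₂.1 hx
      exact (LX_sub (QX i hi.1 hx)).2.2
    · exact maps
    · intro w hw
      rcases cases w hw with ⟨h1, e⟩ | ⟨i, hi, e⟩ | ⟨-, e, i, hi, hN, -⟩
      · rw [e]; exact (mem_nb_singleton.1 ((hGm _ (hα _)).2.2.2.2.2.2 ⟨w, h1⟩ rfl)).2.2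
      · rw [e]; exact (hGm i hi.1).1.edge w (QN i hi.1.1 hi.2.2)
      · rw [e]; exact (h.F_wf i).edge w hN
    · intro w hw w' hw' e
      rcases cases w hw with ⟨h1, e1⟩ | ⟨i, hi, e1⟩ | ⟨h1, e1, i, hi, hN, hq⟩ <;>
      rcases cases w' hw' with ⟨h1', e1'⟩ | ⟨i', hi', e1'⟩ | ⟨h1', e1', i', hi', hN', hq'⟩ <;>
      rw [e1, e1'] at e
      · have a := mΛ _ (hα ⟨w, h1⟩)
        have b := mΛ _ (hα ⟨w', h1'⟩)
        rw [← e] at b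
        exact congrArg Subtype.val (hα1 (layer_unique a.1 a.2.2 b.1 b.2.2))
      · have a := mΛ _ (hα ⟨w, h1⟩)
        have b := GΛ w' i' hi'
        rw [← e] at b
        have := layer_unique a.1 a.2.2 b.1 b.2.2
        subst this
        exact absurd e.symm ((hGm _ hi'.1).2.1 w' (QN _ hi'.1.1 hi'.2.2))
      · have a := mΛ _ (hα ⟨w, h1⟩)
        rw [e] at a
        exact (cross w' i' _ (hα _) hN' h1' a.1 a.2.1).elim
      · have b := mΛ _ (hα ⟨w', h1'⟩)
        have a := GΛ w i hi
        rw [e] at a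
        have := layer_unique a.1 a.2.2 b.1 b.2.2
        subst this
        exact absurd e ((hGm _ hi.1).2.1 w (QN _ hi.1.1 hi.2.2))
      · have a := GΛ w i hi
        have b := GΛ w' i' hi'
        rw [← e] at b
        have := layer_unique a.1 a.2.2 b.1 b.2.2
        subst this
        exact (hGm i hi.1).1.inj (QN _ hi.1.1 hi.2.2) (QN _ hi.1.1 hi'.2.2) e
      · have a := GΛ w i hi
        rw [e] at a
        exact (cross w' i' _ hi.1 hN' h1' a.1 a.2.1).elim
      · have b := mΛ _ (hα ⟨w', h1'⟩)
        rw [← e] at b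
        exact (cross w i _ (hα _) hN h1 b.1 b.2.1).elim
      · have b := GΛ w' i' hi'
        rw [← e] at b
        exact (cross w i _ hi'.1 hN h1 b.1 b.2.1).elim
      · rcases le_total i i' with hle | hle
        · exact late w w' i i' hle hi' hN hN' hq' e
        · exact (late w' w i' i hle hi hN' hN hq e.symm).symm
    · intro w hw hb
      have hQc : ∀ x i, S2 i → x ∈ St i → x ∈ Q i → x ∉ S.A → c2 x i := fun x i hi hs hq hA =>
        ⟨hi, hs, mem_nb_of ⟨(LX_sub (QX i hi.1 hq)).1, (LX_sub (QX i hi.1 hq)).2.1⟩ hA hq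
          (Or.inl rfl)⟩
      have hnb : ∀ n, F'^[n] w ∈ S.nb X' := hb.iter_mem hw fun v hv hA => by
        obtain ⟨i, hi, hx⟩ := Set.mem_iUnion₂.1 (maps v hv)
        exact mem_nb_of (LX_sub (QX i hi.1 hx)).1 hA (maps v hv) (Or.inl rfl)
      -- once the orbit is in a switched part, it follows the switched map of that part
      by_cases hP : ∃ k i, c2 (F'^[k] w) i
      · obtain ⟨k, i, hk⟩ := hP
        have hst : ∀ n, c2 (F'^[n] (F'^[k] w)) i := by
          intro n
          refine (hb.tail k).iter_mem (N := {x | c2 x i}) hk (fun v hv hA => ?_) n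
          have hg := GΛ v i hv
          rw [← F2 v i hv] at hg
          exact hQc _ i hk.1 hg.1 hg.2.1 hA
        refine (hGm i hk.1).1.fin _ (QN i hk.1.1 hk.2.2)
          ((hb.tail k).congr_along fun n => (F2 _ i (hst n)).symm)
      · push Not at hP
        have hF : ∀ n, F (F'^[n] w) = F' (F'^[n] w) ∧ ∃ i, S2 i ∧ F'^[n] w ∈ S.LN (M i) := by
          intro n
          rcases cases _ (hnb n) with ⟨h1, e⟩ | ⟨i, hi, e⟩ | ⟨-, e, i, hi, hN, -⟩
          · have a := mΛ _ (hα ⟨_, h1⟩)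
            have hA := hb.1 (n + 1)
            rw [← e, ← Function.iterate_succ_apply' F'] at a
            exact absurd (hQc _ _ (hα ⟨_, h1⟩) a.1 a.2.1 hA) (hP _ _)
          · exact absurd hi (hP _ _)
          · exact ⟨e.symm, i, hi, hN⟩
        obtain ⟨-, i, hi, hN⟩ := hF 0
        exact (h.F_wf i).fin w hN (hb.congr_along fun n => (hF n).1)
  refine hS (Hind.of wf (l := m is) (Set.mem_iUnion₂.2 ⟨is, his, (mΛ is his).2.1⟩) ?_)
  intro w hw e
  have b := mΛ is his
  rcases cases w hw with ⟨h1, e1⟩ | ⟨i, hi, e1⟩ | ⟨h1, e1, i, hi, hN, hq⟩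
  · have a := mΛ _ (hα ⟨w, h1⟩)
    rw [← e1, e] at a
    exact (hα2 ⟨w, h1⟩).2.2 (layer_unique a.1 a.2.2 b.1 b.2.2)
  · have a := GΛ w i hi
    rw [← e1, e] at a
    have := layer_unique a.1 a.2.2 b.1 b.2.2
    subst this
    exact (hGm i hi.1).2.1 w (QN _ hi.1.1 hi.2.2) (e1.symm.trans e)
  · rw [e1] at e
    rw [← e] at b
    exact cross w i _ his hN h1 b.1 b.2.1

end Ladder
end Sys

/-! ### Towers and switching -/

theorem exists_rec {J α : Type*} [LinearOrder J] [WellFoundedLT J]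
    (R : ∀ j : J, (∀ i, i < j → α) → α → Prop) (hR : ∀ j f, ∃ a, R j f a) :
    ∃ σ : J → α, ∀ j, R j (fun i _ => σ i) (σ j) := by
  choose Φ hΦ using hR
  let σ : J → α := wellFounded_lt.fix Φ
  refine ⟨σ, fun j => ?_⟩
  have e : σ j = Φ j (fun i _ => σ i) := wellFounded_lt.fix_eq Φ j
  have := hΦ j (fun i _ => σ i)
  rwa [← e] at this

/-- If the orbit of `f1` passes through the successive values of `f0`, then `f0` inherits badness
from `f1`. -/
theorem Bad.speedup {V : Type u} {f1 f0 : V → V} {A P : Set V} {v : V} (hb : Bad f1 A v) (hv : v ∈ P)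
    (h : ∀ u ∈ P, Bad f1 A u → ∃ k, f1^[k + 1] u = f0 u ∧ f0 u ∈ P) : Bad f0 A v := by
  have key : ∀ n, f0^[n] v ∈ P ∧ ∃ k, f1^[k] v = f0^[n] v := by
    intro n
    induction n with
    | zero => exact ⟨hv, 0, rfl⟩
    | succ n ih =>
      obtain ⟨h1, k, hk⟩ := ih
      obtain ⟨l, hl, hP⟩ := h _ h1 (hk ▸ hb.tail k)
      rw [Function.iterate_succ_apply']
      exact ⟨hP, l + 1 + k, by rw [Function.iterate_add_apply, hk, hl]⟩
  -- a later value of `f0` comes strictly later on the orbit of `f1`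
  have key2 : ∀ d n k, f1^[k] v = f0^[n] v → ∃ k', k < k' ∧ f1^[k'] v = f0^[n + d + 1] v := by
    intro d
    induction d with
    | zero =>
      intro n k hk
      obtain ⟨l, hl, -⟩ := h _ (key n).1 (hk ▸ hb.tail k)
      exact ⟨l + 1 + k, by omega, by
        rw [Function.iterate_add_apply, hk, hl, add_zero, Function.iterate_succ_apply']⟩
    | succ d ih =>
      intro n k hk
      obtain ⟨k', h1, h2⟩ := ih n k hk
      obtain ⟨l, hl, -⟩ := h _ (key (n + d + 1)).1 (h2 ▸ hb.tail k')
      exact ⟨l + 1 + k', by omega, by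
        rw [Function.iterate_add_apply, h2, hl, ← Function.iterate_succ_apply' f0]; rfl⟩
  refine ⟨fun n => ?_, ?_⟩
  · obtain ⟨-, k, hk⟩ := key n
    exact hk ▸ hb.1 k
  · have hne : ∀ m n, m < n → f0^[m] v ≠ f0^[n] v := by
      intro m n hmn e
      obtain ⟨-, k, hk⟩ := key m
      obtain ⟨d, rfl⟩ := Nat.exists_eq_add_of_lt hmn
      obtain ⟨k', h1, h2⟩ := key2 d m k hk
      have := hb.eq_of_iterate_eq (hk.trans (e.trans h2.symm))
      omega
    intro m n e
    rcases lt_trichotomy m n with hlt | heq | hgt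
    · exact absurd e (hne m n hlt)
    · exact heq
    · exact absurd e.symm (hne n m hgt)

namespace Sys
variable {V : Type u}

/-- An increasing family of sets `N j` with unhindered complements, equipped with a common
waveform map `F` for all the complements; `σ j` is the successor of the index `j`. The last two
conditions say that an escape from, or an alternating walk between, vertices of the layer
`N (σ i) \ N i` can be found inside every later layer. -/
structure Tower (S : Sys V) {J : Type u} [LinearOrder J] (σ : J → J) (N : J → Set V) (F : V → V) :
    Prop where
  lt : ∀ j, j < σ j
  le : ∀ {i j}, i < j → σ i ≤ j
  mono : ∀ {i j}, i ≤ j → N i ⊆ N j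
  subU : ∀ j, N j ⊆ S.U
  layer : ∀ {v j}, v ∈ N j → ∃ i, v ∈ N (σ i) ∧ v ∉ N i
  unh : ∀ j, ¬ (S.del (N j)).Hind
  wf : ∀ j, (S.del (N j)).Wf (S.LX (N j)) F
  closed : ∀ {w j}, w ∈ S.LN (N j) → ∀ i, w ∈ N i ↔ F w ∈ N i
  later : ∀ {w i j}, i ≤ j → w ∈ S.LN (N i) → w ∉ N j → w ∈ S.LN (N j)
  path : ∀ {s j}, s ∈ N (σ j) → s ∉ N j → s ∉ S.LX (N j) → S.oset (N j) s ⊆ N (σ j)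
  esc : ∀ {i j z}, i < j → z ∈ N (σ i) → (∃ w, S.Esc (N (σ i)) z w) →
    ∃ w ∈ N (σ j), S.Esc (N j) z w
  virt : ∀ {i j z y}, i < j → z ∈ N (σ i) → y ∈ N (σ i) → (¬ ∃ w, S.Esc (N (σ i)) z w) →
    Virt S F (N (σ i)) (S.LN (N (σ i))) z y → Virt S F (N j) (S.LN (N j) ∩ N (σ j)) z y

/-- `F'` arises from `F` by switching, inside `L`, along an alternating walk from `z` to `m`:
it uses the extra vertex `z` and misses `m`, an in-neighbour of `y`. -/
structure Switch (S : Sys V) (F : V → V) (D L K : Set V) (z y : V) (F' : V → V) (m : V) :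
    Prop where
  maps : ∀ w ∈ S.LN D, F' w ∈ S.LX D ∨ F' w = z
  edge : ∀ w ∈ S.LN D, F' w = w ∨ S.E (F' w) w
  inj : Set.InjOn F' (S.LN D)
  fin : ∀ w ∈ S.LN D, ¬ Bad F' (S.A ∪ {z}) w
  miss : ∀ w ∈ S.LN D, F' w ≠ m
  hits : ∀ x, x = z ∨ x ∈ S.LX D → x ≠ m → ∃ w ∈ S.LN D, F' w = x
  finite : {w | F' w ≠ F w}.Finite
  chg : ∀ w, F' w ≠ F w → w ∈ S.LN D ∧ w ∈ L ∧ w ∈ K ∧ Rch S F (K ∩ L) z (F' w)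
  mX : m ∈ S.LX D
  mL : m ∈ L
  rch : Rch S F K z m
  ym : y ∈ S.nb {m}

theorem LN_of_X {S : Sys V} {D : Set V} {x w : V} (hx : x ∈ S.LX D) (hw : w ∈ S.nb {x})
    (hn : w ∉ D) : w ∈ S.LN D := mem_nb_del.2 ⟨nb_mono (by simpa using hx) hw, hn⟩

namespace Tower
variable {S : Sys V} {J : Type u} [LinearOrder J] {σ : J → J} {N : J → Set V} {F : V → V}
  {i j : J} {w z y m x : V}

theorem X_of_rch (h : Tower S σ N F) {K : Set V} (hK : K ⊆ S.LN (N j)) (hm : Rch S F K z m) :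
    m = z ∨ m ∈ S.LX (N j) := by
  induction hm with
  | base => exact Or.inl rfl
  | step _ _ hw _ => exact Or.inr ((h.wf j).maps _ (hK hw))

/-- The alternating walk behind a virtual edge of the layer `i` can be realized by switching inside
any later layer `j`. -/
theorem switch (h : Tower S σ N F) (hij : i < j) (hz : z ∈ N (σ i)) (hzB : z ∉ S.B)
    (hy : y ∈ N (σ i)) (hyi : y ∉ N i) (hyN : y ∉ S.LN (N i)) (hesc : ¬ ∃ w, S.Esc (N (σ i)) z w)
    (hv : Virt S F (N (σ i)) (S.LN (N (σ i))) z y) :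
    ∃ F' m, Switch S F (N j) (N (σ j)) (S.LN (N (σ i)) \ S.LN (N i)) z y F' m := by
  have hσ : N (σ i) ⊆ N j := h.mono (h.le hij)
  have hi : N i ⊆ N j := h.mono hij.le
  let K : Set V := (S.LN (N (σ i)) \ S.LN (N i)) ∩ (S.LN (N j) ∩ N (σ j))
  obtain ⟨m, hm, hmD, hym⟩ := h.virt hij hz hy hesc hv
  have hmi : m ∉ S.LX (N i) := fun h' => hyN (LN_of_X h' hym hyi)
  have escj : ∀ w, w ∈ S.nb {z} → w ∉ N j → w ∈ S.LN (N (σ i)) := by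
    intro w hw hn
    by_contra hc
    exact hesc ⟨w, hw, fun h2 => hn (hσ h2), hc⟩
  -- the walk avoids the earlier waveform, since otherwise it could not reach `y`
  have hmK : ∀ m, Rch S F (S.LN (N j) ∩ N (σ j)) z m → m ∉ S.LX (N i) → Rch S F K z m := by
    intro m hm
    induction hm with
    | base => exact fun _ => .base
    | @step x w hx hw hwK ih =>
      intro hF
      have hwn : w ∉ N j := (LN_sub hwK.1).2.1
      have hwi : w ∉ S.LN (N i) := fun h' => hF ((h.wf i).maps w h')
      have hxr := ih fun h' => hwi (LN_of_X h' hw fun h2 => hwn (hi h2))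
      refine hxr.step hw ⟨⟨?_, hwi⟩, hwK⟩
      rcases h.X_of_rch (fun w hw => hw.1.1) hxr with rfl | hX
      · exact escj w hw hwn
      · exact LN_of_X hX hw fun h2 => hwn (hσ h2)
  let T : Sys V := { S with U := (S.U \ N j) ∪ {z}, A := S.A ∪ {z} }
  have hTN : T.nb (S.LX (N j) ∪ {z}) = S.LN (N j) := by
    ext w
    constructor
    · rintro ⟨h1, h2, h3⟩
      have hwz : w ≠ z := fun e => h2 (Or.inr e)
      have hwA : w ∉ S.A := fun e => h2 (Or.inl e)
      have hwU : w ∈ S.U \ N j := h1.resolve_right hwz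
      rcases h3 with h3 | ⟨x, hx | rfl, e⟩
      · exact mem_nb_self hwU hwA (h3.resolve_right hwz)
      · exact mem_nb_of hwU hwA hx (Or.inr e)
      · have hw1 : w ∈ S.nb {x} := mem_nb_singleton.2 ⟨hwU.1, hwA, Or.inr e⟩
        exact h.later (h.le hij) (escj w hw1 hwU.2) hwU.2
    · intro hw
      have hwz : w ≠ z := fun e => (LN_sub hw).2.1 (hσ (e ▸ hz))
      refine ⟨Or.inl hw.1, fun h' => h'.elim hw.2.1 hwz, ?_⟩
      rcases hw.2.2 with h3 | ⟨x, hx, e⟩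
      · exact Or.inl (Or.inl h3)
      · exact Or.inr ⟨x, Or.inl hx, e⟩
  have hTwf : T.Wf (S.LX (N j) ∪ {z}) F := by
    refine ⟨?_, ?_, ?_, ?_, ?_, ?_⟩
    · rintro x (hx | hx)
      · exact Or.inl ((h.wf j).subU hx)
      · exact Or.inr hx
    · rintro x (hx | rfl)
      · exact (h.wf j).notB x hx
      · exact hzB
    · rw [hTN]; exact fun w hw => Or.inl ((h.wf j).maps w hw)
    · rw [hTN]; exact fun w hw => (h.wf j).edge w hw
    · rw [hTN]; exact (h.wf j).inj
    · rw [hTN]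
      exact fun w hw hb => (h.wf j).fin w hw (hb.sets fun n h' => hb.1 n (Or.inl h'))
  have hzX : z ∉ S.LX (N j) := fun h' => (LX_sub h').2.1 (hσ hz)
  have hrT : ∀ m, Rch S F K z m → Rch T F K z m := by
    intro m hm
    induction hm with
    | base => exact .base
    | @step x w _ hw hwK ih =>
      have hN := LN_sub hwK.2.1
      have hwz : w ≠ z := fun e => hN.2.1 (hσ (e ▸ hz))
      refine ih.step ?_ hwK
      exact mem_nb_singleton.2 ⟨Or.inl ⟨hN.1, hN.2.1⟩, fun h' => h'.elim hN.2.2 hwz,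
        (mem_nb_singleton.1 hw).2.2⟩
  have hrS : ∀ m, Rch T F K z m → Rch S F K z m := by
    intro m hm
    induction hm with
    | base => exact .base
    | @step x w _ hw hwK ih =>
      have hN := LN_sub hwK.2.1
      exact ih.step (mem_nb_singleton.2 ⟨hN.1, hN.2.2, (mem_nb_singleton.1 hw).2.2⟩) hwK
  have hmr := hmK m hm hmi
  obtain ⟨F', hF1, hF2, hF3, hF4, hF5⟩ := hTwf.aug (Or.inr rfl) (K := K) (m := m)
    (by rw [hTN]; exact fun w hw e => hzX (e ▸ (h.wf j).maps w hw)) (hrT m hmr)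
  have hKm : ∀ x, Rch S F K z x → Rch S F ((S.LN (N (σ i)) \ S.LN (N i)) ∩ N (σ j)) z x :=
    fun x hx => hx.mono fun w hw => ⟨hw.1, hw.2.2⟩
  rw [hTN] at hF2 hF5
  simp only [hTN] at hF4
  refine ⟨F', m, ?_, ?_, ?_, ?_, hF2, ?_, hF3, ?_, ?_, ?_, hmr.mono fun w hw => hw.1, hym⟩
  · exact fun w hw => hF1.maps w (hTN ▸ hw)
  · exact fun w hw => hF1.edge w (hTN ▸ hw)
  · have := hF1.inj; rwa [hTN] at this
  · exact fun w hw => hF1.fin w (hTN ▸ hw)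
  · rintro x (rfl | hx) hne
    · exact hF5 x (Or.inl rfl) hne
    · exact hF5 x (Or.inr ((h.wf j).onto (h.unh j) hx)) hne
  · intro w hw
    obtain ⟨h1, h2, -, h4⟩ := hF4 w hw
    exact ⟨h2, h1.2.2, h1.1, hKm _ (hrS _ h4)⟩
  · rcases h.X_of_rch (j := j) (fun w hw => hw.2.1) hmr with rfl | hX
    · exact absurd (hσ hz) hmD
    · exact hX
  · have : ∀ x, Rch S F K z x → x ∈ N (σ j) := by
      intro x hx
      cases hx with
      | base => exact h.mono (h.lt j).le (hσ hz)
      | step _ _ hw => exact (h.closed hw.2.1 _).1 hw.2.2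
    exact this m hmr

end Tower
end Sys

/-! ### The system of a layer is unhindered -/

namespace Sys
variable {V : Type u}

/-- The system to be linked inside the layer `D' \ D`, after removal of the maximal waveform of the
complement of `D` and of the set `P`: alternating walks outside `D'` serve as additional edges, and
vertices with an escape as additional targets. -/
def lay (S : Sys V) (F : V → V) (D D' P : Set V) : Sys V where
  E z y := S.E z y ∨ Virt S F D' (S.LN D') z y
  U := ((D' \ D) \ S.LX D) \ P
  A := S.A ∪ S.LN D
  B := S.B ∪ {z | ∃ w, S.Esc D' z w}

namespace Tower
variable {S : Sys V} {J : Type u} [LinearOrder J] {σ : J → J} {N : J → Set V} {F : V → V}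
  {i j : J} {w z y m x : V}

theorem layer_unique (h : Tower S σ N F) (h1 : x ∈ N (σ i)) (h2 : x ∉ N i) (h3 : x ∈ N (σ j))
    (h4 : x ∉ N j) : i = j := by
  rcases lt_trichotomy i j with hlt | heq | hgt
  · exact absurd (h.mono (h.le hlt) h1) h4
  · exact heq
  · exact absurd (h.mono (h.le hgt) h3) h2

/-- A hindrance of the layer system would yield a hindrance of the quotient: the additional edges
used are realized by switching in distinct later layers. -/
theorem lay_unh (h : Tower S σ N F) {P : Set V} (hPN : P ⊆ N (σ j))
    (hP : ¬ (((S.del (N j)).quo (S.LX (N j))).del P).Hind) {e : V → J}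
    (he : ∀ v ∈ N (σ j), v ∉ N j → j < e v) (hinj : Set.InjOn e (N (σ j) \ N j)) :
    ¬ (S.lay F (N j) (N (σ j)) P).Hind := by
  classical
  rintro ⟨X0, f0, l0, hf0, hl0, hmiss⟩
  set D := N j with hD
  set D' := N (σ j) with hD'
  have hDD : D ⊆ D' := h.mono (h.lt j).le
  set W := S.lay F D D' P with hW
  set Ξ := ((S.del D).quo (S.LX D)).del P with hΞ
  let K : Set V := S.LN D' \ S.LN D
  have X0D : ∀ x ∈ X0, x ∈ D' := fun x hx => (hf0.subU hx).1.1.1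
  have X0esc : ∀ x ∈ X0, ¬ ∃ w, S.Esc D' x w := fun x hx h' => hf0.notB x hx (Or.inr h')
  have X0B : ∀ x ∈ X0, x ∉ S.B := fun x hx h' => hf0.notB x hx (Or.inl h')
  let R : Set V := {m | m ∉ D' ∧ ∃ z ∈ X0, Rch S F K z m}
  have RX : ∀ m ∈ R, m ∈ S.LX D' ∧ m ∉ S.LX D := by
    rintro m ⟨hm, z, hz, hr⟩
    cases hr with
    | base => exact absurd (X0D _ hz) hm
    | @step x w _ _ hw =>
      refine ⟨(h.wf _).maps w hw.1, fun h' => hw.2 ?_⟩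
      have hs := LN_sub hw.1
      exact mem_nb_of ⟨hs.1, fun h2 => hs.2.1 (hDD h2)⟩ hs.2.2 h' ((h.wf (σ j)).edge w hw.1)
  -- steps from the new set leading out of `D'`
  have out : ∀ x ∈ X0 ∪ R, ∀ w ∈ S.nb {x}, w ∉ D' → w ∉ S.LN D → w ∈ K ∧ F w ∈ R := by
    intro x hx w hw hwD hwN
    have hwK : w ∈ K := by
      refine ⟨?_, hwN⟩
      rcases hx with hx | hx
      · by_contra h'
        exact X0esc x hx ⟨w, hw, hwD, h'⟩
      · exact LN_of_X (RX x hx).1 hw hwD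
    have hF : F w ∉ D' := fun h' => hwD ((h.closed hwK.1 _).2 h')
    refine ⟨hwK, hF, ?_⟩
    rcases hx with hx | ⟨-, z, hz, hr⟩
    · exact ⟨x, hx, Rch.base.step hw hwK⟩
    · exact ⟨z, hz, hr.step hw hwK⟩
  -- steps leading into the layer
  have inn : ∀ x ∈ X0 ∪ R, ∀ w ∈ S.nb {x}, w ∈ W.U → w ∉ S.LN D → w ∈ W.nb X0 := by
    intro x hx w hw hwU hwN
    have hw' := mem_nb_singleton.1 hw
    have hwA : w ∉ W.A := fun h' => h'.elim hw'.2.1 hwN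
    rcases hx with hx | ⟨hm, z, hz, hr⟩
    · exact mem_nb_of hwU hwA hx (hw'.2.2.imp_right Or.inl)
    · exact mem_nb_of hwU hwA hz (Or.inr (Or.inr ⟨x, hr.mono fun _ h' => h'.1, hm, hw⟩))
  have split : ∀ w ∈ Ξ.nb (X0 ∪ R), (w ∈ D' ∧ w ∈ W.nb X0) ∨ (w ∉ D' ∧ w ∈ K ∧ F w ∈ R) := by
    intro w hw
    obtain ⟨x, hx, hw⟩ := mem_nb_iff_singleton.1 hw
    obtain ⟨⟨⟨⟨hU, hwD⟩, hwX⟩, hwP⟩, hwA, hE⟩ := mem_nb_singleton.1 hw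
    have hwN : w ∉ S.LN D := fun h' => hwA (Or.inr h')
    have hw' : w ∈ S.nb {x} := mem_nb_singleton.2 ⟨hU, fun h' => hwA (Or.inl h'), hE⟩
    by_cases hc : w ∈ D'
    · exact Or.inl ⟨hc, inn x hx w hw' ⟨⟨⟨hc, hwD⟩, hwX⟩, hwP⟩ hwN⟩
    · exact Or.inr ⟨hc, out x hx w hw' hc hwN⟩
  have nbW : ∀ w ∈ W.nb X0, w ∈ D' ∧ w ∉ D ∧ w ∉ S.LN D := fun w hw =>
    ⟨hw.1.1.1.1, hw.1.1.1.2, fun h' => hw.2.1 (Or.inr h')⟩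
  let Vt : Set V := {y | y ∈ W.nb X0 ∧ f0 y ≠ y ∧ ¬ S.E (f0 y) y}
  have hsw : ∀ y, ∃ (F' : V → V) (m : V), y ∈ Vt →
      Switch S F (N (e y)) (N (σ (e y))) K (f0 y) y F' m := by
    intro y
    by_cases hy : y ∈ Vt
    swap
    · exact ⟨F, y, fun h' => absurd h' hy⟩
    have hyW := nbW y hy.1
    have hz := hf0.maps y hy.1
    have hv : Virt S F D' (S.LN D') (f0 y) y := by
      rcases hf0.edge y hy.1 with h' | h' | h'
      · exact absurd h' hy.2.1
      · exact absurd h' hy.2.2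
      · exact h'
    obtain ⟨F', m, hs⟩ := h.switch (he y hyW.1 hyW.2.1) (X0D _ hz) (X0B _ hz) hyW.1 hyW.2.1 hyW.2.2
      (X0esc _ hz) hv
    exact ⟨F', m, fun _ => hs⟩
  choose F' m hsw using hsw
  have hje : ∀ y ∈ Vt, j < e y := fun y hy => he y (nbW y hy.1).1 (nbW y hy.1).2.1
  have hDe : ∀ y ∈ Vt, D' ⊆ N (e y) := fun y hy => h.mono (h.le (hje y hy))
  let sw : V → V → Prop := fun w y => y ∈ Vt ∧ w ∈ N (σ (e y)) ∧ w ∉ N (e y)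
  have swu : ∀ {w y y'}, sw w y → sw w y' → y = y' := by
    intro w y y' h1 h2
    exact hinj ⟨(nbW y h1.1.1).1, (nbW y h1.1.1).2.1⟩ ⟨(nbW y' h2.1.1).1, (nbW y' h2.1.1).2.1⟩
      (h.layer_unique h1.2.1 h1.2.2 h2.2.1 h2.2.2)
  have swD : ∀ {w y}, sw w y → w ∉ D' := fun h1 h2 => h1.2.2 (hDe _ h1.1 h2)
  have swN : ∀ {w y}, sw w y → w ∈ K → w ∈ S.LN (N (e y)) := fun h1 h2 =>
    h.later (h.le (hje _ h1.1)) h2.1 h1.2.2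
  have swm : ∀ y ∈ Vt, sw (m y) y ∧ m y ∈ R := by
    intro y hy
    have hs := hsw y hy
    have h1 : sw (m y) y := ⟨hy, hs.mL, (LX_sub hs.mX).2.1⟩
    exact ⟨h1, swD h1, f0 y, hf0.maps y hy.1, hs.rch⟩
  have swF : ∀ {w y}, w ∈ K → F w ∈ R → sw w y →
      F' y w = f0 y ∨ (sw (F' y w) y ∧ F' y w ∈ R) := by
    intro w y hK hF h1
    have hs := hsw y h1.1
    have hN := swN h1 hK
    rcases hs.maps w hN with hX | hz
    swap
    · exact Or.inl hz
    by_cases hc : F' y w = F w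
    · rw [hc]
      exact Or.inr ⟨⟨h1.1, (h.closed hN _).1 h1.2.1, fun h' => h1.2.2 ((h.closed hN _).2 h')⟩, hF⟩
    · have hr := (hs.chg w hc).2.2.2
      have hn := (LX_sub hX).2.1
      have hL : F' y w ∈ N (σ (e y)) := by
        revert hr
        generalize F' y w = x
        intro hr
        cases hr with
        | base => exact h.mono (h.lt _).le (hDe y h1.1 (X0D _ (hf0.maps y h1.1.1)))
        | step _ _ hw => exact (h.closed hw.1.1 _).1 hw.2
      have h2 : sw (F' y w) y := ⟨h1.1, hL, hn⟩
      exact Or.inr ⟨h2, swD h2, f0 y, hf0.maps y h1.1.1, hr.mono fun _ h' => h'.1⟩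
  let f1 : V → V := fun w => if w ∈ D' then (if w ∈ Vt then m w else f0 w) else
    if hw : ∃ y, sw w y then F' hw.choose w else F w
  have v1 : ∀ w ∈ Vt, f1 w = m w := fun w hw => by
    simp only [f1, if_pos (nbW w hw.1).1, if_pos hw]
  have v2 : ∀ w ∈ D', w ∉ Vt → f1 w = f0 w := fun w hw hn => by
    simp only [f1, if_pos hw, if_neg hn]
  have v3 : ∀ w y, sw w y → f1 w = F' y w := fun w y hs => by
    have hw : ∃ y, sw w y := ⟨y, hs⟩
    simp only [f1, if_neg (swD hs), dif_pos hw]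
    rw [swu hw.choose_spec hs]
  have v4 : ∀ w, w ∉ D' → (¬ ∃ y, sw w y) → f1 w = F w := fun w hw hn => by
    simp only [f1, if_neg hw, dif_neg hn]
  have real : ∀ w ∈ W.nb X0, w ∉ Vt → f0 w = w ∨ S.E (f0 w) w := by
    intro w hw hn
    by_contra h'
    push Not at h'
    exact hn ⟨hw, h'⟩
  have v4n : ∀ w, w ∈ K → (¬ ∃ y, sw w y) → ¬ ∃ y, sw (F w) y := by
    rintro w hK hn ⟨y, h1, h2, h3⟩
    exact hn ⟨y, h1, (h.closed hK.1 _).2 h2, fun h' => h3 ((h.closed hK.1 _).1 h')⟩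
  have cases : ∀ w ∈ Ξ.nb (X0 ∪ R), (w ∈ Vt ∧ f1 w = m w) ∨
      (w ∈ W.nb X0 ∧ w ∉ Vt ∧ f1 w = f0 w) ∨ (∃ y, sw w y ∧ w ∈ K ∧ f1 w = F' y w ∧
        (f1 w = f0 y ∨ (sw (f1 w) y ∧ f1 w ∈ R))) ∨
      (w ∈ K ∧ f1 w = F w ∧ F w ∈ R ∧ ¬ ∃ y, sw (F w) y) := by
    intro w hw
    rcases split w hw with ⟨h1, h2⟩ | ⟨h1, h2, h3⟩
    · by_cases hc : w ∈ Vt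
      · exact Or.inl ⟨hc, v1 w hc⟩
      · exact Or.inr (Or.inl ⟨h2, hc, v2 w h1 hc⟩)
    · by_cases hc : ∃ y, sw w y
      · obtain ⟨y, hy⟩ := hc
        refine Or.inr (Or.inr (Or.inl ⟨y, hy, h2, v3 w y hy, ?_⟩))
        rw [v3 w y hy]
        exact swF h2 h3 hy
      · exact Or.inr (Or.inr (Or.inr ⟨h2, v4 w h1 hc, h3, v4n w h2 hc⟩))
  have f0D : ∀ y ∈ Vt, f0 y ∈ D' := fun y hy => X0D _ (hf0.maps y hy.1)
  have maps : ∀ w ∈ Ξ.nb (X0 ∪ R), f1 w ∈ X0 ∪ R := by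
    intro w hw
    rcases cases w hw with ⟨h1, e1⟩ | ⟨h1, -, e1⟩ | ⟨y, h1, -, -, e1 | e1⟩ | ⟨-, e1, h1, -⟩
    · rw [e1]; exact Or.inr (swm w h1).2
    · rw [e1]; exact Or.inl (hf0.maps w h1)
    · rw [e1]; exact Or.inl (hf0.maps y h1.1.1)
    · exact Or.inr e1.2
    · rw [e1]; exact Or.inr h1
  have subΞ : X0 ∪ R ⊆ Ξ.U := by
    rintro x (hx | hx)
    · have := hf0.subU hx
      exact ⟨⟨⟨h.subU _ this.1.1.1, this.1.1.2⟩, this.1.2⟩, this.2⟩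
    · have := RX x hx
      exact ⟨⟨⟨(LX_sub this.1).1, fun h' => hx.1 (hDD h')⟩, this.2⟩, fun h' => hx.1 (hPN h')⟩
  have wf : Ξ.Wf (X0 ∪ R) f1 := by
    refine ⟨subΞ, ?_, maps, ?_, ?_, ?_⟩
    · rintro x (hx | hx)
      · exact X0B x hx
      · exact (LX_sub (RX x hx).1).2.2
    · intro w hw
      rcases cases w hw with ⟨h1, e1⟩ | ⟨h1, h2, e1⟩ | ⟨y, h1, hK, e1, -⟩ | ⟨hK, e1, h1, -⟩
      · rw [e1]; exact (mem_nb_singleton.1 (hsw w h1).ym).2.2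
      · rw [e1]; exact real w h1 h2
      · rw [e1]; exact (hsw y h1.1).edge w (swN h1 hK)
      · rw [e1]; exact (h.wf _).edge w hK.1
    · have c13 : ∀ w w' y, w ∈ Vt → sw w' y → w' ∈ K → f1 w' = F' y w' →
          (f1 w' = f0 y ∨ (sw (f1 w') y ∧ f1 w' ∈ R)) → m w ≠ f1 w' := by
        intro w w' y hw hs hK e1 hc e2
        have hm := (swm w hw).1
        rcases hc with hc | hc
        · exact swD hm (e2 ▸ hc ▸ f0D y hs.1)
        · rw [← e2] at hc
          obtain rfl := swu hm hc.1
          exact (hsw w hw).miss w' (swN hs hK) (e1.symm.trans e2.symm)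
      have c23 : ∀ w w' y, w ∈ W.nb X0 → w ∉ Vt → sw w' y →
          (f1 w' = f0 y ∨ (sw (f1 w') y ∧ f1 w' ∈ R)) → f0 w ≠ f1 w' := by
        intro w w' y hw hv hs hc e2
        rcases hc with hc | hc
        · exact hv (hf0.inj hw hs.1.1 (e2.trans hc) ▸ hs.1)
        · exact hc.2.1 (e2 ▸ X0D _ (hf0.maps w hw))
      have c34 : ∀ w w' y, sw w y → (f1 w = f0 y ∨ (sw (f1 w) y ∧ f1 w ∈ R)) →
          F w' ∈ R → (¬ ∃ y, sw (F w') y) → f1 w ≠ F w' := by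
        intro w w' y hs hc hR hn e2
        rcases hc with hc | hc
        · exact hR.1 (e2 ▸ hc ▸ f0D y hs.1)
        · exact hn ⟨y, e2 ▸ hc.1⟩
      intro w hw w' hw' e2
      rcases cases w hw with ⟨h1, e1⟩ | ⟨h1, h2, e1⟩ | ⟨y, h1, hK, e1, hc⟩ | ⟨hK, e1, h1, h2⟩ <;>
      rcases cases w' hw' with
        ⟨h1', e1'⟩ | ⟨h1', h2', e1'⟩ | ⟨y', h1', hK', e1', hc'⟩ | ⟨hK', e1', h1', h2'⟩
      · rw [e1, e1'] at e2
        exact swu (swm w h1).1 (e2 ▸ (swm w' h1').1)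
      · exact absurd (X0D _ (hf0.maps w' h1')) (by rw [← e1', ← e2, e1]; exact (swm w h1).2.1)
      · exact absurd (e1.symm.trans e2) (c13 w w' y' h1 h1' hK' e1' hc')
      · exact absurd ⟨w, by rw [← e1', ← e2, e1]; exact (swm w h1).1⟩ h2'
      · exact absurd (X0D _ (hf0.maps w h1)) (by rw [← e1, e2, e1']; exact (swm w' h1').2.1)
      · exact hf0.inj h1 h1' (e1.symm.trans (e2.trans e1'))
      · exact absurd (e1.symm.trans e2) (c23 w w' y' h1 h2 h1' hc')
      · exact absurd (X0D _ (hf0.maps w h1)) (by rw [← e1, e2, e1']; exact h1'.1)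
      · exact absurd (e1'.symm.trans e2.symm) (c13 w' w y h1' h1 hK e1 hc)
      · exact absurd (e1'.symm.trans e2.symm) (c23 w' w y h1' h2' h1 hc)
      · have hyy : y = y' := by
          rcases hc with hc | hc <;> rcases hc' with hc' | hc'
          · exact hf0.inj h1.1.1 h1'.1.1 (hc.symm.trans (e2.trans hc'))
          · exact absurd (f0D y h1.1) (by rw [← hc, e2]; exact hc'.2.1)
          · exact absurd (f0D y' h1'.1) (by rw [← hc', ← e2]; exact hc.2.1)
          · exact swu hc.1 (e2 ▸ hc'.1)
        subst hyy
        exact (hsw y h1.1).inj (swN h1 hK) (swN h1' hK') (e1.symm.trans (e2.trans e1'))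
      · exact absurd (e2.trans e1') (c34 w w' y h1 hc h1' h2')
      · exact absurd ⟨w', by rw [← e1, e2, e1']; exact (swm w' h1').1⟩ h2
      · exact absurd (X0D _ (hf0.maps w' h1')) (by rw [← e1', ← e2, e1]; exact h1.1)
      · exact absurd (e2.symm.trans e1) (c34 w' w y' h1' hc' h1 h2)
      · exact (h.wf _).inj hK.1 hK'.1 (e1.symm.trans (e2.trans e1'))
    · have hA : ∀ {w}, w ∉ Ξ.A → w ∉ S.A := fun h1 h2 => h1 (Or.inl h2)
      have nbΞ : ∀ x ∈ X0 ∪ R, x ∉ Ξ.A → x ∈ Ξ.nb (X0 ∪ R) := fun x hx hA =>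
        mem_nb_self (subΞ hx) hA hx
      -- outside the layer and the switched layers, only `F` acts
      have lB : ∀ u, u ∈ K → F u ∈ R → (¬ ∃ y, sw u y) → u ∉ D' → ¬ Bad f1 Ξ.A u := by
        intro u hK hR hn hD hb
        have := hb.iter_mem (N := {u | u ∈ K ∧ F u ∈ R ∧ (¬ ∃ y, sw u y) ∧ u ∉ D'})
          ⟨hK, hR, hn, hD⟩ (by
            rintro v ⟨h1, h2, h3, h4⟩ h5
            rw [v4 v h4 h3] at h5 ⊢
            rcases split _ (nbΞ _ (Or.inr h2) h5) with ⟨h6, -⟩ | ⟨h6, h7, h8⟩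
            · exact absurd h6 h2.1
            · exact ⟨h7, h8, v4n v h1 h3, h6⟩)
        refine (h.wf _).fin u hK.1 ((hb.congr_along fun n => ?_).sets ?_)
        · exact (v4 _ (this n).2.2.2 (this n).2.2.1).symm
        · intro n
          rw [iterate_congr_along fun n => (v4 _ (this n).2.2.2 (this n).2.2.1).symm]
          exact hA (hb.1 n)
      -- a bad orbit leaves a switched layer again
      have lA : ∀ u y, u ∈ Ξ.nb (X0 ∪ R) → sw u y → Bad f1 Ξ.A u → ∃ k, f1^[k + 1] u = f0 y := by
        intro u y hu hs hb
        by_contra hk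
        push Not at hk
        have key : ∀ n, f1^[n] u ∈ Ξ.nb (X0 ∪ R) ∧ sw (f1^[n] u) y := by
          intro n
          induction n with
          | zero => exact ⟨hu, hs⟩
          | succ n ih =>
            have hk' := hk n
            have hA' := hb.1 (n + 1)
            rw [Function.iterate_succ_apply'] at hk' hA' ⊢
            refine ⟨nbΞ _ (maps _ ih.1) hA', ?_⟩
            rcases split _ ih.1 with ⟨h1, -⟩ | ⟨-, h1, h2⟩
            · exact absurd h1 (swD ih.2)
            · rw [v3 _ y ih.2] at hk' ⊢
              exact ((swF h1 h2 ih.2).resolve_left hk').1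
        have hK : u ∈ K := by
          rcases split u hu with ⟨h1, -⟩ | ⟨-, h1, -⟩
          · exact absurd h1 (swD hs)
          · exact h1
        have hc : ∀ n, F' y (f1^[n] u) = f1 (f1^[n] u) := fun n => (v3 _ y (key n).2).symm
        refine (hsw y hs.1).fin u (swN hs hK) ((hb.congr_along hc).sets fun n => ?_)
        rw [iterate_congr_along hc]
        rintro (h1 | h1)
        · exact hA (hb.1 n) h1
        · exact swD (key n).2 (by rw [h1]; exact f0D y hs.1)
      -- inside the layer, a bad orbit visits an orbit of `f0`
      have lC : ∀ u, u ∈ W.nb X0 → ¬ Bad f1 Ξ.A u := by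
        intro u hu hb
        refine hf0.fin u hu (hb.speedup (P := W.nb X0) (f0 := f0) hu fun v hv hbv => ?_)
        have : ∃ k, f1^[k + 1] v = f0 v := by
          by_cases hc : v ∈ Vt
          · have hm := swm v hc
            rw [← v1 v hc] at hm
            obtain ⟨k, hk⟩ := lA (f1 v) v (nbΞ _ (Or.inr hm.2) (hbv.1 1)) hm.1 hbv.step
            exact ⟨k + 1, by rw [← hk]; rfl⟩
          · exact ⟨0, v2 v (nbW v hv).1 hc⟩
        obtain ⟨k, hk⟩ := this
        refine ⟨k, hk, ?_⟩
        have hA' := hbv.1 (k + 1)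
        rw [hk] at hA'
        exact mem_nb_self (hf0.subU (hf0.maps v hv)) hA' (hf0.maps v hv)
      intro w hw hb
      rcases split w hw with ⟨-, h1⟩ | ⟨h1, h2, h3⟩
      · exact lC w h1 hb
      · by_cases hc : ∃ y, sw w y
        · obtain ⟨y, hy⟩ := hc
          obtain ⟨k, hk⟩ := lA w y hw hy hb
          have hA' := hb.1 (k + 1)
          have hb' := hb.tail (k + 1)
          rw [hk] at hA' hb'
          have hx := hf0.maps y hy.1.1
          exact lC _ (mem_nb_self (hf0.subU hx) hA' hx) hb'
        · exact lB w h2 h3 hc h1 hb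
  refine hP (Hind.of wf (Or.inl hl0) ?_)
  intro w hw e2
  rcases cases w hw with ⟨h1, e1⟩ | ⟨h1, -, e1⟩ | ⟨y, h1, -, -, e1 | e1⟩ | ⟨-, e1, h1, -⟩
  · exact (swm w h1).2.1 (by rw [← e1, e2]; exact X0D _ hl0)
  · exact hmiss w h1 (e1.symm.trans e2)
  · exact hmiss y h1.1.1 (e1.symm.trans e2)
  · exact e1.2.1 (by rw [e2]; exact X0D _ hl0)
  · exact h1.1 (by rw [← e1, e2]; exact X0D _ hl0)

end Tower
end Sys

/-! ### Linkings -/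

/-- From `v` the set `B` can be reached by `n` steps of the relation `R`. -/
def Dist {V : Type u} (R : V → V → Prop) (B : Set V) : ℕ → V → Prop
  | 0, v => v ∈ B
  | n + 1, v => ∃ t, R v t ∧ Dist R B n t

/-- From `v` the set `B` can be reached along the relation `R`. -/
def Term {V : Type u} (R : V → V → Prop) (B : Set V) (v : V) : Prop := ∃ n, Dist R B n v

theorem Term.base {V : Type u} {R : V → V → Prop} {B : Set V} {v : V} (h : v ∈ B) : Term R B v :=
  ⟨0, h⟩

theorem Term.step {V : Type u} {R : V → V → Prop} {B : Set V} {v t : V} (h : R v t)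
    (ht : Term R B t) : Term R B v := by
  obtain ⟨n, hn⟩ := ht
  exact ⟨n + 1, t, h, hn⟩

namespace Sys
variable {V : Type u}

/-- `G` sends every vertex of `N` outside `B` to its successor on a path or to itself, in such a way
that the paths are disjoint, stay in `N`, and lead to `B` from each source in `N` (and from each
vertex that is moved at all). -/
structure LinkedOn (S : Sys V) (N : Set V) (G : V → V) : Prop where
  maps : ∀ v ∈ N, v ∉ S.B → G v ∈ N
  edge : ∀ v ∈ N, v ∉ S.B → G v ≠ v → S.E v (G v) ∧ G v ∉ S.A
  inj : Set.InjOn G (N \ S.B)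
  src : ∀ a ∈ N, a ∈ S.A → ∃ n, G^[n] a ∈ S.B
  norm : ∀ v ∈ N, v ∉ S.B → G v ≠ v → ∃ n, G^[n] v ∈ S.B

/-- A linking can be read off from any relation with unique predecessors: follow shortest paths
to `B`. -/
theorem LinkedOn.of_rel {S : Sys V} {N : Set V} (R : V → V → Prop)
    (hR : ∀ v ∈ N, ∀ t, v ∉ S.B → R v t → t ∈ N ∧ S.E v t ∧ t ∉ S.A)
    (hu : ∀ v ∈ N, ∀ v' ∈ N, ∀ t, v ∉ S.B → v' ∉ S.B → R v t → R v' t → v = v')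
    (hs : ∀ a ∈ N, a ∈ S.A → Term R S.B a) : ∃ G, S.LinkedOn N G := by
  classical
  let rk : V → ℕ := fun v => sInf {n | Dist R S.B n v}
  have hstep : ∀ v, Term R S.B v ∧ v ∉ S.B → ∃ t, R v t ∧ Term R S.B t ∧ rk t < rk v := by
    rintro v ⟨hv, hB⟩
    have h1 : Dist R S.B (rk v) v := Nat.sInf_mem (s := {n | Dist R S.B n v}) hv
    rcases h2 : rk v with _ | k
    · rw [h2] at h1
      exact absurd h1 hB
    · rw [h2] at h1
      obtain ⟨t, h3, h4⟩ := h1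
      exact ⟨t, h3, ⟨k, h4⟩, Nat.lt_succ_of_le (Nat.sInf_le h4)⟩
  choose! g hg1 hg2 hg3 using hstep
  let G : V → V := fun v => if Term R S.B v ∧ v ∉ S.B then g v else v
  have hG : ∀ v, Term R S.B v → v ∉ S.B → G v = g v := fun v h1 h2 => if_pos ⟨h1, h2⟩
  have hG' : ∀ v, G v ≠ v → Term R S.B v ∧ v ∉ S.B := fun v h1 => by
    by_contra h2
    exact h1 (if_neg h2)
  have hT : ∀ k v, rk v ≤ k → Term R S.B v → ∃ n, G^[n] v ∈ S.B := by
    intro k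
    induction k with
    | zero =>
      intro v h1 h2
      by_cases hB : v ∈ S.B
      · exact ⟨0, hB⟩
      · have := hg3 v ⟨h2, hB⟩
        omega
    | succ k ih =>
      intro v h1 h2
      by_cases hB : v ∈ S.B
      · exact ⟨0, hB⟩
      · have := hg3 v ⟨h2, hB⟩
        obtain ⟨n, hn⟩ := ih (g v) (by omega) (hg2 v ⟨h2, hB⟩)
        exact ⟨n + 1, by rwa [Function.iterate_succ_apply, hG v h2 hB]⟩
  have hne : ∀ v, Term R S.B v → v ∉ S.B → g v ≠ v := fun v h1 h2 h3 => by
    have := hg3 v ⟨h1, h2⟩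
    rw [h3] at this
    omega
  refine ⟨G, fun v hv hB => ?_, fun v hv hB hne' => ?_, ?_, fun a ha hA => hT _ a le_rfl (hs a ha hA),
    fun v hv hB hne' => hT _ v le_rfl (hG' v hne').1⟩
  · by_cases h1 : Term R S.B v
    · rw [hG v h1 hB]
      exact (hR v hv _ hB (hg1 v ⟨h1, hB⟩)).1
    · have : G v = v := if_neg fun h2 => h1 h2.1
      rwa [this]
  · have h1 := (hG' v hne').1
    rw [hG v h1 hB]
    exact (hR v hv _ hB (hg1 v ⟨h1, hB⟩)).2
  · rintro v ⟨hv, hB⟩ v' ⟨hv', hB'⟩ e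
    by_cases h1 : Term R S.B v <;> by_cases h1' : Term R S.B v'
    · rw [hG v h1 hB, hG v' h1' hB'] at e
      exact hu v hv v' hv' (g v) hB hB' (hg1 v ⟨h1, hB⟩) (e ▸ hg1 v' ⟨h1', hB'⟩)
    · have : G v' = v' := if_neg fun h2 => h1' h2.1
      rw [hG v h1 hB, this] at e
      exact absurd (e ▸ hg2 v ⟨h1, hB⟩) h1'
    · have : G v = v := if_neg fun h2 => h1 h2.1
      rw [hG v' h1' hB', this] at e
      exact absurd (e ▸ hg2 v' ⟨h1', hB'⟩) h1
    · have h2 : G v = v := if_neg fun h2 => h1 h2.1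
      have h3 : G v' = v' := if_neg fun h2 => h1' h2.1
      rwa [h2, h3] at e

theorem del_empty (S : Sys V) : S.del ∅ = S := by simp [del]

/-- Sources that have been deleted do not matter. -/
theorem src_del_unh {S : Sys V} {s : V} {P : Set V} (hs : s ∈ P) (h : ¬ ((S.src {s}).del P).Hind) :
    ¬ (S.del P).Hind := by
  rintro ⟨X, f, l, hf, hl, hm⟩
  have hnb : ∀ w, w ∈ ((S.src {s}).del P).nb X ↔ w ∈ (S.del P).nb X := by
    intro w
    simp only [mem_nb, del, src, Set.mem_sdiff, Set.mem_union, Set.mem_singleton_iff]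
    constructor
    · rintro ⟨h1, h2, h3⟩
      exact ⟨h1, fun h' => h2 (Or.inl h'), h3⟩
    · rintro ⟨h1, h2, h3⟩
      exact ⟨h1, fun h' => h'.elim h2 (fun e => h1.2 (e ▸ hs)), h3⟩
  refine h ⟨X, f, l, ⟨hf.subU, hf.notB, fun w hw => hf.maps w ((hnb w).1 hw),
    fun w hw => hf.edge w ((hnb w).1 hw), fun w hw w' hw' => hf.inj ((hnb w).1 hw) ((hnb w').1 hw'),
    fun w hw hb => hf.fin w ((hnb w).1 hw) (hb.sets fun n h' => hb.1 n (Or.inl h'))⟩, hl,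
    fun w hw => hm w ((hnb w).1 hw)⟩

end Sys

/-! ### Layers and requests -/

namespace Sys
variable {V : Type u}

/-- The vertices of the safe path from the special vertex, if there is one. -/
def pset (S : Sys V) (D : Set V) (o : Option V) : Set V := {x | ∃ s, o = some s ∧ x ∈ S.oset D s}

/-- The data chosen for a layer: a special vertex `s` from which a safe path is taken, the linking
`H` of the rest of the layer, and the map `Fs` obtained from the common waveform map by switching
from `z` to `m` in order to realize an additional edge from `z` to `u`, where `v = some (z, u, m)`. -/
structure LD (V : Type u) where
  /-- the special vertex -/
  s : Option V
  /-- the linking of the layer system -/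
  H : V → V
  /-- the switched waveform map -/
  Fs : V → V
  /-- the endpoints of the additional edge to be realized, and the end of the alternating walk -/
  v : Option (V × V × V)

namespace LD
variable (S : Sys V) (F : V → V) (D D' : Set V) (L : LD V)

/-- The layer system after removal of the safe path. -/
def W : Sys V := S.lay F D D' (S.pset D L.s)

/-- The linking of the layer uses the edge from `z` to `u`, which is not an edge of the original
system. -/
def VReq (z u : V) : Prop :=
  z ∈ (L.W S F D D').U ∧ z ∉ (L.W S F D D').B ∧ L.H z = u ∧ u ≠ z ∧ ¬ S.E z u

/-- The vertex `v` of the layer needs to escape. -/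
def EReq (v : V) : Prop := v ∈ (L.W S F D D').U ∧ v ∉ S.B ∧ ∃ target, S.Esc D' v target

/-- `t` is the vertex at which the path obtained by applying the inverse of `Fs` repeatedly,
starting from `z`, leaves the waveform. -/
def Exit (t : V) : Prop := t ∈ S.LN D ∧ t ∉ S.LX D ∧ t ∈ D' ∧
  ∃ z u m n, L.v = some (z, u, m) ∧ L.Fs^[n] t = z ∧ ∀ i < n, L.Fs^[i] t ∈ S.LN D

/-- The internal requirements on the data of the layer `D' \ D`. -/
structure Good : Prop where
  s_mem : ∀ s, L.s = some s → s ∈ D' ∧ s ∉ D ∧ s ∉ S.LX D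
  sub : S.pset D L.s ⊆ D'
  link : (L.W S F D D').LinkedOn (L.W S F D D').U L.H
  maps : ∀ w ∈ S.LN D, L.Fs w ∈ S.LX D ∨ ∃ u m, L.v = some (L.Fs w, u, m)
  edge : ∀ w ∈ S.LN D, L.Fs w = w ∨ S.E (L.Fs w) w
  inj : Set.InjOn L.Fs (S.LN D)
  hits : ∀ x, (x ∈ S.LX D ∨ ∃ u m, L.v = some (x, u, m)) → (∀ z u, L.v ≠ some (z, u, x)) →
    ∃ w ∈ S.LN D, L.Fs w = x
  finite : {w | L.Fs w ≠ F w}.Finite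
  stay : ∀ w ∈ S.LN D, L.Fs w ∈ D' → w ∈ D'
  vr : ∀ z u m, L.v = some (z, u, m) → z ∈ D ∧ u ∈ D ∧ m ∈ S.LX D ∧ m ∈ D' ∧ u ∈ S.nb {m}
  exit : ∀ t, L.Exit S D D' t → L.s = some t

/-- The data of the layer `j` fulfil the request of an earlier layer assigned to `j` by `e`. -/
structure Serve {J : Type u} [LinearOrder J] (σ : J → J) (N : J → Set V) (e : V → Bool → J) (j : J)
    (prev : ∀ i, i < j → LD V) : Prop where
  v1 : ∀ i (hi : i < j) z u, (prev i hi).VReq S F (N i) (N (σ i)) z u → e u true = j →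
    ∃ m, L.v = some (z, u, m)
  v2 : ∀ z u m, L.v = some (z, u, m) →
    ∃ i, ∃ hi : i < j, (prev i hi).VReq S F (N i) (N (σ i)) z u ∧ e u true = j
  s1 : ∀ i (hi : i < j) v, (prev i hi).EReq S F (N i) (N (σ i)) v → e v false = j →
    ∃ w, L.s = some w ∧ S.E v w ∧ w ∉ S.A ∧ w ∉ S.LN (N j)

end LD

/-- The allocation of requests to later layers. -/
structure Alloc {J : Type u} [LinearOrder J] (σ : J → J) (N : J → Set V) (e : V → Bool → J) :
    Prop where
  lt : ∀ {v j} b, v ∈ N (σ j) → v ∉ N j → j < e v b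
  inj : ∀ {v v' b b' i i'}, v ∈ N i → v' ∈ N i' → e v b = e v' b' → v = v' ∧ b = b'

section VReqLemmas
variable {S : Sys V} {F : V → V} {D D' : Set V} {L : LD V} {z u v : V}

theorem LD.VReq.spec (hL : L.Good S F D D') (h : L.VReq S F D D' z u) :
    z ∈ D' ∧ z ∉ D ∧ z ∉ S.B ∧ u ∈ (L.W S F D D').U ∧ u ∈ D' ∧ u ∉ D ∧ u ∉ S.LN D ∧ u ∉ S.A ∧
      (¬ ∃ w, S.Esc D' z w) ∧ Virt S F D' (S.LN D') z u := by
  obtain ⟨h1, h2, rfl, h4, h5⟩ := h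
  have hu := hL.link.maps z h1 h2
  obtain ⟨h6, h7⟩ := hL.link.edge z h1 h2 h4
  exact ⟨h1.1.1.1, h1.1.1.2, fun h' => h2 (Or.inl h'), hu, hu.1.1.1, hu.1.1.2,
    fun h' => h7 (Or.inr h'), fun h' => h7 (Or.inl h'), fun h' => h2 (Or.inr h'),
    h6.resolve_left h5⟩

theorem LD.EReq.mem (h : L.EReq S F D D' v) : v ∈ D' ∧ v ∉ D := ⟨h.1.1.1.1, h.1.1.1.2⟩

end VReqLemmas

namespace Tower
variable {S : Sys V} {J : Type u} [LinearOrder J] {σ : J → J} {N : J → Set V} {F : V → V}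
  {i j : J} {w z y m x : V} {e : V → Bool → J}

/-- The system of the layer `j`, without a safe path from a prescribed vertex, is linked: by
`lay_unh` it is unhindered, so that the induction hypothesis applies. -/
theorem exists_H (h : Tower S σ N F) (he : Alloc σ N e)
    (IH : ∀ T : Sys V, T.U ⊆ N (σ j) \ N j → ¬ T.Hind → ∃ G, T.LinkedOn T.U G) (o : Option V)
    (ho : ∀ s, o = some s → s ∈ N (σ j) ∧ s ∉ N j ∧ s ∉ S.LX (N j)) :
    S.pset (N j) o ⊆ N (σ j) ∧ ∃ H, (S.lay F (N j) (N (σ j)) (S.pset (N j) o)).LinkedOn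
      (S.lay F (N j) (N (σ j)) (S.pset (N j) o)).U H := by
  have hsub : S.pset (N j) o ⊆ N (σ j) := by
    rintro x ⟨s, hs, hx⟩
    obtain ⟨h1, h2, h3⟩ := ho s hs
    exact h.path h1 h2 h3 hx
  refine ⟨hsub, IH _ (fun x hx => hx.1.1) ?_⟩
  refine h.lay_unh hsub ?_ (e := fun v => e v true) (fun v h1 h2 => he.lt true h1 h2) ?_
  · rcases o with _ | s
    · have : S.pset (N j) none = ∅ := by ext x; simp [pset]
      rw [this, del_empty]
      exact quo_unh _
    · obtain ⟨h1, h2, h3⟩ := ho s rfl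
      have : S.pset (N j) (some s) = S.oset (N j) s := by ext x; simp [pset]
      have hp := opath_spec (h.subU _ h1) h2 h3
      rw [this]
      exact src_del_unh (s := s) ⟨0, Nat.zero_le _, hp.start⟩ hp.unh
  · rintro v ⟨hv, -⟩ v' ⟨hu, -⟩ e1
    exact (he.inj hv hu e1).1

/-- The data of a layer without switching. -/
theorem good_none (h : Tower S σ N F) (he : Alloc σ N e)
    (IH : ∀ T : Sys V, T.U ⊆ N (σ j) \ N j → ¬ T.Hind → ∃ G, T.LinkedOn T.U G) (o : Option V)
    (ho : ∀ s, o = some s → s ∈ N (σ j) ∧ s ∉ N j ∧ s ∉ S.LX (N j)) :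
    ∃ L : LD V, L.Good S F (N j) (N (σ j)) ∧ L.s = o ∧ L.v = none := by
  obtain ⟨h1, H, hH⟩ := h.exists_H he IH o ho
  have hw := h.wf j
  refine ⟨⟨o, H, F, none⟩, ⟨ho, h1, hH, fun w hw' => Or.inl (hw.maps w hw'), hw.edge, hw.inj, ?_,
    by simp, fun w hw' => (h.closed hw' _).2, by simp, ?_⟩, rfl, rfl⟩
  · rintro x (hx | ⟨u, m, hx⟩) -
    · exact hw.onto (h.unh j) hx
    · simp at hx
  · rintro t ⟨-, -, -, z, u, m, n, h2, -⟩
    simp at h2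

/-- The data of a layer can be chosen so as to serve the request allotted to that layer: a virtual
edge is served by switching, and then the safe path starts at the exit of the switched waveform if
there is one; an escape is served by the safe path. -/
theorem exists_layer (h : Tower S σ N F) (he : Alloc σ N e)
    (IH : ∀ T : Sys V, T.U ⊆ N (σ j) \ N j → ¬ T.Hind → ∃ G, T.LinkedOn T.U G)
    (prev : ∀ i, i < j → LD V) (hprev : ∀ i (hi : i < j), (prev i hi).Good S F (N i) (N (σ i))) :
    ∃ L : LD V, L.Good S F (N j) (N (σ j)) ∧ L.Serve S F σ N e j prev := by
  by_cases hA : ∃ i, ∃ hi : i < j, ∃ z u, (prev i hi).VReq S F (N i) (N (σ i)) z u ∧ e u true = j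
  · obtain ⟨i, hi, z, u, hr, hej⟩ := hA
    obtain ⟨hzD, hzi, hzB, huU, huD, hui, huN, huA, hesc, hv⟩ := hr.spec (hprev i hi)
    obtain ⟨F', m, hsw⟩ := h.switch hi hzD hzB huD hui huN hesc hv
    have hσ : N (σ i) ⊆ N j := h.mono (h.le hi)
    have huniq : ∀ t t' n n', n ≤ n' → t ∈ S.LN (N j) → t ∉ S.LX (N j) →
        F'^[n] t = z → (∀ i < n, F'^[i] t ∈ S.LN (N j)) → t' ∈ S.LN (N j) →
        F'^[n'] t' = z → (∀ i < n', F'^[i] t' ∈ S.LN (N j)) → t = t' := by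
      intro t t' n n' hn ht htX e1 h1 ht' e2 h2
      obtain ⟨d, rfl⟩ := Nat.exists_eq_add_of_le' hn
      have hb : ∀ k ≤ n, F'^[n - k] t = F'^[d + (n - k)] t' := by
        intro k
        induction k with
        | zero => intro _; simpa using e1.trans e2.symm
        | succ k ih =>
          intro hk
          refine hsw.inj (h1 _ (by omega)) (h2 _ (by omega)) ?_
          have := ih (by omega)
          rw [show n - k = (n - (k + 1)) + 1 by omega, ← add_assoc, Function.iterate_succ_apply',
            Function.iterate_succ_apply'] at this
          exact this
      have h3 := hb n le_rfl
      simp only [Nat.sub_self, add_zero, Function.iterate_zero, id] at h3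
      rcases d with _ | d
      · exact h3
      · exfalso
        rw [Function.iterate_succ_apply'] at h3
        rcases hsw.maps _ (h2 d (by omega)) with h4 | h4
        · exact htX (h3 ▸ h4)
        · exact (LN_sub ht).2.1 (hσ (by rw [h3, h4]; exact hzD))
    let Ex : V → Prop := fun t => t ∈ S.LN (N j) ∧ t ∉ S.LX (N j) ∧ t ∈ N (σ j) ∧
      ∃ n, F'^[n] t = z ∧ ∀ i < n, F'^[i] t ∈ S.LN (N j)
    have hex : ∃ o : Option V, (∀ s, o = some s → Ex s) ∧ ∀ t, Ex t → o = some t := by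
      by_cases hx : ∃ t, Ex t
      · obtain ⟨t, ht⟩ := hx
        refine ⟨some t, fun s hs => ?_, fun t' ht' => ?_⟩
        · rw [Option.some.injEq] at hs
          exact hs ▸ ht
        · obtain ⟨h1, h2, h3, n, h4, h5⟩ := ht
          obtain ⟨h1', h2', h3', n', h4', h5'⟩ := ht'
          rcases le_total n n' with hn | hn
          · rw [huniq t t' n n' hn h1 h2 h4 h5 h1' h4' h5']
          · rw [huniq t' t n' n hn h1' h2' h4' h5' h1 h4 h5]
      · exact ⟨none, by simp, fun t ht => absurd ⟨t, ht⟩ hx⟩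
    obtain ⟨o, ho1, ho2⟩ := hex
    have ho : ∀ s, o = some s → s ∈ N (σ j) ∧ s ∉ N j ∧ s ∉ S.LX (N j) := fun s hs =>
      ⟨(ho1 s hs).2.2.1, (LN_sub (ho1 s hs).1).2.1, (ho1 s hs).2.1⟩
    obtain ⟨h1, H, hH⟩ := h.exists_H he IH o ho
    refine ⟨⟨o, H, F', some (z, u, m)⟩, ⟨ho, h1, hH, ?_, hsw.edge, hsw.inj, ?_, hsw.finite, ?_, ?_,
      ?_⟩, ?_, ?_, ?_⟩
    · intro w hw
      rcases hsw.maps w hw with h2 | h2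
      · exact Or.inl h2
      · exact Or.inr ⟨u, m, by simp [h2]⟩
    · intro x hx hxm
      refine hsw.hits x ?_ fun e1 => hxm z u (by simp [e1])
      rcases hx with hx | ⟨u', m', hx⟩
      · exact Or.inr hx
      · simp only [Option.some.injEq, Prod.mk.injEq] at hx
        exact Or.inl hx.1.symm
    · intro w hw hF
      by_cases e1 : F' w = F w
      · rw [show (LD.mk o H F' (some (z, u, m))).Fs w = F w from e1] at hF
        exact (h.closed hw _).2 hF
      · exact (hsw.chg w e1).2.1
    · intro z' u' m' hx
      simp only [Option.some.injEq, Prod.mk.injEq] at hx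
      obtain ⟨rfl, rfl, rfl⟩ := hx
      exact ⟨hσ hzD, hσ huD, hsw.mX, hsw.mL, hsw.ym⟩
    · rintro t ⟨h2, h3, h4, z', u', m', n, hx, h5, h6⟩
      simp only [Option.some.injEq, Prod.mk.injEq] at hx
      obtain ⟨rfl, rfl, rfl⟩ := hx
      exact ho2 t ⟨h2, h3, h4, n, h5, h6⟩
    · intro i' hi' z' u' hr' hej'
      have hu := (hr'.spec (hprev i' hi'))
      have := (he.inj huD hu.2.2.2.2.1 (hej.trans hej'.symm)).1
      subst this
      have := h.layer_unique huD hui hu.2.2.2.2.1 hu.2.2.2.2.2.1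
      subst this
      have := (hprev i hi).link.inj ⟨hr.1, hr.2.1⟩ ⟨hr'.1, hr'.2.1⟩ (hr.2.2.1.trans hr'.2.2.1.symm)
      subst this
      exact ⟨m, rfl⟩
    · intro z' u' m' hx
      simp only [Option.some.injEq, Prod.mk.injEq] at hx
      obtain ⟨rfl, rfl, rfl⟩ := hx
      exact ⟨i, hi, hr, hej⟩
    · intro i' hi' v hr' hej'
      have := (he.inj huD hr'.mem.1 (hej.trans hej'.symm)).2
      simp at this
  · by_cases hB : ∃ i, ∃ hi : i < j, ∃ v, (prev i hi).EReq S F (N i) (N (σ i)) v ∧ e v false = j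
    · obtain ⟨i, hi, v, hr, hej⟩ := hB
      obtain ⟨w, hw, h1, h2, h3⟩ := h.esc hi hr.mem.1 hr.2.2
      have hwX : w ∉ S.LX (N j) := fun h' =>
        h3 (mem_nb_self ⟨(LX_sub h').1, h2⟩ h1.2.1 h')
      obtain ⟨L, hL, hs, hv⟩ := h.good_none he IH (some w) (by
        rintro s hs
        rw [Option.some.injEq] at hs
        exact hs ▸ ⟨hw, h2, hwX⟩)
      refine ⟨L, hL, fun i hi z u hr' hej' => absurd ⟨i, hi, z, u, hr', hej'⟩ hA, by simp [hv], ?_⟩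
      intro i' hi' v' hr' hej'
      have := (he.inj hr.mem.1 hr'.mem.1 (hej.trans hej'.symm)).1
      subst this
      refine ⟨w, hs, ?_, h1.2.1, h3⟩
      rcases (mem_nb_singleton.1 h1).2.2 with e1 | h4
      · exact absurd (h.mono (h.le hi) hr.mem.1) (e1 ▸ h2)
      · exact h4
    · obtain ⟨L, hL, hs, hv⟩ := h.good_none he IH none (by simp)
      exact ⟨L, hL, fun i hi z u hr' hej' => absurd ⟨i, hi, z, u, hr', hej'⟩ hA, by simp [hv],
        fun i hi v hr' hej' => absurd ⟨i, hi, v, hr', hej'⟩ hB⟩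

theorem exists_layers [WellFoundedLT J] (h : Tower S σ N F) (he : Alloc σ N e)
    (IH : ∀ j, ∀ T : Sys V, T.U ⊆ N (σ j) \ N j → ¬ T.Hind → ∃ G, T.LinkedOn T.U G) :
    ∃ L : J → LD V, ∀ j, (L j).Good S F (N j) (N (σ j)) ∧
      (L j).Serve S F σ N e j (fun i _ => L i) := by
  obtain ⟨L, hL⟩ := exists_rec (J := J) (α := LD V)
    (fun j prev L => (∀ i (hi : i < j), (prev i hi).Good S F (N i) (N (σ i))) →
      L.Good S F (N j) (N (σ j)) ∧ L.Serve S F σ N e j prev) (by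
    intro j prev
    by_cases hp : ∀ i (hi : i < j), (prev i hi).Good S F (N i) (N (σ i))
    · obtain ⟨L, hL⟩ := h.exists_layer he (IH j) prev hp
      exact ⟨L, fun _ => hL⟩
    · exact ⟨⟨none, id, id, none⟩, fun h' => absurd h' hp⟩)
  refine ⟨L, fun j => hL j ?_⟩
  have : ∀ j, (L j).Good S F (N j) (N (σ j)) := by
    intro j
    induction j using WellFoundedLT.induction with
    | ind j ih => exact (hL j ih).1
  exact fun i _ => this i

end Tower
end Sys

/-! ### Assembling the linkings of the layers -/

namespace Sys
variable {V : Type u}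

/-- The successor relation of the assembled linking. The possible predecessors `v` of a vertex `t`
of the layer `l` are: the predecessor given by the switched waveform map of the layer; the
predecessor on the safe path; the vertex which escapes to `t`; and the predecessor in the linking
of the layer, or the end of the alternating walk which realizes the last edge of that linking. -/
def Nx (S : Sys V) {J : Type u} [LinearOrder J] (F : V → V) (σ : J → J) (N : J → Set V)
    (e : V → Bool → J) (L : J → LD V) (v t : V) : Prop :=
  ∃ l, t ∈ N (σ l) ∧ t ∉ N l ∧ S.E v t ∧ t ∉ S.A ∧
    ((t ∈ S.LN (N l) ∧ (L l).Fs t = v) ∨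
    (t ∉ S.LN (N l) ∧ ∃ s k, (L l).s = some s ∧ k < (S.opath (N l) s).2 ∧
      v = (S.opath (N l) s).1 k ∧ t = (S.opath (N l) s).1 (k + 1)) ∨
    (t ∉ S.LN (N l) ∧ (L l).s = some t ∧ (∃ i, v ∈ N i) ∧ e v false = l) ∨
    (t ∉ S.LN (N l) ∧ t ∈ ((L l).W S F (N l) (N (σ l))).U ∧
      ∃ z ∈ ((L l).W S F (N l) (N (σ l))).U, z ∉ ((L l).W S F (N l) (N (σ l))).B ∧ (L l).H z = t ∧
        ((S.E z t ∧ v = z) ∨ (¬ S.E z t ∧ (L (e t true)).v = some (z, t, v)))))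

namespace Tower
variable {S : Sys V} {J : Type u} [LinearOrder J] {σ : J → J} {N : J → Set V} {F : V → V}
  {i j : J} {w z y m x : V} {e : V → Bool → J} {L : J → LD V}

theorem mem_pset_start (h : Tower S σ N F) {s : V} (hL : (L j).Good S F (N j) (N (σ j)))
    (hs : (L j).s = some s) : SafePath (S.osys (N j) s) s (S.opath (N j) s).1 (S.opath (N j) s).2 ∧
      s ∈ S.pset (N j) (L j).s := by
  obtain ⟨h1, h2, h3⟩ := hL.s_mem s hs
  have hp := opath_spec (h.subU _ h1) h2 h3
  exact ⟨hp, s, hs, 0, Nat.zero_le _, hp.start⟩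

/-- The paths of the assembled linking are disjoint. -/
theorem Nx_unique (h : Tower S σ N F) (he : Alloc σ N e)
    (hL : ∀ j, (L j).Good S F (N j) (N (σ j))) {v v' t : V} (h1 : Nx S F σ N e L v t)
    (h2 : Nx S F σ N e L v' t) : v = v' := by
  obtain ⟨l, hl1, hl2, -, -, h1⟩ := h1
  obtain ⟨l', hl1', hl2', -, -, h2⟩ := h2
  obtain rfl := h.layer_unique hl1 hl2 hl1' hl2'
  have hstart : ∀ s k, (L l).s = some s → k < (S.opath (N l) s).2 →
      (S.opath (N l) s).1 (k + 1) ≠ s := by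
    intro s k hs hk e1
    have hp := (h.mem_pset_start (hL l) hs).1
    have := hp.inj (Set.mem_Iic.2 hk) (Set.mem_Iic.2 (Nat.zero_le _)) (e1.trans hp.start.symm)
    omega
  rcases h1 with ⟨a1, a2⟩ | ⟨a1, s, k, a2, a3, a4, a5⟩ | ⟨a1, a2, ⟨i, a3⟩, a4⟩ |
      ⟨a1, a2, z, a3, a4, a5, a6⟩ <;>
    rcases h2 with ⟨b1, b2⟩ | ⟨b1, s', k', b2, b3, b4, b5⟩ | ⟨b1, b2, ⟨i', b3⟩, b4⟩ |
      ⟨b1, b2, z', b3, b4, b5, b6⟩ <;> first | exact absurd a1 b1 | exact absurd b1 a1 | skip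
  · exact a2.symm.trans b2
  · obtain rfl : s = s' := by rw [a2] at b2; exact Option.some.inj b2
    have hp := (h.mem_pset_start (hL l) a2).1
    have := hp.inj (Set.mem_Iic.2 a3) (Set.mem_Iic.2 b3) (a5.symm.trans b5)
    obtain rfl : k = k' := by omega
    exact a4.trans b4.symm
  · obtain rfl : s = t := by rw [a2] at b2; exact Option.some.inj b2
    exact absurd a5.symm (hstart s k a2 a3)
  · exact absurd ⟨s, a2, k + 1, a3, a5.symm⟩ b2.2
  · obtain rfl : s' = t := by rw [a2] at b2; exact (Option.some.inj b2).symm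
    exact absurd b5.symm (hstart s' k' b2 b3)
  · exact (he.inj a3 b3 (a4.trans b4.symm)).1
  · exact absurd (h.mem_pset_start (hL l) a2).2 b2.2
  · exact absurd ⟨s', b2, k' + 1, b3, b5.symm⟩ a2.2
  · exact absurd (h.mem_pset_start (hL l) b2).2 a2.2
  · obtain rfl := (hL l).link.inj ⟨a3, a4⟩ ⟨b3, b4⟩ (a5.trans b5.symm)
    rcases a6 with ⟨a6, a7⟩ | ⟨a6, a7⟩ <;> rcases b6 with ⟨b6, b7⟩ | ⟨b6, b7⟩
    · exact a7.trans b7.symm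
    · exact absurd a6 b6
    · exact absurd b6 a6
    · rw [a7] at b7
      simpa using b7

/-- The vertices of the safe path of a layer lead to `B` along that path. -/
theorem term_path (h : Tower S σ N F) (hL : ∀ j, (L j).Good S F (N j) (N (σ j)))
    (hx : x ∈ S.pset (N j) (L j).s) : Term (Nx S F σ N e L) S.B x := by
  obtain ⟨s, hs, k, hk, rfl⟩ := hx
  have hp := (h.mem_pset_start (hL j) hs).1
  have key : ∀ d, d ≤ (S.opath (N j) s).2 →
      Term (Nx S F σ N e L) S.B ((S.opath (N j) s).1 ((S.opath (N j) s).2 - d)) := by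
    intro d
    induction d with
    | zero => exact fun _ => .base hp.last
    | succ d ih =>
      intro hd
      have hk' : (S.opath (N j) s).2 - (d + 1) < (S.opath (N j) s).2 := by omega
      have h2 : (S.opath (N j) s).2 - d = (S.opath (N j) s).2 - (d + 1) + 1 := by omega
      have h3 := ih (by omega)
      rw [h2] at h3
      refine .step ⟨j, (hL j).sub ⟨s, hs, _, Set.mem_Iic.2 hk', rfl⟩, (hp.memU _ hk').1.2,
        hp.edge _ hk', fun h' => hp.notA _ hk' (Or.inl (Or.inl h')), Or.inr (Or.inl
          ⟨fun h' => hp.notA _ hk' (Or.inl (Or.inr h')), s, _, hs, hk', rfl, rfl⟩)⟩ h3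
  have hk : k ≤ (S.opath (N j) s).2 := hk
  have := key ((S.opath (N j) s).2 - k) (by omega)
  rwa [show (S.opath (N j) s).2 - ((S.opath (N j) s).2 - k) = k by omega] at this

/-- Applying the inverse of the switched waveform map repeatedly to a vertex `x` outside its domain,
one arrives after finitely many steps at a vertex outside the waveform set or at the missed
vertex: otherwise `Wf.fwd_fin` is violated, the map being switched at finitely many vertices only.
So `x` leads to `B` if all these possible ends do. -/
theorem term_orbit (h : Tower S σ N F) (hL : ∀ j, (L j).Good S F (N j) (N (σ j)))
    (hx : x ∈ S.LX (N j) ∨ ∃ u m, (L j).v = some (x, u, m)) (hxN : x ∉ S.LN (N j))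
    (hxD : x ∈ N (σ j)) (hm : ∀ z u m, (L j).v = some (z, u, m) → Term (Nx S F σ N e L) S.B m)
    (hexit : ∀ t, t ∈ S.LN (N j) → t ∉ S.LX (N j) → t ∈ N (σ j) →
      (∃ n, (L j).Fs^[n] t = x ∧ ∀ i < n, (L j).Fs^[i] t ∈ S.LN (N j)) →
      Term (Nx S F σ N e L) S.B t) : Term (Nx S F σ N e L) S.B x := by
  classical
  by_contra hT
  set Fs := (L j).Fs with hFs
  let φ : V → V := fun x => if h : ∃ w ∈ S.LN (N j), Fs w = x then h.choose else x
  have hφ : ∀ x, (x ∈ S.LX (N j) ∨ ∃ u m, (L j).v = some (x, u, m)) →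
      ¬ Term (Nx S F σ N e L) S.B x → φ x ∈ S.LN (N j) ∧ Fs (φ x) = x := by
    intro x h1 h2
    have h3 : ∃ w ∈ S.LN (N j), Fs w = x := (hL j).hits x h1 fun z u h4 => h2 (hm z u x h4)
    have := h3.choose_spec
    simpa only [φ, dif_pos h3] using this
  let X : ℕ → V := fun k => φ^[k] x
  have hX : ∀ k, X (k + 1) = φ (X k) := fun k => Function.iterate_succ_apply' _ _ _
  have inv : ∀ k, (X k ∈ S.LX (N j) ∨ ∃ u m, (L j).v = some (X k, u, m)) ∧
      ¬ Term (Nx S F σ N e L) S.B (X k) ∧ X k ∈ N (σ j) ∧ X (k + 1) ≠ X k ∧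
      (Fs^[k] (X k) = x ∧ ∀ i < k, Fs^[i] (X k) ∈ S.LN (N j)) := by
    intro k
    induction k with
    | zero =>
      refine ⟨hx, hT, hxD, fun e1 => hxN ?_, rfl, by simp⟩
      have := (hφ x hx hT).1
      rw [show φ x = X 1 from rfl, e1] at this
      exact this
    | succ k ih =>
      obtain ⟨i1, i2, i3, i4, i5, i6⟩ := ih
      obtain ⟨h1, h2⟩ := hφ _ i1 i2
      rw [← hX] at h1 h2
      have hD : X (k + 1) ∈ N (σ j) := (hL j).stay _ h1 (by rw [← hFs, h2]; exact i3)
      have hT' : ¬ Term (Nx S F σ N e L) S.B (X (k + 1)) := by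
        intro h3
        refine i2 (.step ⟨j, hD, (LN_sub h1).2.1, ?_, (LN_sub h1).2.2, Or.inl ⟨h1, h2⟩⟩ h3)
        rcases (hL j).edge _ h1 with h4 | h4
        · exact absurd (h4.symm.trans h2) i4
        · rwa [← hFs, h2] at h4
      have h5 : Fs^[k + 1] (X (k + 1)) = x ∧ ∀ i < k + 1, Fs^[i] (X (k + 1)) ∈ S.LN (N j) := by
        refine ⟨by rw [Function.iterate_succ_apply, h2, i5], fun i hi => ?_⟩
        rcases i with _ | i
        · exact h1
        · rw [Function.iterate_succ_apply, h2]
          exact i6 i (by omega)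
      have hLX : X (k + 1) ∈ S.LX (N j) := by
        by_contra h6
        exact hT' (hexit _ h1 h6 hD ⟨k + 1, h5⟩)
      refine ⟨Or.inl hLX, hT', hD, fun e1 => i4 ?_, h5⟩
      have h7 := (hφ _ (Or.inl hLX) hT').2
      rw [← hX, e1, h2] at h7
      exact h7.symm
  have hN : ∀ k, X (k + 1) ∈ S.LN (N j) ∧ Fs (X (k + 1)) = X k := fun k => by
    rw [hX]
    exact hφ _ (inv k).1 (inv k).2.1
  have hne : ∀ a d, X a ≠ X (a + d + 1) := by
    intro a
    induction a with
    | zero =>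
      intro d e1
      have := (hN (0 + d)).1
      rw [← e1] at this
      exact hxN this
    | succ a ih =>
      intro d e1
      refine ih d ?_
      rw [← (hN a).2, ← (hN (a + d + 1)).2, e1]
      congr 2
      omega
  have hinj : Function.Injective X := by
    intro a b e1
    rcases lt_trichotomy a b with hlt | heq | hgt
    · obtain ⟨d, rfl⟩ := Nat.exists_eq_add_of_lt hlt
      exact absurd e1 (hne a d)
    · exact heq
    · obtain ⟨d, rfl⟩ := Nat.exists_eq_add_of_lt hgt
      exact absurd e1.symm (hne b d)
  have hfin : (X ⁻¹' {w | Fs w ≠ F w}).Finite := (hL j).finite.preimage hinj.injOn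
  obtain ⟨n0, hn0⟩ := hfin.bddAbove
  have hF : ∀ n, n0 < n → F (X n) = Fs (X n) := by
    intro n hn
    by_contra h1
    have : n ≤ n0 := hn0 (show Fs (X n) ≠ F (X n) from fun h2 => h1 h2.symm)
    omega
  have hvN : ∀ k, (X (k + 1) ∈ S.LX (N j)) := by
    intro k
    rcases (inv (k + 1)).1 with h1 | ⟨u, m, h1⟩
    · exact h1
    · exact absurd ((hL j).vr _ _ _ h1).1 (LN_sub (hN k).1).2.1
  refine (h.wf j).fwd_fin (h.unh j) (fun n => X (n0 + 1 + n)) (fun a b e1 => ?_) (fun n => ?_)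
    (fun n => (hN (n0 + 1 + n)).1) (fun n => ?_)
  · have := hinj e1
    omega
  · have := hvN (n0 + n)
    rwa [show n0 + n + 1 = n0 + 1 + n by omega] at this
  · show F (X (n0 + 1 + n + 1)) = X (n0 + 1 + n)
    rw [hF _ (by omega)]
    exact (hN _).2

/-- Vertices of a layer that are linked inside the layer system lead to `B`: a target of the layer
system outside `B` escapes to the safe path of a later layer, and a virtual edge is replaced by
a detour through the layer to which it is allotted. -/
theorem term_H (h : Tower S σ N F) (he : Alloc σ N e)
    (hL : ∀ j, (L j).Good S F (N j) (N (σ j)))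
    (hS : ∀ j, (L j).Serve S F σ N e j (fun i _ => L i)) (n : ℕ) :
    ∀ v ∈ ((L i).W S F (N i) (N (σ i))).U, (L i).H^[n] v ∈ ((L i).W S F (N i) (N (σ i))).B →
      Term (Nx S F σ N e L) S.B v := by
  have hB : ∀ v ∈ ((L i).W S F (N i) (N (σ i))).U, v ∈ ((L i).W S F (N i) (N (σ i))).B →
      Term (Nx S F σ N e L) S.B v := by
    intro v hv hvB
    by_cases hv1 : v ∈ S.B
    · exact .base hv1
    · have hr : (L i).EReq S F (N i) (N (σ i)) v := ⟨hv, hv1, hvB.resolve_left hv1⟩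
      obtain ⟨w, h1, h2, h3, h4⟩ := (hS _).s1 i (he.lt false hr.mem.1 hr.mem.2) v hr rfl
      have h5 := (hL _).s_mem w h1
      exact .step ⟨e v false, h5.1, h5.2.1, h2, h3, Or.inr (Or.inr (Or.inl
        ⟨h4, h1, ⟨_, hr.mem.1⟩, rfl⟩))⟩ (h.term_path hL (h.mem_pset_start (hL _) h1).2)
  induction n with
  | zero => exact hB
  | succ n ih =>
    intro v hv hn
    by_cases hvB : v ∈ ((L i).W S F (N i) (N (σ i))).B
    · exact hB v hv hvB
    · rw [Function.iterate_succ_apply] at hn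
      have hu := (hL i).link.maps v hv hvB
      have hT := ih _ hu hn
      by_cases hne : (L i).H v = v
      · rwa [hne] at hT
      · obtain ⟨h6, h7⟩ := (hL i).link.edge v hv hvB hne
        by_cases hE : S.E v ((L i).H v)
        · exact .step ⟨i, hu.1.1.1, hu.1.1.2, hE, fun h' => h7 (Or.inl h'), Or.inr (Or.inr (Or.inr
            ⟨fun h' => h7 (Or.inr h'), hu, v, hv, hvB, rfl, Or.inl ⟨hE, rfl⟩⟩))⟩ hT
        · have hr : (L i).VReq S F (N i) (N (σ i)) v ((L i).H v) := ⟨hv, hvB, rfl, hne, hE⟩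
          have hlt := he.lt true hu.1.1.1 hu.1.1.2
          obtain ⟨m, hm⟩ := (hS _).v1 i hlt v _ hr rfl
          obtain ⟨g1, g2, g3, g4, g5⟩ := (hL _).vr _ _ _ hm
          have hvN : v ∉ S.LN (N (e ((L i).H v) true)) := fun h' => (LN_sub h').2.1 g1
          refine h.term_orbit hL (Or.inr ⟨_, m, hm⟩) hvN (h.mono (h.lt _).le g1) ?_ ?_
          · intro z' u' m' hx
            rw [hm] at hx
            simp only [Option.some.injEq, Prod.mk.injEq] at hx
            obtain ⟨rfl, rfl, rfl⟩ := hx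
            refine .step ⟨i, hu.1.1.1, hu.1.1.2, ?_, fun h' => h7 (Or.inl h'),
              Or.inr (Or.inr (Or.inr ⟨fun h' => h7 (Or.inr h'), hu, v, hv, hvB, rfl,
                Or.inr ⟨hE, hm⟩⟩))⟩ hT
            rcases (mem_nb_singleton.1 g5).2.2 with e1 | h8
            · exact absurd g2 (e1 ▸ (LX_sub g3).2.1)
            · exact h8
          · rintro t t1 t2 t3 ⟨k, t4, t5⟩
            exact h.term_path hL (h.mem_pset_start (hL _)
              ((hL _).exit t ⟨t1, t2, t3, v, _, m, k, hm, t4, t5⟩)).2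

/-- The linkings of the layers combine to a linking of the union of the tower. -/
theorem assemble [WellFoundedLT J] (h : Tower S σ N F) (he : Alloc σ N e)
    (IH : ∀ j, ∀ T : Sys V, T.U ⊆ N (σ j) \ N j → ¬ T.Hind → ∃ G, T.LinkedOn T.U G) :
    ∃ G, S.LinkedOn (⋃ j, N j) G := by
  obtain ⟨L, hLS⟩ := h.exists_layers he IH
  have hL := fun j => (hLS j).1
  have hS := fun j => (hLS j).2
  refine LinkedOn.of_rel (Nx S F σ N e L) ?_ (fun v _ v' _ t _ _ => h.Nx_unique he hL) ?_
  · rintro v - t - ⟨l, h1, -, h2, h3, -⟩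
    exact ⟨Set.mem_iUnion.2 ⟨_, h1⟩, h2, h3⟩
  · intro a ha haA
    obtain ⟨j0, ha⟩ := Set.mem_iUnion.1 ha
    obtain ⟨j, h1, h2⟩ := h.layer ha
    have srcT : ∀ {t}, t ∈ N (σ j) → t ∉ N j → t ∉ S.LX (N j) → t ∈ S.A ∪ S.LN (N j) →
        Term (Nx S F σ N e L) S.B t := by
      intro t t1 t2 t3 t4
      by_cases hp : t ∈ S.pset (N j) (L j).s
      · exact h.term_path hL hp
      · obtain ⟨n, hn⟩ := (hL j).link.src t ⟨⟨⟨t1, t2⟩, t3⟩, hp⟩ t4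
        exact h.term_H he hL hS n t ⟨⟨⟨t1, t2⟩, t3⟩, hp⟩ hn
    by_cases hX : a ∈ S.LX (N j)
    · refine h.term_orbit hL (Or.inl hX) (fun h' => (LN_sub h').2.2 haA) h1 ?_ ?_
      · intro z u m hv
        obtain ⟨i, hi, hr, hej⟩ := (hS j).v2 z u m hv
        obtain ⟨g1, g2, g3, g4, g5⟩ := (hL _).vr _ _ _ hv
        obtain ⟨-, -, -, k1, k2, k3, k4, k5, -, -⟩ := hr.spec (hL i)
        obtain ⟨r1, r2, rfl, r4, r5⟩ := hr
        have hT : Term (Nx S F σ N e L) S.B ((L i).H z) := by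
          obtain ⟨n, hn⟩ := (hL i).link.norm z r1 r2 r4
          rcases n with _ | n
          · exact absurd hn r2
          · exact h.term_H he hL hS n _ k1 hn
        refine .step ⟨i, k2, k3, ?_, k5, Or.inr (Or.inr (Or.inr ⟨k4, k1, z, r1, r2, rfl,
          Or.inr ⟨r5, hej ▸ hv⟩⟩))⟩ hT
        rcases (mem_nb_singleton.1 g5).2.2 with e1 | h8
        · exact absurd g2 (e1 ▸ (LX_sub g3).2.1)
        · exact h8
      · rintro t t1 t2 t3 -
        exact srcT t3 (LN_sub t1).2.1 t2 (Or.inr t1)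
    · exact srcT h1 h2 hX (Or.inl haA)

end Tower
end Sys

/-! ### Towers from ladders -/

namespace Sys
variable {V : Type u}

theorem Virt.congr {S : Sys V} {f g : V → V} {D K : Set V} {z y : V} (h : Virt S f D K z y)
    (hfg : ∀ w ∈ K, f w = g w) : Virt S g D K z y := by
  obtain ⟨m, h1, h2, h3⟩ := h
  exact ⟨m, h1.congr hfg, h2, h3⟩

namespace Ladder
variable {S : Sys V} {κ : Cardinal.{u}} {I : Type u} [LinearOrder I] [WellFoundedLT I]
  {C St : I → Set V} {i j β γ γ' : I} {v w z y : V}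

/-- Escapes at a later stage are escapes at every earlier stage. -/
theorem esc_anti (h : Ladder S κ C St) (hγ : γ ≤ γ') (he : S.Esc (Mst St γ') z w) :
    S.Esc (Mst St γ) z w :=
  ⟨he.1, fun hw => he.2.1 (Mst_mono hγ hw), fun hw => he.2.2 (h.LN_later hγ hw he.2.1)⟩

/-- For a vertex without escape, virtual edges at a later stage are virtual edges at every earlier
stage. -/
theorem virt_anti (h : Ladder S κ C St) (hγ : γ ≤ γ') (hz : ¬ ∃ w, S.Esc (Mst St γ) z w)
    (hv : Virt S h.F (Mst St γ') (S.LN (Mst St γ')) z y) :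
    Virt S h.F (Mst St γ) (S.LN (Mst St γ)) z y := by
  obtain ⟨m, hm, hmD, hym⟩ := hv
  refine ⟨m, ?_, fun h' => hmD (Mst_mono hγ h'), hym⟩
  have key : Rch S h.F (S.LN (Mst St γ)) z m ∧ (m = z ∨ m ∈ S.LX (Mst St γ)) := by
    clear hym hmD
    induction hm with
    | base => exact ⟨.base, Or.inl rfl⟩
    | @step x w _ hw hwK ih =>
      obtain ⟨h1, h2⟩ := ih
      have hwD : w ∉ Mst St γ := fun h' => (LN_sub hwK).2.1 (Mst_mono hγ h')
      have hwN : w ∈ S.LN (Mst St γ) := by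
        rcases h2 with rfl | h2
        · by_contra h3
          exact hz ⟨w, hw, hwD, h3⟩
        · exact LN_of_X h2 hw hwD
      exact ⟨h1.step hw hwN, Or.inr (h.F_X hwN)⟩
  exact key.1

/-- Almost all stages of a ladder of an unhindered system can be taken as the members of a
tower. -/
theorem exists_tower (h : Ladder S κ C St) (hS : ¬ S.Hind) (hκ : κ.IsRegular) (hI : RegIdx κ I)
    (b : I) (hb : ∀ i, b ≤ i) : ∃ hf : List V → I,
      (∀ i, HC (Mst St) hf i → ¬ (S.del (Mst St i)).Hind) ∧
      ∀ Dn : Set I, IsLowerSet Dn →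
        (∀ γ ∈ {γ ∈ Dn | γ = b ∨ HC (Mst St) hf γ}, ∃ γ' ∈ {γ ∈ Dn | γ = b ∨ HC (Mst St) hf γ},
          γ < γ') →
        ∃ σ : {γ ∈ Dn | γ = b ∨ HC (Mst St) hf γ} → {γ ∈ Dn | γ = b ∨ HC (Mst St) hf γ},
          Tower S σ (fun j => Mst St j) h.F := by
  classical
  obtain ⟨hf, hhf⟩ := h.exists_unh hS hκ hI
  let P : List V → I → Prop := fun l β => match l with
    | [z] => ¬ ∃ w, S.Esc (Mst St β) z w
    | [z, y] => (¬ ∃ w, S.Esc (Mst St β) z w) ∧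
        ¬ Virt S h.F (Mst St β) (S.LN (Mst St β)) z y
    | _ => False
  let hs : List V → I := fun l => if hl : ∃ β, P l β then (exists_least hl).choose else b
  have hs1 : ∀ l γ, P l γ → P l (hs l) ∧ hs l ≤ γ := by
    intro l γ hl
    have hl' : ∃ β, P l β := ⟨γ, hl⟩
    have h1 := (exists_least hl').choose_spec
    have h2 : hs l = (exists_least hl').choose := dif_pos hl'
    rw [h2]
    exact ⟨h1.1, not_lt.1 fun h' => h1.2 _ h' hl⟩
  refine ⟨fun l => max (hf l) (hs l), fun i hi => hhf i (HC.max.1 hi).1, fun Dn hDn hmax => ?_⟩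
  set hh : List V → I := fun l => max (hf l) (hs l) with hhh
  let Q : Set I := {γ ∈ Dn | γ = b ∨ HC (Mst St) hh γ}
  have hQ : ∀ j : Q, ∃ k : Q, j < k ∧ ∀ i : Q, j < i → k ≤ i := by
    intro j
    obtain ⟨γ', h1, h2⟩ := hmax j.1 j.2
    obtain ⟨k, h3, h4⟩ := exists_least (P := fun k : Q => j < k) ⟨⟨γ', h1⟩, h2⟩
    exact ⟨k, h3, fun i hi => not_lt.1 fun h' => h4 i h' hi⟩
  choose σ hσ1 hσ2 using hQ
  have hMb : Mst St b = ∅ := by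
    ext v
    simp only [mem_Mst, Set.mem_empty_iff_false, iff_false, not_exists, not_and]
    exact fun k hk => absurd hk (not_lt.2 (hb k))
  have hHC : ∀ i j : Q, i < j → HC (Mst St) hh j := fun i j hij =>
    j.2.2.resolve_left fun h' => absurd (Subtype.coe_lt_coe.2 hij) (by rw [h']; exact not_lt.2 (hb _))
  refine ⟨σ, hσ1, fun hij => hσ2 _ _ hij, fun hij => Mst_mono hij, fun j => h.M_subU j, ?_, ?_,
    fun j => h.F_wf j, fun hw i => h.F_M hw i, fun hij hw hn => h.LN_later hij hw hn, ?_, ?_, ?_⟩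
  · intro v j hv
    obtain ⟨i, hi, hmin⟩ := exists_least (P := fun i : Q => v ∈ Mst St i.1) ⟨j, hv⟩
    by_cases hsucc : ∃ p : Q, p < i ∧ ∀ q : Q, q < i → q ≤ p
    · obtain ⟨p, hp, hpq⟩ := hsucc
      have : σ p = i := by
        refine le_antisymm (hσ2 p i hp) (not_lt.1 fun h' => ?_)
        exact absurd (hσ1 p) (not_lt.2 (hpq _ h'))
      exact ⟨p, this ▸ hi, hmin p hp⟩
    · exfalso
      push Not at hsucc
      -- the least upper bound of the smaller members
      obtain ⟨i', hi', hi'min⟩ := exists_least (P := fun k : I => ∀ q : Q, q < i → q.1 < k)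
        ⟨i.1, fun q hq => hq⟩
      have hle : i' ≤ i.1 := not_lt.1 fun h' => hi'min _ h' fun q hq => hq
      have hcof : ∀ k < i', ∃ q : Q, q < i ∧ k < q.1 := by
        intro k hk
        have := hi'min k hk
        push Not at this
        obtain ⟨q, hq, hkq⟩ := this
        obtain ⟨q', hq', hqq'⟩ := hsucc q hq
        exact ⟨q', hq', hkq.trans_lt hqq'⟩
      have hi0 : b < i.1 := by
        refine lt_of_le_of_ne (hb _) fun h' => ?_
        have : v ∈ Mst St i.1 := hi
        rw [← h', hMb] at this
        exact this
      have hbQ : b ∈ Q := ⟨hDn (hb i.1) i.2.1, Or.inl rfl⟩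
      have hbi : (⟨b, hbQ⟩ : Q) < i := hi0
      have hcof' : ∀ k < i', ∃ k', k < k' ∧ k' < i' ∧ HC (Mst St) hh k' := by
        intro k hk
        obtain ⟨q, hq, hkq⟩ := hcof k hk
        exact ⟨q.1, hkq, hi' q hq, q.2.2.resolve_left fun h' => absurd hkq
          (by rw [h']; exact not_lt.2 (hb k))⟩
      have hi'HC : HC (Mst St) hh i' := by
        obtain ⟨k', -, h2, h3⟩ := hcof' b (hi' ⟨b, hbQ⟩ hbi)
        exact HC.sup ⟨k', h2, h3⟩ hcof'
      have hi'i : i' = i.1 := by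
        refine le_antisymm hle (not_lt.1 fun h' => ?_)
        exact lt_irrefl i' (hi' ⟨i', hDn hle i.2.1, Or.inr hi'HC⟩ h')
      obtain ⟨k, hk, hvk⟩ := mem_Mst.1 hi
      obtain ⟨q, hq, hkq⟩ := hcof k (hi'i ▸ hk)
      exact hmin q hq (mem_Mst.2 ⟨k, hkq, hvk⟩)
  · intro j
    rcases j.2.2 with h' | h'
    · show ¬ (S.del (Mst St j.1)).Hind
      rw [h', hMb, del_empty]
      exact hS
    · exact hhf _ (HC.max.1 h').1
  · intro s j hs' hsD hsX
    obtain ⟨k, hk, hsk⟩ := mem_Mst.1 hs'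
    have hkj : max k j.1 < (σ j).1 := max_lt hk (hσ1 j)
    exact ((h (max k j.1)).path ⟨j.1, le_max_right _ _⟩ s (h.St_mono (le_max_left _ _) hsk) hsD
      hsX).trans (St_subset_Mst hkj)
  · intro i j z hij hz hesc
    have hγ : (σ i).1 ≤ j.1 := hσ2 i j hij
    have hj : ∃ w, S.Esc (Mst St j.1) z w := by
      by_contra hno
      obtain ⟨h1, h2⟩ := hs1 [z] j.1 hno
      have h3 : hs [z] < (σ i).1 := (HC.max.1 (hHC i _ (hσ1 i))).2 [z] (by simpa using hz)
      obtain ⟨w, hw⟩ := hesc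
      exact h1 ⟨w, h.esc_anti h3.le hw⟩
    obtain ⟨w, h1, h2⟩ := (h j.1).esc z (Mst_mono hγ hz) hj
    exact ⟨w, St_subset_Mst (Subtype.coe_lt_coe.2 (hσ1 j)) h1, h2⟩
  · intro i j z y hij hz hy hesc hv
    have hγ : (σ i).1 ≤ j.1 := hσ2 i j hij
    have hesc' : ¬ ∃ w, S.Esc (Mst St j.1) z w := fun ⟨w, hw⟩ => hesc ⟨w, h.esc_anti hγ hw⟩
    have hj : Virt S h.F (Mst St j.1) (S.LN (Mst St j.1)) z y := by
      by_contra hno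
      obtain ⟨h1, h2⟩ := hs1 [z, y] j.1 ⟨hesc', hno⟩
      have h3 : hs [z, y] < (σ i).1 := (HC.max.1 (hHC i _ (hσ1 i))).2 [z, y] (by
        simpa using ⟨hz, hy⟩)
      exact h1.2 (h.virt_anti h3.le h1.1 hv)
    have h1 := (h j.1).virt z (Mst_mono hγ hz) y (Mst_mono hγ hy)
      (hj.congr fun w hw => (h.lad_Iic hw).symm)
    obtain ⟨m, h2, h3, h4⟩ := h1.congr fun w hw => h.lad_Iic hw.1
    exact ⟨m, h2.mono fun w hw => ⟨hw.1, St_subset_Mst (Subtype.coe_lt_coe.2 (hσ1 j)) hw.2⟩, h3, h4⟩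

end Ladder

/-- All requests can be allotted to different later layers if there are enough of those. -/
theorem Tower.exists_alloc {S : Sys V} {J : Type u} [LinearOrder J] [Nonempty J] {σ : J → J}
    {N : J → Set V} {F : V → V} (h : Tower S σ N F) {ν : Cardinal.{u}} (hν : ℵ₀ ≤ ν)
    (hN : #(⋃ j, N j : Set V) ≤ ν) (hJ : ∀ j : J, ν ≤ #(Set.Ioi j)) : ∃ e, Alloc σ N e := by
  classical
  have hrk : ∀ t : (⋃ j, N j : Set V), ∃ i, t.1 ∈ N (σ i) ∧ t.1 ∉ N i := fun t => by
    obtain ⟨j, hj⟩ := Set.mem_iUnion.1 t.2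
    exact h.layer hj
  choose rk hrk1 hrk2 using hrk
  obtain ⟨e, he1, he2⟩ := exists_selection (T := (⋃ j, N j : Set V) × ULift.{u} Bool) (ν := ν) (by
    rw [mk_prod, lift_id, lift_id]
    calc #(⋃ j, N j : Set V) * #(ULift.{u} Bool) ≤ ν * ℵ₀ := by
          gcongr
          simp
      _ = ν := mul_aleph0_eq hν) (fun t => Set.Ioi (rk t.1)) fun t => hJ _
  refine ⟨fun v b => if hv : v ∈ ⋃ j, N j then e (⟨v, hv⟩, ⟨b⟩) else Classical.arbitrary J, ?_, ?_⟩
  · intro v j b h1 h2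
    have hv : v ∈ ⋃ j, N j := Set.mem_iUnion.2 ⟨_, h1⟩
    simp only [dif_pos hv]
    have := he2 (⟨v, hv⟩, ⟨b⟩)
    rwa [h.layer_unique (hrk1 ⟨v, hv⟩) (hrk2 ⟨v, hv⟩) h1 h2] at this
  · intro v v' b b' i i' h1 h2 h3
    have hv : v ∈ ⋃ j, N j := Set.mem_iUnion.2 ⟨_, h1⟩
    have hv' : v' ∈ ⋃ j, N j := Set.mem_iUnion.2 ⟨_, h2⟩
    simp only [dif_pos hv, dif_pos hv'] at h3
    simpa using he1 h3

end Sys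

/-! ### Linking countable and regular systems -/

namespace Sys
variable {V : Type u}

theorem del_del (S : Sys V) (D P : Set V) : (S.del D).del P = S.del (D ∪ P) := by
  simp [del, Set.sdiff_sdiff]

/-- Enumerate the ground set and remove a safe path from each source in turn. -/
theorem linked_countable (S : Sys V) (hU : #S.U ≤ ℵ₀) (hS : ¬ S.Hind) : ∃ G, S.LinkedOn S.U G := by
  classical
  rcases S.U.eq_empty_or_nonempty with he | hne
  · refine ⟨id, ?_, ?_, ?_, ?_, ?_⟩ <;> simp [he]
  obtain ⟨a, ha⟩ := (le_aleph0_iff_set_countable.1 hU).exists_eq_range hne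
  have haU : ∀ k, a k ∈ S.U := fun k => ha ▸ ⟨k, rfl⟩
  let act : Set V → V → Prop := fun D x => ¬ (S.del D).Hind ∧ x ∈ S.A ∧ x ∈ S.U ∧ x ∉ D
  have hp : ∀ D x, ∃ q : (ℕ → V) × ℕ, act D x → SafePath (S.del D) x q.1 q.2 := by
    intro D x
    by_cases h : act D x
    · obtain ⟨p, n, h'⟩ := safe_path (a := x) h.1 h.2.1 h.2.2
      exact ⟨(p, n), fun _ => h'⟩
    · exact ⟨(fun _ => x, 0), fun h' => absurd h' h⟩
  choose q hq using hp
  let PS : Set V → V → Set V := fun D x =>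
    {y | act D x ∧ y ∈ (q D x).1 '' Set.Iic (q D x).2}
  have hPS : ∀ D x, act D x → PS D x = (q D x).1 '' Set.Iic (q D x).2 := fun D x h =>
    Set.ext fun y => ⟨fun hy => hy.2, fun hy => ⟨h, hy⟩⟩
  have hPS' : ∀ D x, ¬ act D x → PS D x = ∅ := fun D x h =>
    Set.eq_empty_of_forall_notMem fun y hy => h hy.1
  let D : ℕ → Set V := fun k => Nat.rec ∅ (fun k D => D ∪ PS D (a k)) k
  have hD1 : ∀ k, D (k + 1) = D k ∪ PS (D k) (a k) := fun k => rfl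
  have hD : ∀ k, ¬ (S.del (D k)).Hind := by
    intro k
    induction k with
    | zero => rw [show D 0 = ∅ from rfl, del_empty]; exact hS
    | succ k ih =>
      rw [hD1, ← del_del]
      rcases Classical.em (act (D k) (a k)) with h | h
      · rw [hPS _ _ h]
        exact (hq _ _ h).unh
      · rw [hPS' _ _ h, del_empty]
        exact ih
  have hmono : Monotone D := monotone_nat_of_le_succ fun k => by
    rw [hD1]
    exact Set.subset_union_left
  let P : ℕ → ℕ → V := fun k => (q (D k) (a k)).1
  let n : ℕ → ℕ := fun k => (q (D k) (a k)).2
  have hP : ∀ k, act (D k) (a k) → SafePath (S.del (D k)) (a k) (P k) (n k) := fun k h => hq _ _ h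
  have hPD : ∀ k, act (D k) (a k) → ∀ i ≤ n k, P k i ∈ D (k + 1) := by
    intro k h i hi
    rw [hD1, hPS _ _ h]
    exact Or.inr ⟨i, hi, rfl⟩
  let R : V → V → Prop := fun v t => ∃ k i, act (D k) (a k) ∧ i < n k ∧ v = P k i ∧ t = P k (i + 1)
  have hT : ∀ k, act (D k) (a k) → ∀ d ≤ n k, Term R S.B (P k (n k - d)) := by
    intro k h d
    induction d with
    | zero => exact fun _ => .base (hP k h).last
    | succ d ih =>
      intro hd
      refine .step ⟨k, n k - (d + 1), h, by omega, rfl, rfl⟩ ?_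
      have := ih (by omega)
      rwa [show n k - d = n k - (d + 1) + 1 by omega] at this
  have hTD : ∀ k, ∀ x ∈ D k, Term R S.B x := by
    intro k
    induction k with
    | zero => exact fun x hx => absurd hx (Set.notMem_empty x)
    | succ k ih =>
      intro x hx
      rw [hD1] at hx
      rcases hx with hx | hx
      · exact ih x hx
      · obtain ⟨h, i, hi, rfl⟩ := hx
        have hi : i ≤ n k := hi
        have := hT k h (n k - i) (by omega)
        rwa [show n k - (n k - i) = i by omega] at this
  refine LinkedOn.of_rel R ?_ ?_ ?_
  · rintro v hv t hB ⟨k, i, h1, h2, rfl, rfl⟩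
    exact ⟨((hP k h1).memU _ h2).1, (hP k h1).edge _ h2, (hP k h1).notA _ h2⟩
  · rintro v hv v' hv' t - - ⟨k, i, h1, h2, rfl, rfl⟩ ⟨k', i', h1', h2', rfl, e⟩
    have hkk : ∀ {k k' i i'}, act (D k) (a k) → i < n k → act (D k') (a k') → i' < n k' →
        P k (i + 1) = P k' (i' + 1) → ¬ k < k' := by
      intro k k' i i' h1 h2 h1' h2' e hlt
      exact ((hP k' h1').memU _ h2').2 (e ▸ hmono hlt (hPD k h1 _ h2))
    obtain rfl : k = k' := le_antisymm (not_lt.1 (hkk h1' h2' h1 h2 e.symm))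
      (not_lt.1 (hkk h1 h2 h1' h2' e))
    have := (hP k h1).inj (Set.mem_Iic.2 h2) (Set.mem_Iic.2 h2') e
    rw [show i = i' by omega]
  · intro x hx hA
    obtain ⟨k, rfl⟩ : ∃ k, a k = x := by
      rw [ha] at hx
      exact hx
    rcases Classical.em (a k ∈ D k) with h | h
    · exact hTD k _ h
    · have hact : act (D k) (a k) := ⟨hD k, hA, hx, h⟩
      have := hPD k hact 0 (Nat.zero_le _)
      rw [(hP k hact).start] at this
      exact hTD (k + 1) _ this

theorem exists_bot {κ : Cardinal.{u}} {I : Type u} [LinearOrder I] [WellFoundedLT I]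
    (hI : RegIdx κ I) (hκ : κ ≠ 0) : ∃ b : I, ∀ i, b ≤ i := by
  have hne : Nonempty I := by
    rw [← mk_ne_zero_iff, hI.card]
    exact hκ
  obtain ⟨i0⟩ := hne
  obtain ⟨b, -, hb⟩ := exists_least (P := fun _ : I => True) ⟨i0, trivial⟩
  exact ⟨b, fun i => not_lt.1 fun h => hb i h trivial⟩

/-- The layers of a tower exhausting the ground set are smaller than the ground set. -/
theorem linked_regular (S : Sys V) (hκ : (#S.U).IsRegular) (hκ' : ℵ₀ < #S.U) (hS : ¬ S.Hind)
    (IH : ∀ T : Sys V, #T.U < #S.U → ¬ T.Hind → ∃ G, T.LinkedOn T.U G) :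
    ∃ G, S.LinkedOn S.U G := by
  set κ := #S.U with hκdef
  obtain ⟨I, _, _, hI⟩ := exists_regIdx κ hκ hκ'
  obtain ⟨b, hb⟩ := exists_bot hI hκ.pos.ne'
  obtain ⟨en⟩ := Cardinal.eq.1 (hI.card.trans hκdef)
  obtain ⟨St, h⟩ := exists_ladder S hκ hκ' hI (fun i => {(en i).1}) fun j =>
    ⟨by simp, by simpa using one_lt_aleph0.trans hκ'⟩
  obtain ⟨hf, h1, h2⟩ := h.exists_tower hS hκ hI b hb
  have hunb := HC.unbounded hκ hκ' hI (fun i => (h i).card) hf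
  obtain ⟨σ, hT⟩ := h2 Set.univ isLowerSet_univ fun γ _ => by
    obtain ⟨i, h3, h4⟩ := hunb γ
    exact ⟨i, ⟨trivial, Or.inr h4⟩, h3⟩
  set Q : Set I := {γ ∈ Set.univ | γ = b ∨ HC (Mst St) hf γ} with hQ
  have : Nonempty Q := ⟨⟨b, trivial, Or.inl rfl⟩⟩
  have hUn : (⋃ j : Q, Mst St j.1) = S.U := by
    refine subset_antisymm (Set.iUnion_subset fun j => h.M_subU _) fun v hv => ?_
    obtain ⟨i, h3, h4⟩ := hunb (en.symm ⟨v, hv⟩)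
    refine Set.mem_iUnion.2 ⟨⟨i, trivial, Or.inr h4⟩, mem_Mst.2 ⟨_, h3, ?_⟩⟩
    exact (h _).seed (by simp)
  obtain ⟨e, he⟩ := hT.exists_alloc (ν := κ) hκ'.le (by rw [hUn]) fun j => by
    have : κ ≤ #(Set.Ioi j.1 ∩ Q : Set I) := by
      refine card_of_unbounded hI fun i => ?_
      obtain ⟨q, h3, h4⟩ := hunb (max i j.1)
      exact ⟨q, ⟨(le_max_right _ _).trans_lt h3, trivial, Or.inr h4⟩, (le_max_left _ _).trans_lt h3⟩
    refine this.trans ?_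
    exact mk_le_of_injective (f := fun x : (Set.Ioi j.1 ∩ Q : Set I) =>
      (⟨⟨x.1, x.2.2⟩, x.2.1⟩ : Set.Ioi j)) fun x y hxy => by
        exact Subtype.ext (congrArg (fun z : Set.Ioi j => z.1.1) hxy)
  have := hT.assemble he fun j T hTU hTH => IH T ((mk_le_mk_of_subset
    (hTU.trans Set.sdiff_subset)).trans_lt (Mst_card hκ hI (fun i => (h i).card) _)) hTH
  rwa [hUn] at this

/-- Any set of `μ` vertices can be enlarged to a set of `μ` vertices which is linked and leaves an
unhindered system. -/
theorem exists_linked_part (S : Sys V) {μ : Cardinal.{u}} (hμ : ℵ₀ ≤ μ) (hS : ¬ S.Hind)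
    (IH : ∀ T : Sys V, #T.U ≤ μ → ¬ T.Hind → ∃ G, T.LinkedOn T.U G) {C : Set V} (hC : C ⊆ S.U)
    (hCμ : #C ≤ μ) : ∃ N G, C ⊆ N ∧ N ⊆ S.U ∧ #N ≤ μ ∧ S.LinkedOn N G ∧ ¬ (S.del N).Hind := by
  set κ := Order.succ μ with hκdef
  have hκ : κ.IsRegular := isRegular_succ hμ
  have hμκ : μ < κ := Order.lt_succ μ
  have hκ' : ℵ₀ < κ := hμ.trans_lt hμκ
  obtain ⟨I, _, _, hI⟩ := exists_regIdx κ hκ hκ'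
  obtain ⟨b, hb⟩ := exists_bot hI hκ.pos.ne'
  obtain ⟨St, h⟩ := exists_ladder S hκ hκ' hI (fun _ => C) fun j => ⟨hC, hCμ.trans_lt hμκ⟩
  obtain ⟨hf, h1, h2⟩ := h.exists_tower hS hκ hI b hb
  have hunb := HC.unbounded hκ hκ' hI (fun i => (h i).card) hf
  let C' : Set I := {γ | γ = b ∨ HC (Mst St) hf γ}
  have hC' : μ ≤ #C' := hμκ.le.trans (card_of_unbounded hI fun i => by
    obtain ⟨q, h3, h4⟩ := hunb i
    exact ⟨q, Or.inr h4, h3⟩)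
  obtain ⟨C'', hsub, hcard⟩ := le_mk_iff_exists_subset.1 hC'
  obtain ⟨i0, hi0⟩ := hI.bdd C'' (hcard ▸ hμκ)
  obtain ⟨δ, hδ, hmin⟩ := exists_least (P := fun δ : I => μ ≤ #(C' ∩ Set.Iio δ : Set I))
    ⟨i0, hcard ▸ mk_le_mk_of_subset fun t ht => ⟨hsub ht, hi0 t ht⟩⟩
  -- tails below `δ` are large
  have htail : ∀ j < δ, μ ≤ #(C' ∩ Set.Iio δ ∩ Set.Ioi j : Set I) := by
    intro j hj
    by_contra hlt
    rw [not_le] at hlt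
    have h3 : #(C' ∩ Set.Iio j : Set I) < μ := not_le.1 (hmin j hj)
    have h4 : (C' ∩ Set.Iio δ : Set I) ⊆
        ((C' ∩ Set.Iio j) ∪ {j}) ∪ (C' ∩ Set.Iio δ ∩ Set.Ioi j) := by
      rintro x ⟨hx, hx'⟩
      rcases lt_trichotomy x j with hl | he | hg
      · exact Or.inl (Or.inl ⟨hx, hl⟩)
      · exact Or.inl (Or.inr he)
      · exact Or.inr ⟨⟨hx, hx'⟩, hg⟩
    refine absurd hδ (not_le.2 ((mk_le_mk_of_subset h4).trans_lt ?_))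
    refine (mk_union_le _ _).trans_lt (add_lt_of_lt hμ ((mk_union_le _ _).trans_lt
      (add_lt_of_lt hμ h3 ?_)) hlt)
    rw [mk_singleton]
    exact one_lt_aleph0.trans_le hμ
  have hcof : ∀ j < δ, ∃ k ∈ C', j < k ∧ k < δ := by
    intro j hj
    have : #(C' ∩ Set.Iio δ ∩ Set.Ioi j : Set I) ≠ 0 :=
      (aleph0_pos.trans_le (hμ.trans (htail j hj))).ne'
    obtain ⟨k, hk⟩ := mk_ne_zero_iff.1 this
    exact ⟨k, hk.1.1, hk.2, hk.1.2⟩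
  have hbδ : b < δ := by
    have : #(C' ∩ Set.Iio δ : Set I) ≠ 0 := (aleph0_pos.trans_le (hμ.trans hδ)).ne'
    obtain ⟨k, hk⟩ := mk_ne_zero_iff.1 this
    exact (hb k).trans_lt hk.2
  have hcof' : ∀ j < δ, ∃ k, j < k ∧ k < δ ∧ HC (Mst St) hf k := by
    intro j hj
    obtain ⟨k, h3, h4, h5⟩ := hcof j hj
    exact ⟨k, h4, h5, h3.resolve_left fun e => absurd h4 (e ▸ not_lt.2 (hb j))⟩
  have hδHC : HC (Mst St) hf δ := by
    obtain ⟨k, -, h3, h4⟩ := hcof' b hbδ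
    exact HC.sup ⟨k, h3, h4⟩ hcof'
  obtain ⟨σ, hT⟩ := h2 (Set.Iio δ) (isLowerSet_Iio δ) (by
    rintro γ ⟨hγ, -⟩
    obtain ⟨k, h3, h4, h5⟩ := hcof' γ hγ
    exact ⟨k, ⟨h4, Or.inr h5⟩, h3⟩)
  set Q : Set I := {γ ∈ Set.Iio δ | γ = b ∨ HC (Mst St) hf γ} with hQ
  have : Nonempty Q := ⟨⟨b, hbδ, Or.inl rfl⟩⟩
  have hMμ : ∀ i, #(Mst St i) ≤ μ := fun i =>
    Order.lt_succ_iff.1 (Mst_card hκ hI (fun i => (h i).card) i)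
  have hUn : (⋃ j : Q, Mst St j.1) = Mst St δ := by
    refine subset_antisymm (Set.iUnion_subset fun j => Mst_mono (le_of_lt j.2.1)) fun v hv => ?_
    obtain ⟨k, h3, h4⟩ := mem_Mst.1 hv
    obtain ⟨k', h5, h6, h7⟩ := hcof' k h3
    exact Set.mem_iUnion.2 ⟨⟨k', h6, Or.inr h7⟩, mem_Mst.2 ⟨k, h5, h4⟩⟩
  obtain ⟨e, he⟩ := hT.exists_alloc (ν := μ) hμ (by rw [hUn]; exact hMμ δ) fun j => by
    refine (htail j.1 j.2.1).trans ?_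
    exact mk_le_of_injective (f := fun x : (C' ∩ Set.Iio δ ∩ Set.Ioi j.1 : Set I) =>
      (⟨⟨x.1, x.2.1.2, x.2.1.1⟩, x.2.2⟩ : Set.Ioi j)) fun x y hxy => by
        exact Subtype.ext (congrArg (fun z : Set.Ioi j => z.1.1) hxy)
  obtain ⟨G, hG⟩ := hT.assemble he fun j T hTU hTH => IH T ((mk_le_mk_of_subset
    (hTU.trans Set.sdiff_subset)).trans (hMμ _)) hTH
  rw [hUn] at hG
  exact ⟨_, G, fun v hv => mem_Mst.2 ⟨b, hbδ, (h b).seed hv⟩, h.M_subU δ, hMμ δ, hG, h1 δ hδHC⟩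

end Sys

/-! ### Singular systems and the linking theorem -/

namespace Sys
variable {V : Type u}

theorem iterate_mem_congr {N B : Set V} {G H : V → V} (hm : ∀ v ∈ N, v ∉ B → G v ∈ N)
    (he : ∀ v ∈ N, v ∉ B → H v = G v) (n : ℕ) :
    ∀ v ∈ N, G^[n] v ∈ B → ∃ k, H^[k] v ∈ B := by
  induction n with
  | zero => exact fun v _ h => ⟨0, h⟩
  | succ n ih =>
    intro v hv h
    by_cases hB : v ∈ B
    · exact ⟨0, hB⟩
    · obtain ⟨k, hk⟩ := ih (G v) (hm v hv hB) h
      exact ⟨k + 1, by rwa [Function.iterate_succ_apply, he v hv hB]⟩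

/-- A linking of `N` and a linking of a set in the complement of `N` have a common extension. -/
theorem LinkedOn.glue {S : Sys V} {N N' : Set V} {G G' : V → V} (h : S.LinkedOn N G)
    (h' : (S.del N).LinkedOn N' G') (hN' : N' ⊆ (S.del N).U) :
    ∃ H, S.LinkedOn (N ∪ N') H ∧ ∀ v ∈ N, H v = G v := by
  classical
  let H : V → V := fun v => if v ∈ N then G v else G' v
  have h1 : ∀ v ∈ N, H v = G v := fun v hv => if_pos hv
  have h2 : ∀ v ∈ N', H v = G' v := fun v hv => if_neg (hN' hv).2
  refine ⟨H, ⟨?_, ?_, ?_, ?_, ?_⟩, h1⟩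
  · rintro v (hv | hv) hB
    · rw [h1 v hv]
      exact Or.inl (h.maps v hv hB)
    · rw [h2 v hv]
      exact Or.inr (h'.maps v hv hB)
  · rintro v (hv | hv) hB
    · rw [h1 v hv]
      exact h.edge v hv hB
    · rw [h2 v hv]
      exact h'.edge v hv hB
  · rintro v ⟨hv | hv, hB⟩ w ⟨hw | hw, hB'⟩ e
    · rw [h1 v hv, h1 w hw] at e
      exact h.inj ⟨hv, hB⟩ ⟨hw, hB'⟩ e
    · rw [h1 v hv, h2 w hw] at e
      exact absurd (e ▸ h.maps v hv hB) (hN' (h'.maps w hw hB')).2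
    · rw [h2 v hv, h1 w hw] at e
      exact absurd (e ▸ h.maps w hw hB') (hN' (h'.maps v hv hB)).2
    · rw [h2 v hv, h2 w hw] at e
      exact h'.inj ⟨hv, hB⟩ ⟨hw, hB'⟩ e
  · rintro a (ha | ha) hA
    · obtain ⟨n, hn⟩ := h.src a ha hA
      exact iterate_mem_congr h.maps (fun v hv _ => h1 v hv) n a ha hn
    · obtain ⟨n, hn⟩ := h'.src a ha hA
      exact iterate_mem_congr h'.maps (fun v hv _ => h2 v hv) n a ha hn
  · rintro a (ha | ha) hB hne
    · rw [h1 a ha] at hne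
      obtain ⟨n, hn⟩ := h.norm a ha hB hne
      exact iterate_mem_congr h.maps (fun v hv _ => h1 v hv) n a ha hn
    · rw [h2 a ha] at hne
      obtain ⟨n, hn⟩ := h'.norm a ha hB hne
      exact iterate_mem_congr h'.maps (fun v hv _ => h2 v hv) n a ha hn

/-- A pair `x = (N, G)` of a set of at most `μ` vertices and a linking of it, whose deletion leaves
an unhindered system. -/
structure Piece (S : Sys V) (μ : Cardinal.{u}) (x : Set V × (V → V)) : Prop where
  subU : x.1 ⊆ S.U
  card : #x.1 ≤ μ
  linked : S.LinkedOn x.1 x.2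
  unh : ¬ (S.del x.1).Hind

/-- A piece can be enlarged by a given set of at most `μ` vertices, without changing its linking. -/
theorem Piece.extend {S : Sys V} {μ : Cardinal.{u}} {x : Set V × (V → V)} (h : S.Piece μ x)
    (hμ : ℵ₀ ≤ μ) (IH : ∀ T : Sys V, #T.U ≤ μ → ¬ T.Hind → ∃ G, T.LinkedOn T.U G)
    {C : Set V} (hC : C ⊆ S.U) (hCμ : #C ≤ μ) :
    ∃ y, S.Piece μ y ∧ x.1 ⊆ y.1 ∧ (∀ v ∈ x.1, y.2 v = x.2 v) ∧ C ⊆ y.1 := by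
  obtain ⟨N, G, h1, h2, h3, h4, h5⟩ := exists_linked_part (S.del x.1) hμ h.unh IH (C := C \ x.1)
    (fun v hv => ⟨hC hv.1, hv.2⟩) ((mk_le_mk_of_subset Set.sdiff_subset).trans hCμ)
  obtain ⟨H, h6, h7⟩ := h.linked.glue h4 h2
  refine ⟨(x.1 ∪ N, H), ⟨Set.union_subset h.subU (h2.trans Set.sdiff_subset), ?_, h6, ?_⟩,
    Set.subset_union_left, h7, fun v hv => ?_⟩
  · exact (mk_union_le _ _).trans (add_le_of_le hμ h.card h3)
  · rwa [← del_del]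
  · by_cases hx : v ∈ x.1
    · exact Or.inl hx
    · exact Or.inr (h1 ⟨hv, hx⟩)

/-- One round of closing off simultaneously all members of a family of pieces under the linkings of
all the others. -/
theorem extend_all {S : Sys V} {Θ : Type u} {μ : Θ → Cardinal.{u}} (hμ : ∀ i, ℵ₀ ≤ μ i)
    (hΘ : ∀ i, #Θ ≤ μ i)
    (IH : ∀ i, ∀ T : Sys V, #T.U ≤ μ i → ¬ T.Hind → ∃ G, T.LinkedOn T.U G)
    (x : Θ → Set V × (V → V)) (hx : ∀ i, S.Piece (μ i) (x i)) :
    ∃ y : Θ → Set V × (V → V), ∀ i, S.Piece (μ i) (y i) ∧ (x i).1 ⊆ (y i).1 ∧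
      (∀ v ∈ (x i).1, (y i).2 v = (x i).2 v) ∧
      ∀ j, ∀ v ∈ (x j).1, v ∉ S.B →
        (v ∈ (x i).1 → (x j).2 v ∈ (y i).1) ∧ ((x j).2 v ∈ (x i).1 → v ∈ (y i).1) := by
  have key : ∀ i, ∃ y, S.Piece (μ i) y ∧ (x i).1 ⊆ y.1 ∧ (∀ v ∈ (x i).1, y.2 v = (x i).2 v) ∧
      ∀ j, ∀ v ∈ (x j).1, v ∉ S.B →
        (v ∈ (x i).1 → (x j).2 v ∈ y.1) ∧ ((x j).2 v ∈ (x i).1 → v ∈ y.1) := by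
    intro i
    let P : Θ → Set V := fun j => (x j).2 '' ((x i).1 ∩ ((x j).1 \ S.B))
    let Q : Θ → Set V := fun j => {v | v ∈ (x j).1 \ S.B ∧ (x j).2 v ∈ (x i).1}
    have hP : ∀ j, #(P j) ≤ μ i := fun j =>
      mk_image_le.trans ((mk_le_mk_of_subset Set.inter_subset_left).trans (hx i).card)
    have hQ : ∀ j, #(Q j) ≤ μ i := fun j => by
      refine le_trans ?_ (hx i).card
      exact mk_le_of_injective (f := fun v : Q j => (⟨(x j).2 v.1, v.2.2⟩ : (x i).1))
        fun v w e => Subtype.ext ((hx j).linked.inj v.2.1 w.2.1 (congrArg Subtype.val e))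
    have hPQ : #(⋃ j, P j ∪ Q j : Set V) ≤ μ i := by
      refine mk_iUnion_le_sum_mk.trans ((sum_le_sum _ (fun _ => μ i) fun j =>
        (mk_union_le _ _).trans (add_le_of_le (hμ i) (hP j) (hQ j))).trans ?_)
      rw [sum_const']
      exact (mul_le_mul_left (hΘ i) _).trans (mul_eq_self (hμ i)).le
    obtain ⟨y, h1, h2, h3, h4⟩ := (hx i).extend (hμ i) (IH i) (C := ⋃ j, P j ∪ Q j) (by
      refine Set.iUnion_subset fun j => Set.union_subset ?_ ?_
      · rintro _ ⟨v, ⟨-, hv, hB⟩, rfl⟩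
        exact (hx j).subU ((hx j).linked.maps v hv hB)
      · exact fun v hv => (hx j).subU hv.1.1) hPQ
    refine ⟨y, h1, h2, h3, fun j v hv hB => ⟨fun h => ?_, fun h => ?_⟩⟩
    · exact h4 (Set.mem_iUnion.2 ⟨j, Or.inl ⟨v, ⟨h, hv, hB⟩, rfl⟩⟩)
    · exact h4 (Set.mem_iUnion.2 ⟨j, Or.inr ⟨⟨hv, hB⟩, h⟩⟩)
  choose y hy using key
  exact ⟨y, hy⟩

/-- If few pieces cover the ground set, they can be closed off in `ω` rounds so that each is closed
under the linkings of all the others, forwards and backwards. Then every vertex may follow the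
linking of the first piece containing it. -/
theorem linked_pieces (S : Sys V) (hS : ¬ S.Hind) {Θ : Type u} [LinearOrder Θ] [WellFoundedLT Θ]
    {μ : Θ → Cardinal.{u}} (hμ : ∀ i, ℵ₀ ≤ μ i) (hΘ : ∀ i, #Θ ≤ μ i)
    (IH : ∀ i, ∀ T : Sys V, #T.U ≤ μ i → ¬ T.Hind → ∃ G, T.LinkedOn T.U G)
    (W : Θ → Set V) (hW : ∀ i, #(W i) ≤ μ i) (hWU : (⋃ i, W i) = S.U) :
    ∃ G, S.LinkedOn S.U G := by
  have h0 : ∀ i, ∃ y, S.Piece (μ i) y ∧ W i ⊆ y.1 := by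
    intro i
    obtain ⟨N, G, h1, h2, h3, h4, h5⟩ := exists_linked_part S (hμ i) hS (IH i) (C := W i)
      (hWU ▸ Set.subset_iUnion W i) (hW i)
    exact ⟨(N, G), ⟨h2, h3, h4, h5⟩, h1⟩
  choose x0 hx0 hx0' using h0
  have hstep := fun z : {x : Θ → Set V × (V → V) // ∀ i, S.Piece (μ i) (x i)} =>
    extend_all hμ hΘ IH z.1 z.2
  choose st hst using hstep
  let X' : ℕ → {x : Θ → Set V × (V → V) // ∀ i, S.Piece (μ i) (x i)} := fun n =>
    Nat.rec ⟨x0, hx0⟩ (fun _ z => ⟨st z, fun i => (hst z i).1⟩) n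
  obtain ⟨X, hX0, hXP, hX⟩ : ∃ X : ℕ → Θ → Set V × (V → V), X 0 = x0 ∧
      (∀ n i, S.Piece (μ i) (X n i)) ∧ ∀ n i, (X n i).1 ⊆ (X (n + 1) i).1 ∧
      (∀ v ∈ (X n i).1, (X (n + 1) i).2 v = (X n i).2 v) ∧
      ∀ j, ∀ v ∈ (X n j).1, v ∉ S.B →
        (v ∈ (X n i).1 → (X n j).2 v ∈ (X (n + 1) i).1) ∧
        ((X n j).2 v ∈ (X n i).1 → v ∈ (X (n + 1) i).1) :=
    ⟨fun n => (X' n).1, rfl, fun n => (X' n).2, fun n i => (hst (X' n) i).2⟩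
  have hmono : ∀ i, Monotone fun n => (X n i).1 := fun i =>
    monotone_nat_of_le_succ fun n => (hX n i).1
  have hstab : ∀ i n m, n ≤ m → ∀ v ∈ (X n i).1, (X m i).2 v = (X n i).2 v := by
    intro i n m hnm v hv
    induction m, hnm using Nat.le_induction with
    | base => rfl
    | succ m hnm ih => rw [(hX m i).2.1 v (hmono i hnm hv), ih]
  let N : Θ → Set V := fun i => ⋃ n, (X n i).1
  have hcl : ∀ i j n, ∀ v ∈ (X n j).1, v ∉ S.B → ((X n j).2 v ∈ N i ↔ v ∈ N i) := by
    intro i j n v hv hB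
    constructor
    · intro h
      obtain ⟨m, hm⟩ := Set.mem_iUnion.1 h
      have h1 : v ∈ (X (max n m) j).1 := hmono j (le_max_left n m) hv
      have h2 := hstab j n (max n m) (le_max_left n m) v hv
      exact Set.mem_iUnion.2 ⟨_, ((hX (max n m) i).2.2 j v h1 hB).2
        (h2 ▸ hmono i (le_max_right n m) hm)⟩
    · intro h
      obtain ⟨m, hm⟩ := Set.mem_iUnion.1 h
      have h1 : v ∈ (X (max n m) j).1 := hmono j (le_max_left n m) hv
      have h2 := hstab j n (max n m) (le_max_left n m) v hv
      exact Set.mem_iUnion.2 ⟨_, h2 ▸ ((hX (max n m) i).2.2 j v h1 hB).1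
        (hmono i (le_max_right n m) hm)⟩
  let R : V → V → Prop := fun v t => ∃ i n, v ∈ (X n i).1 ∧ (∀ j < i, v ∉ N j) ∧ v ∉ S.B ∧
    (X n i).2 v = t ∧ t ≠ v
  refine LinkedOn.of_rel R ?_ ?_ ?_
  · rintro v - t hB ⟨i, n, h1, -, -, rfl, h3⟩
    exact ⟨(hXP n i).subU ((hXP n i).linked.maps v h1 hB), (hXP n i).linked.edge v h1 hB h3⟩
  · rintro v - v' - t hB hB' ⟨i, n, h1, h2, -, h3, -⟩ ⟨i', n', h1', h2', -, h3', -⟩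
    have hle : ∀ {v v' i i' n n'}, v ∉ S.B → v' ∉ S.B → v ∈ (X n i).1 → (X n i).2 v = t →
        v' ∈ (X n' i').1 → (∀ j < i', v' ∉ N j) → (X n' i').2 v' = t → i' ≤ i := by
      intro v v' i i' n n' hB hB' h1 h3 h1' h2' h3'
      by_contra hlt
      rw [not_le] at hlt
      refine h2' i hlt ((hcl i i' n' v' h1' hB').1 ?_)
      rw [h3', ← h3]
      exact (hcl i i n v h1 hB).2 (Set.mem_iUnion.2 ⟨n, h1⟩)
    obtain rfl : i = i' := le_antisymm (hle hB' hB h1' h3' h1 h2 h3) (hle hB hB' h1 h3 h1' h2' h3')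
    have h4 := hstab i n (max n n') (le_max_left _ _) v h1
    have h4' := hstab i n' (max n n') (le_max_right _ _) v' h1'
    exact (hXP (max n n') i).linked.inj ⟨hmono i (le_max_left _ _) h1, hB⟩
      ⟨hmono i (le_max_right _ _) h1', hB'⟩ (by rw [h4, h4', h3, h3'])
  · have hT : ∀ i n k, ∀ v ∈ (X n i).1, (∀ j < i, v ∉ N j) → (X n i).2^[k] v ∈ S.B →
        Term R S.B v := by
      intro i n k
      induction k with
      | zero => exact fun v _ _ h => .base h
      | succ k ih =>
        intro v hv hl h
        by_cases hB : v ∈ S.B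
        · exact .base hB
        have h1 := ih _ ((hXP n i).linked.maps v hv hB)
          (fun j hj h => hl j hj ((hcl j i n v hv hB).1 h)) h
        by_cases he : (X n i).2 v = v
        · rwa [he] at h1
        · exact .step ⟨i, n, hv, hl, hB, rfl, he⟩ h1
    intro a ha hA
    rw [← hWU] at ha
    obtain ⟨i0, hi0⟩ := Set.mem_iUnion.1 ha
    obtain ⟨i, hi, hmin⟩ := exists_least (P := fun i => a ∈ N i)
      ⟨i0, Set.mem_iUnion.2 ⟨0, by rw [hX0]; exact hx0' i0 hi0⟩⟩
    obtain ⟨n, hn⟩ := Set.mem_iUnion.1 hi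
    obtain ⟨k, hk⟩ := (hXP n i).linked.src a hn hA
    exact hT i n k a hn hmin hk

/-- A singular ground set is the union of few smaller sets, to which `linked_pieces` applies. -/
theorem linked_singular (S : Sys V) (hκ : (#S.U).IsSingular) (hS : ¬ S.Hind)
    (IH : ∀ T : Sys V, #T.U < #S.U → ¬ T.Hind → ∃ G, T.LinkedOn T.U G) :
    ∃ G, S.LinkedOn S.U G := by
  set κ := #S.U with hκdef
  have hℵ : ℵ₀ < κ := lt_of_le_of_ne hκ.aleph0_le fun e => not_isSingular_aleph0 (e ▸ hκ)
  obtain ⟨Θ, hcof, hΘ⟩ := Order.exists_cof_eq κ.ord.ToType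
  have hΘκ : #Θ < κ := by
    rw [hΘ, Ordinal.cof_toType]
    exact hκ.cof_ord_lt
  obtain ⟨en⟩ := Cardinal.eq.1 ((mk_ord_toType κ).trans hκdef)
  let W : Θ → Set V := fun i => (fun t => (en t).1) '' Set.Iic i.1
  have hWκ : ∀ i, #(W i) < κ := by
    intro i
    refine mk_image_le.trans_lt ?_
    have h1 : #(Set.Iio i.1) < κ := by
      simpa using Cardinal.mk_Iio_lt i.1 (by simp)
    have : Set.Iic i.1 = insert i.1 (Set.Iio i.1) := by
      ext x; simp [le_iff_eq_or_lt]
    rw [this]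
    exact (mk_insert_le).trans_lt (add_lt_of_lt hℵ.le h1 (one_lt_aleph0.trans hℵ))
  refine linked_pieces S hS (μ := fun i => max ℵ₀ (max #Θ #(W i))) (fun i => le_max_left _ _)
    (fun i => (le_max_left _ _).trans (le_max_right _ _))
    (fun i T hT hT' => IH T (hT.trans_lt (max_lt hℵ (max_lt hΘκ (hWκ i)))) hT') W
    (fun i => (le_max_right _ _).trans (le_max_right _ _)) ?_
  refine subset_antisymm (Set.iUnion_subset fun i => ?_) fun v hv => ?_
  · rintro _ ⟨t, -, rfl⟩
    exact (en t).2
  · obtain ⟨i, hi, hle⟩ := hcof (en.symm ⟨v, hv⟩)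
    exact Set.mem_iUnion.2 ⟨⟨i, hi⟩, en.symm ⟨v, hv⟩, hle, by simp⟩

/-- Every unhindered system is linked. -/
theorem linked (S : Sys V) (hS : ¬ S.Hind) : ∃ G, S.LinkedOn S.U G := by
  suffices h : ∀ κ : Cardinal.{u}, ∀ S : Sys V, #S.U = κ → ¬ S.Hind → ∃ G, S.LinkedOn S.U G from
    h _ S rfl hS
  intro κ
  induction κ using WellFoundedLT.induction with
  | ind κ ih =>
    rintro S rfl hS
    have IH : ∀ T : Sys V, #T.U < #S.U → ¬ T.Hind → ∃ G, T.LinkedOn T.U G :=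
      fun T hT hT' => ih _ hT T rfl hT'
    rcases le_or_gt #S.U ℵ₀ with h | h
    · exact linked_countable S h hS
    · rcases isRegular_or_isSingular h.le with h' | h'
      · exact linked_regular S h' h hS IH
      · exact linked_singular S h' hS IH

end Sys

/-! ### From linkings to path systems -/

/-- The list `p 0, …, p n`. -/
def pathList {V : Type u} (p : ℕ → V) (n : ℕ) : List V := (List.range (n + 1)).map p

section PathList
variable {V : Type u} {p : ℕ → V} {n : ℕ} {v : V}

theorem mem_pathList : v ∈ pathList p n ↔ ∃ i ≤ n, p i = v := by
  simp [pathList]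

theorem head_pathList : (pathList p n).head? = some (p 0) := by
  simp [pathList, List.range_succ_eq_map]

theorem last_pathList : (pathList p n).getLast? = some (p n) := by
  simp [pathList, List.range_succ]

theorem pathList_isFinPath {E : V → V → Prop} (hE : ∀ i < n, E (p i) (p (i + 1)))
    (hp : Set.InjOn p (Set.Iic n)) : IsFinPath E (pathList p n) := by
  refine ⟨by simp [pathList], ?_, ?_⟩
  · refine List.Nodup.map_on (fun x hx y hy h => hp ?_ ?_ h) List.nodup_range
    · simpa [Nat.lt_succ_iff] using hx
    · simpa [Nat.lt_succ_iff] using hy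
  · change List.IsChain E _
    rw [List.isChain_iff_getElem]
    intro i hi
    simp only [pathList, List.length_map, List.length_range] at hi
    simpa [pathList] using hE i (by omega)

end PathList

theorem iterate_cancel {V : Type u} {G : V → V} {D : Set V} (hG : Set.InjOn G D) {a b : V} (i : ℕ) :
    ∀ j, i ≤ j → (∀ k < i, G^[k] a ∈ D) → (∀ k < j, G^[k] b ∈ D) → G^[i] a = G^[j] b →
      a = G^[j - i] b := by
  induction i with
  | zero => exact fun j _ _ _ h => h
  | succ i ih =>
    intro j hij ha hb h
    obtain ⟨j, rfl⟩ : ∃ j', j = j' + 1 := ⟨j - 1, by omega⟩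
    rw [Function.iterate_succ_apply', Function.iterate_succ_apply'] at h
    have := ih j (by omega) (fun k hk => ha k (by omega)) (fun k hk => hb k (by omega))
      (hG (ha i (by omega)) (hb j (by omega)) h)
    rwa [Nat.add_sub_add_right]

/-- A web, seen as a system. -/
def Web.sys {V : Type u} (Γ : Web V) : Sys V := ⟨Γ.Adj, Set.univ, Γ.A, Γ.B⟩

section Main
variable {V : Type u} (Γ : Web V)

/-- The orbits of the sources, up to the first vertex in `B`, form a linkage. -/
theorem Web.linkable_of_linkedOn {Γ : Web V} {G : V → V} (h : Γ.sys.LinkedOn Set.univ G) :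
    Γ.Linkable := by
  have hn : ∀ a ∈ Γ.A, ∃ n, G^[n] a ∈ Γ.B ∧ ∀ m < n, G^[m] a ∉ Γ.B := fun a ha =>
    exists_least (h.src a trivial ha)
  choose! n hn1 hn2 using hn
  have hD : ∀ a ∈ Γ.A, ∀ k < n a, G^[k] a ∈ (Set.univ \ Γ.B : Set V) := fun a ha k hk =>
    ⟨trivial, hn2 a ha k hk⟩
  have hne : ∀ a ∈ Γ.A, ∀ k < n a, G^[k + 1] a ≠ G^[k] a := by
    intro a ha k hk e
    -- a fixed vertex of the orbit would be the last vertex of the path as well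
    have : ∀ d, G^[k + d] a = G^[k] a := by
      intro d
      induction d with
      | zero => rfl
      | succ d ih => rw [← add_assoc, Function.iterate_succ_apply', ih,
          ← Function.iterate_succ_apply' G k a, e]
    have h1 := hn1 a ha
    rw [← Nat.add_sub_of_le hk.le, this] at h1
    exact hn2 a ha k hk h1
  have hA : ∀ a ∈ Γ.A, ∀ k < n a, G^[k + 1] a ∉ Γ.A := by
    intro a ha k hk
    have h1 := hne a ha k hk
    rw [Function.iterate_succ_apply'] at h1 ⊢
    exact (h.edge _ trivial (hn2 a ha k hk) h1).2
  have hmeet : ∀ a ∈ Γ.A, ∀ b ∈ Γ.A, ∀ i ≤ n a, ∀ j ≤ n b, i ≤ j → G^[i] a = G^[j] b →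
      a = b ∧ i = j := by
    intro a ha b hb i hi j hj hij e
    have h1 := iterate_cancel h.inj i j hij (fun k hk => hD a ha k (by omega))
      (fun k hk => hD b hb k (by omega)) e
    rcases hd : j - i with _ | d
    · rw [hd] at h1
      exact ⟨h1, by omega⟩
    · rw [hd] at h1
      exact absurd (h1 ▸ ha) (hA b hb d (by omega))
  have hmeet' : ∀ a ∈ Γ.A, ∀ b ∈ Γ.A, ∀ i ≤ n a, ∀ j ≤ n b, G^[i] a = G^[j] b →
      a = b ∧ i = j := by
    intro a ha b hb i hi j hj e
    rcases le_total i j with hij | hij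
    · exact hmeet a ha b hb i hi j hj hij e
    · obtain ⟨h1, h2⟩ := hmeet b hb a ha j hj i hi hij e.symm
      exact ⟨h1.symm, h2.symm⟩
  let P : V → List V := fun a => pathList (fun i => G^[i] a) (n a)
  have hhead : ∀ a, (P a).head? = some a := fun a => head_pathList
  refine ⟨P '' Γ.A, ⟨?_, ?_, ?_⟩, ?_⟩
  · rintro _ ⟨a, ha, rfl⟩
    refine ⟨pathList_isFinPath (fun i hi => ?_) fun i hi j hj e => ?_, ⟨a, ha, hhead a⟩,
      ⟨_, hn1 a ha, last_pathList⟩⟩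
    · have h1 := hne a ha i hi
      rw [Function.iterate_succ_apply'] at h1 ⊢
      exact (h.edge _ trivial (hn2 a ha i hi) h1).1
    · exact (hmeet' a ha a ha i hi j hj e).2
  · rintro _ ⟨a, ha, rfl⟩ v hv hAB
    obtain ⟨i, hi, rfl⟩ := mem_pathList.1 hv
    rcases hAB with hA' | hB
    · rcases i with _ | i
      · exact Or.inl (hhead a)
      · exact absurd hA' (hA a ha i hi)
    · rcases hi.eq_or_lt with rfl | hlt
      · exact Or.inr last_pathList
      · exact absurd hB (hn2 a ha i hlt)
  · rintro _ ⟨a, ha, rfl⟩ _ ⟨b, hb, rfl⟩ hne v hv hv'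
    obtain ⟨i, hi, rfl⟩ := mem_pathList.1 hv
    obtain ⟨j, hj, e⟩ := mem_pathList.1 hv'
    exact hne (congrArg P (hmeet' a ha b hb i hi j hj e.symm).1)
  · ext v
    constructor
    · rintro ⟨_, ⟨a, ha, rfl⟩, e⟩
      rw [hhead a] at e
      exact Option.some.inj e ▸ ha
    · exact fun hv => ⟨_, ⟨v, hv, rfl⟩, hhead v⟩

/-- The separator: the sources outside the largest waveform together with its outer boundary. -/
def Web.sep : Set V := {v | v ∉ Γ.sys.maxX ∧ (v ∈ Γ.A ∨ v ∈ Γ.sys.nb Γ.sys.maxX)}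

/-- An edge leaving the largest waveform set ends in the separator. -/
theorem Web.step_sep {v w : V} (hv : v ∈ Γ.sys.maxX) (e : Γ.Adj v w) :
    w ∈ Γ.sys.maxX ∨ w ∈ Γ.sep := by
  by_cases hw : w ∈ Γ.sys.maxX
  · exact Or.inl hw
  · exact Or.inr ⟨hw, Or.inr ⟨trivial, Γ.not_into_A v w e, Or.inr ⟨v, hv, e⟩⟩⟩

/-- A path from `A` avoiding the separator stays in the largest waveform set, which avoids `B`. -/
theorem Web.sep_separates : Separates Γ.Adj Γ.A Γ.B Γ.sep := by
  rintro p ⟨⟨-, -, hc⟩, ⟨a, ha, hh⟩, ⟨b, hb, hl⟩⟩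
  by_contra hcon
  push Not at hcon
  have key : ∀ l : List V, l.IsChain Γ.Adj → (∀ v ∈ l, v ∉ Γ.sep) →
      (∀ v, l.head? = some v → v ∈ Γ.sys.maxX) → ∀ v ∈ l, v ∈ Γ.sys.maxX := by
    intro l
    induction l with
    | nil => simp
    | cons x l ih =>
      intro h1 h2 h3 v hv
      have hx := h3 x rfl
      rcases List.mem_cons.1 hv with rfl | hv
      · exact hx
      refine ih h1.tail (fun v hv => h2 v (List.mem_cons_of_mem _ hv)) (fun w hw => ?_) v hv
      rcases l with _ | ⟨y, l⟩
      · simp at hv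
      · obtain rfl : y = w := by simpa using hw
        exact (Γ.step_sep hx (List.isChain_cons_cons.1 h1).1).resolve_right (h2 y (by simp))
  have := key p hc (fun v hv hs => hcon v hs hv) (fun v hv => by
    obtain rfl : a = v := Option.some.inj (hh.symm.trans hv)
    by_contra hX
    exact hcon a ⟨hX, Or.inl ha⟩ (List.mem_of_mem_head? hh)) b (List.mem_of_getLast? hl)
  exact (Γ.sys.maxF_wf).notB b this hb

/-- The backward orbits of the largest waveform link the separator into `A`. -/
theorem Web.sep_linked : ∃ 𝒲 : Set (List V), IsASWarp Γ Γ.sep 𝒲 ∧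
    ∀ s ∈ Γ.sep, ∃! p : List V, p ∈ 𝒲 ∧ p.getLast? = some s := by
  set X := Γ.sys.maxX with hX
  set f := Γ.sys.maxF with hf
  have hwf : Γ.sys.Wf X f := Γ.sys.maxF_wf
  have hnb : ∀ s ∈ Γ.sep, ∀ i, (∀ k ≤ i, f^[k] s ∉ Γ.A) → f^[i] s ∈ Γ.sys.nb X := by
    intro s hs i
    induction i with
    | zero => exact fun h => hs.2.resolve_left (h 0 le_rfl)
    | succ i ih =>
      intro h
      have h1 := ih fun k hk => h k (by omega)
      have h2 := h (i + 1) le_rfl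
      rw [Function.iterate_succ_apply'] at h2 ⊢
      exact hwf.step_nb h1 h2
  have hmem : ∀ s ∈ Γ.sep, ∀ i, (∀ k ≤ i, f^[k] s ∉ Γ.A) → f^[i + 1] s ∈ X := by
    intro s hs i h
    rw [Function.iterate_succ_apply']
    exact hwf.maps _ (hnb s hs i h)
  have hmeet : ∀ s ∈ Γ.sep, ∀ t ∈ Γ.sep, ∀ i j, (∀ k < i, f^[k] s ∉ Γ.A) →
      (∀ k < j, f^[k] t ∉ Γ.A) → i ≤ j → f^[i] s = f^[j] t → s = t ∧ i = j := by
    intro s hs t ht i j hi hj hij e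
    have h1 := iterate_cancel hwf.inj i j hij (fun k hk => hnb s hs k fun l hl => hi l (by omega))
      (fun k hk => hnb t ht k fun l hl => hj l (by omega)) e
    rcases hd : j - i with _ | d
    · rw [hd] at h1
      exact ⟨h1, by omega⟩
    · rw [hd] at h1
      exact absurd (h1 ▸ hmem t ht d fun k hk => hj k (by omega)) hs.1
  have hmeet' : ∀ s ∈ Γ.sep, ∀ t ∈ Γ.sep, ∀ i j, (∀ k < i, f^[k] s ∉ Γ.A) →
      (∀ k < j, f^[k] t ∉ Γ.A) → f^[i] s = f^[j] t → s = t ∧ i = j := by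
    intro s hs t ht i j hi hj e
    rcases le_total i j with hij | hij
    · exact hmeet s hs t ht i j hi hj hij e
    · obtain ⟨h1, h2⟩ := hmeet t ht s hs j i hj hi hij e.symm
      exact ⟨h1.symm, h2.symm⟩
  have hn : ∀ s ∈ Γ.sep, ∃ n, f^[n] s ∈ Γ.A ∧ ∀ m < n, f^[m] s ∉ Γ.A := by
    intro s hs
    refine exists_least ?_
    by_contra hcon
    push Not at hcon
    exact hwf.fin s (hs.2.resolve_left (hcon 0)) ⟨hcon, fun i j e =>
      (hmeet' s hs s hs i j (fun k _ => hcon k) (fun k _ => hcon k) e).2⟩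
  choose! n hn1 hn2 using hn
  let P : V → List V := fun s => pathList (fun i => f^[n s - i] s) (n s)
  have hlast : ∀ s, (P s).getLast? = some s := fun s => by
    simp only [P, last_pathList, Nat.sub_self, Function.iterate_zero, id]
  have hmemP : ∀ {s v}, v ∈ P s → ∃ i ≤ n s, f^[i] s = v := by
    intro s v hv
    obtain ⟨i, hi, rfl⟩ := mem_pathList.1 hv
    exact ⟨n s - i, Nat.sub_le _ _, rfl⟩
  refine ⟨P '' Γ.sep, ⟨?_, ?_, ?_⟩, ?_⟩
  · rintro _ ⟨s, hs, rfl⟩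
    refine ⟨pathList_isFinPath (fun i hi => ?_) fun i hi j hj e => ?_, ⟨_, hn1 s hs, head_pathList⟩,
      ⟨s, hs, hlast s⟩⟩
    · obtain ⟨k, hk⟩ : ∃ k, n s - (i + 1) = k := ⟨_, rfl⟩
      rw [show n s - i = k + 1 by omega, hk]
      have h1 : ∀ l ≤ k, f^[l] s ∉ Γ.A := fun l hl => hn2 s hs l (by omega)
      rw [Function.iterate_succ_apply']
      refine (hwf.edge _ (hnb s hs k h1)).resolve_left fun e => ?_
      rw [← Function.iterate_succ_apply' f k s] at e
      have := (hmeet' s hs s hs (k + 1) k (fun l hl => h1 l (by omega))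
        (fun l hl => h1 l (by omega)) e).2
      omega
    · have hi : i ≤ n s := hi
      have hj : j ≤ n s := hj
      have := (hmeet' s hs s hs _ _ (fun l hl => hn2 s hs l (by omega))
        (fun l hl => hn2 s hs l (by omega)) e).2
      omega
  · rintro _ ⟨s, hs, rfl⟩ v hv hAS
    obtain ⟨i, hi, rfl⟩ := hmemP hv
    rcases hi.eq_or_lt with rfl | hlt
    · exact Or.inl head_pathList
    rcases i with _ | i
    · exact Or.inr (hlast s)
    · rcases hAS with hA | hS
      · exact absurd hA (hn2 s hs _ hlt)
      · exact absurd (hmem s hs i fun k hk => hn2 s hs k (by omega)) hS.1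
  · rintro _ ⟨s, hs, rfl⟩ _ ⟨t, ht, rfl⟩ hne v hv hv'
    obtain ⟨i, hi, rfl⟩ := hmemP hv
    obtain ⟨j, hj, e⟩ := hmemP hv'
    exact hne (congrArg P (hmeet' s hs t ht i j (fun k hk => hn2 s hs k (by omega))
      (fun k hk => hn2 t ht k (by omega)) e.symm).1)
  · intro s hs
    refine ⟨P s, ⟨⟨s, hs, rfl⟩, hlast s⟩, ?_⟩
    rintro _ ⟨⟨t, ht, rfl⟩, e⟩
    rw [hlast t] at e
    exact congrArg P (Option.some.inj e)

theorem nodup_pred_unique {l₁ l₂ l₁' l₂' : List V} {v v' t : V}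
    (h : l₁ ++ v :: t :: l₂ = l₁' ++ v' :: t :: l₂') (hn : (l₁ ++ v :: t :: l₂).Nodup) : v = v' := by
  induction l₁ generalizing l₁' with
  | nil =>
    rcases l₁' with _ | ⟨x, l₁'⟩
    · simp at h
      exact h.1
    · obtain ⟨rfl, h⟩ : v = x ∧ t :: l₂ = l₁' ++ v' :: t :: l₂' := by simpa using h
      rcases l₁' with _ | ⟨y, l₁'⟩
      · obtain ⟨rfl, h⟩ : t = v' ∧ l₂ = t :: l₂' := by simpa using h
        simp [h] at hn
      · obtain ⟨rfl, h⟩ : t = y ∧ l₂ = l₁' ++ v' :: t :: l₂' := by simpa using h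
        simp [h] at hn
  | cons x l₁ ih =>
    rcases l₁' with _ | ⟨y, l₁'⟩
    · simp only [List.cons_append, List.nil_append, List.cons.injEq] at h
      rcases l₁ with _ | ⟨y, l₁⟩
      · simp only [List.nil_append, List.cons.injEq] at h
        simp [h.2.1] at hn
      · simp only [List.cons_append, List.cons.injEq] at h
        simp [h.2.1] at hn
    · simp only [List.cons_append, List.cons.injEq] at h
      exact ih h.2 (by
        simp only [List.cons_append, List.nodup_cons] at hn
        exact hn.2)

/-- A linkage of `A` into the separator extends, by a linking of the quotient, to a linkage of the
whole web. -/
theorem Web.linkable_of_sep {𝒲 : Set (List V)} (hW : IsASWarp Γ Γ.sep 𝒲)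
    (hA : ∀ a ∈ Γ.A, ∃ p ∈ 𝒲, p.head? = some a) : Γ.Linkable := by
  obtain ⟨hW1, -, hW3⟩ := hW
  set X := Γ.sys.maxX with hX
  obtain ⟨G, hG⟩ := (Γ.sys.quo X).linked Γ.sys.quo_unh
  have hU : ∀ v, v ∈ (Γ.sys.quo X).U ↔ v ∉ X := fun v => by simp [Sys.quo, Web.sys]
  let R : V → V → Prop := fun v t =>
    (v ∈ X ∧ ∃ p ∈ 𝒲, ∃ l₁ l₂, p = l₁ ++ v :: t :: l₂) ∨ (v ∉ X ∧ v ∉ Γ.B ∧ G v = t ∧ t ≠ v)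
  have hadj : ∀ {p l₁ l₂ v t}, p ∈ 𝒲 → p = l₁ ++ v :: t :: l₂ → Γ.Adj v t := by
    intro p l₁ l₂ v t hp e
    have h1 : p.IsChain Γ.Adj := (hW1 p hp).1.2.2
    rw [e] at h1
    exact (List.isChain_append_cons_cons.1 h1).2.1
  have hGT : ∀ k, ∀ v ∉ X, G^[k] v ∈ Γ.B → Term R Γ.B v := by
    intro k
    induction k with
    | zero => exact fun v _ h => .base h
    | succ k ih =>
      intro v hv h
      by_cases hB : v ∈ Γ.B
      · exact .base hB
      have h1 := ih _ ((hU _).1 (hG.maps v ((hU v).2 hv) hB)) h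
      by_cases he : G v = v
      · rwa [he] at h1
      · exact .step (Or.inr ⟨hv, hB, rfl, he⟩) h1
  have hST : ∀ s ∈ Γ.sep, Term R Γ.B s := by
    intro s hs
    obtain ⟨k, hk⟩ := hG.src s ((hU s).2 hs.1) hs.2
    exact hGT k s hs.1 hk
  have hWT : ∀ p ∈ 𝒲, ∀ l l₀ : List V, p = l₀ ++ l → ∀ v, l.head? = some v →
      v ∈ X ∨ v ∈ Γ.sep → Term R Γ.B v := by
    intro p hp l
    induction l with
    | nil => simp
    | cons x l ih =>
      intro l₀ e v hv h
      obtain rfl : x = v := by simpa using hv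
      rcases h with h | h
      · rcases l with _ | ⟨y, l⟩
        · obtain ⟨s, hs, hl⟩ := (hW1 p hp).2.2
          obtain rfl : x = s := by simpa [e] using hl
          exact hST x hs
        · refine .step (Or.inl ⟨h, p, hp, l₀, l, e⟩) (ih (l₀ ++ [x]) (by simpa using e) y rfl ?_)
          exact Γ.step_sep h (hadj hp e)
      · exact hST x h
  have : ∃ G', Γ.sys.LinkedOn Set.univ G' := by
    refine Sys.LinkedOn.of_rel R ?_ ?_ ?_
    · rintro v - t - (⟨hv, p, hp, l₁, l₂, e⟩ | ⟨hv, hB, rfl, hne⟩)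
      · exact ⟨trivial, hadj hp e, Γ.not_into_A _ _ (hadj hp e)⟩
      · have h1 := (hG.edge v ((hU v).2 hv) hB hne).1
        exact ⟨trivial, h1, Γ.not_into_A _ _ h1⟩
    · have hmix : ∀ {v v' t p l₁ l₂}, v ∈ X → p ∈ 𝒲 → p = l₁ ++ v :: t :: l₂ → v' ∉ X → v' ∉ Γ.B →
          G v' = t → t ≠ v' → False := by
        intro v v' t p l₁ l₂ hv hp e hv' hB h1 h2
        subst h1
        refine (hG.edge v' ((hU v').2 hv') hB h2).2 (Or.inr ?_)
        exact ⟨trivial, Γ.not_into_A _ _ (hadj hp e), Or.inr ⟨v, hv, hadj hp e⟩⟩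
      rintro v - v' - t - - (⟨hv, p, hp, l₁, l₂, e⟩ | ⟨hv, hB, h1, h2⟩)
        (⟨hv', p', hp', l₁', l₂', e'⟩ | ⟨hv', hB', h1', h2'⟩)
      · obtain rfl : p = p' := by
          by_contra hne
          exact hW3 p hp p' hp' hne t (by simp [e]) (by simp [e'])
        exact nodup_pred_unique (e.symm.trans e') (e ▸ (hW1 p hp).1.2.1)
      · exact (hmix hv hp e hv' hB' h1' h2').elim
      · exact (hmix hv' hp' e' hv hB h1 h2).elim
      · exact hG.inj ⟨(hU v).2 hv, hB⟩ ⟨(hU v').2 hv', hB'⟩ (h1.trans h1'.symm)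
    · rintro a - ha
      obtain ⟨p, hp, hh⟩ := hA a ha
      refine hWT p hp p [] rfl a hh ?_
      by_cases haX : a ∈ X
      · exact Or.inl haX
      · exact Or.inr ⟨haX, Or.inl ha⟩
  exact this.elim fun G' h => Web.linkable_of_linkedOn h

end Main

/-- If a web is not linkable, then there is an `A`–`B`-separating set `S`
which is linkable into `A` in the reversed web (every vertex of `S` is the
terminal vertex of exactly one path of a disjoint family of `A`–`S` paths),
while `A` is not linkable into `S`. -/
theorem unlinkable_separator (V : Type*) (Γ : Web V) (h : ¬ Γ.Linkable) :
    ∃ S : Set V, Separates Γ.Adj Γ.A Γ.B S ∧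
      (∃ 𝒲 : Set (List V), IsASWarp Γ S 𝒲 ∧
        ∀ s ∈ S, ∃! p : List V, p ∈ 𝒲 ∧ p.getLast? = some s) ∧
      ¬ ∃ 𝒲 : Set (List V), IsASWarp Γ S 𝒲 ∧
        ∀ a ∈ Γ.A, ∃ p ∈ 𝒲, p.head? = some a := by
  exact ⟨Γ.sep, Γ.sep_separates, Γ.sep_linked, fun ⟨_, hW, hA⟩ => h (Γ.linkable_of_sep hW hA)⟩

end ErdosMenger
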